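/- Let μ ∈ −Λ⁺, i.e. α_i(μ) ≤ 0 for all i ∈ I₀. Then there exists an injective algebra homomorphism I_μ^σ : U_q(b^σ) ↪ U_q^μ(A₂⁽²⁾); equivalently, the shifted twisted quantum affine algebra U_q^μ(A₂⁽²⁾) contains a subalgebra isomorphic to the twisted quantum affine Borel algebra U_q(b^σ). -/

import Mathlib

/-!
Write `n = -α₁(μ) ≥ 0`, let `U` be the shifted algebra, `B` the Borel algebra and `A` its positive
part, presented by `e₀, e₁` and the Serre relations. Put `y_r = x⁻_r`, and let `K`, `L` be the
invertible leading coefficients of `φ⁺`, `φ⁻`. The embedding is `fB : B → U` with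

  `e₁ ↦ x⁺₀`,  `e₀ ↦ (y₀ y₁ - q y₁ y₀) K⁻²`,  `k₁ ↦ K`,  `k₀ ↦ K⁻¹ L`.

That the Serre relations hold uses `n ≥ 0` (`serreE`). Since `B` is spanned by the products `u k_β`
with `u ∈ A` and `k_β` in the torus (`B_span`), injectivity is proved with enough modules over `U`.

**Modules.** For generic spectral parameters `b₁, …, b_a`, non-zero `zs` and a scalar `t ≠ 0` with
`a - #zs = n`, the algebra `U` acts by difference operators on functions on `ℤ^a` (`gklo_rep`): the
`x^±_r` are weighted sums of unit shifts and the Cartan currents are diagonal, given by the two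
expansions of a rational function with zeros at the `zs`. Call `n` the level. Let `Ann n` be the
set of elements of `A` acting by zero on all modules of level `n`.

**Descent of the level.** Letting one further spectral parameter tend to zero degenerates a module
of level `n + 1` into one having a module of level `n` as a piece, so `Ann (n + 1) ⊆ Ann n` for
`n ≥ 0` (`Ann_step`).

**Level zero.** In the unshifted algebra the commutators of `u ∈ A` with the lowering operators of
the two nodes are combinations of the images of the skew derivations `r^±_i(u)`, multiplied by
powers of `K` and `L` (`comm_Y1`, `comm_Y0`). Letting one of the `zs` tend to zero kills the `L`-term
and leads to level `1`; descent back to level `0` shows that `Ann 0` is stable under `r^+_i`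
(`Ann_der`). An element killed by all `r^+_i` is a scalar (`GK`): a homogeneous element of positive
degree with this property is primitive for the coaction `A → B ⊗ A`, its weight pairs
non-positively with the simple roots by an `sl₂`-argument (`pair_nonpos`), and the square of the
antipode then acts on it by two different powers of `q`. By induction on the degree `Ann 0 = 0`, hence
`Ann n = 0` for all `n ≥ 0` (`Ann_zero`).

**The torus.** On a module the torus element `k_β` acts through `χ^{β₀} t^{β₁}` times a power of
`q`, where `χ` tends to zero with any of the `zs`. For `t = χ^c` with suitable `c`, one of the
finitely many exponents occurring in a given element of the kernel is strictly smallest. In the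
limit only its coefficient survives, which therefore lies in `Ann (n + 1)` and is zero
(`fB_injective`).
-/

noncomputable section

open scoped TensorProduct

/-- The combinatorial and numerical data underlying a twisted quantum affine algebra:
a simply-laced Dynkin diagram with an automorphism `σ` of order `M ∈ {2,3}`, a set `I0`
of representatives of the `σ`-orbits, the Cartan entries `C_{i,σ^s(j)}`, the Cartan matrix
of the finite type Lie algebra `𝔤^σ`, and the quantum parameters. -/
structure TQAData where
  /-- representatives of the `σ`-orbits of Dynkin nodes -/
  I0 : Type
  finI0 : Fintype I0
  deqI0 : DecidableEq I0
  /-- order of the diagram automorphism `σ` -/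
  M : ℕ
  hM : M = 2 ∨ M = 3
  /-- whether a node is fixed by `σ` -/
  fixed : I0 → Bool
  /-- `Cs i j s` is the Cartan entry `C_{i,σ^{s+1}(j)}` of `𝔤`, for `0 ≤ s < M` -/
  Cs : I0 → I0 → ℕ → ℤ
  /-- Cartan matrix `C^σ` of the finite type Lie algebra `𝔤^σ` -/
  Cfin : I0 → I0 → ℤ
  /-- the quantum parameter, not a root of unity -/
  q : ℂ
  hq0 : q ≠ 0
  hqroot : ∀ n : ℕ, 0 < n → q ^ n ≠ 1
  /-- a chosen square root of `q` -/
  sq : ℂ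
  hsq : sq ^ 2 = q
  /-- the numbers `q_i = q^{d_i}` -/
  qi : I0 → ℂ
  hqi0 : ∀ i, qi i ≠ 0
  hqi1 : ∀ i, qi i * qi i ≠ 1

attribute [instance] TQAData.finI0 TQAData.deqI0

namespace TQAData

variable (D : TQAData)

lemma Mpos : 0 < D.M := by rcases D.hM with h | h <;> omega

/-- `ζ = exp(2πi/M)`. -/
def ζ : ℂ := Complex.exp (2 * Real.pi * Complex.I / (D.M : ℂ))

/-- `N_i = M` if `σ(i) = i`, and `1` otherwise. -/
def N (i : D.I0) : ℕ := if D.fixed i then D.M else 1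

/-- the Cartan entry `C_{i,j}` of `𝔤` (note `σ^M = id`). -/
def Cij (i j : D.I0) : ℤ := D.Cs i j (D.M - 1)

/-- the Cartan entry `C_{i,σ(i)}` of `𝔤`. -/
def Ciσ (i : D.I0) : ℤ := D.Cs i i 0

/-- `q_i - q_i⁻¹`. -/
def qd (i : D.I0) : ℂ := D.qi i - (D.qi i)⁻¹

/-- The coefficient `(1/m) ∑_{s=1}^{M} [m C_{i,σ^s(j)} / d_i]_{q_i} ζ^{ms}` appearing
in the relation `[h_{i,m}, x^±_{j,r}] = ± (…) x^±_{j,m+r}`, where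
`[m C/d_i]_{q_i} = (q^{mC} - q^{-mC})/(q_i - q_i⁻¹)`. -/
def hxCoef (i j : D.I0) (m : ℤ) : ℂ :=
  (m : ℂ)⁻¹ * ∑ s ∈ Finset.range D.M,
    ((D.q ^ (m * D.Cs i j s) - D.q ^ (-(m * D.Cs i j s))) / D.qd i) *
      D.ζ ^ (m * ((s : ℤ) + 1))

/-- The coefficient `q^{2Md_{i,j}} + q^{-2Md_{i,j}}` in the Serre relations. -/
def serreC (i j : D.I0) : ℂ :=
  (if D.Ciσ i = 2 then D.q ^ D.M
    else if D.Ciσ i = 0 ∧ D.fixed j then D.q ^ D.M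
    else if D.Ciσ i = 0 then D.q
    else D.sq) +
  (if D.Ciσ i = 2 then D.q ^ D.M
    else if D.Ciσ i = 0 ∧ D.fixed j then D.q ^ D.M
    else if D.Ciσ i = 0 then D.q
    else D.sq)⁻¹

/-- `u₁`-exponents of the polynomials `P^±_{i,j}(u₁,u₂)` in the Serre relations. -/
def pa (i j : D.I0) (t : ℕ) : ℕ :=
  if D.Ciσ i = 0 ∧ D.fixed j then D.M - 1 - t
  else if D.Ciσ i = -1 then (if t = 0 then 1 else 0) else 0

/-- `u₂`-exponents of the polynomials `P^±_{i,j}(u₁,u₂)` in the Serre relations. -/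
def pb (i j : D.I0) (t : ℕ) : ℕ :=
  if D.Ciσ i = 0 ∧ D.fixed j then t
  else if D.Ciσ i = -1 then (if t = 0 then 0 else 1) else 0

/-- coefficients of the polynomials `P^±_{i,j}(u₁,u₂)` in the Serre relations
(`e = ±1` is the sign). -/
def pcoef (e : ℤ) (i j : D.I0) (t : ℕ) : ℂ :=
  if D.Ciσ i = 0 ∧ D.fixed j then
    (if t ≤ D.M - 1 then D.q ^ (e * 2 * ((D.M - 1 - t : ℕ) : ℤ)) else 0)
  else if D.Ciσ i = -1 then (if t = 0 then D.q ^ e else if t = 1 then 1 else 0)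
  else (if t = 0 then 1 else 0)

end TQAData

/-- Drinfeld generators: `x^+_{i,r}`, `x^-_{i,r}`, `φ^+_{i,r}`, `φ^-_{i,r}`,
the inverses of the leading coefficients of the Cartan currents, and `h_{i,m}`. -/
inductive TQAGen (D : TQAData) : Type
  | xp (i : D.I0) (r : ℤ)
  | xm (i : D.I0) (r : ℤ)
  | pp (i : D.I0) (r : ℤ)
  | pm (i : D.I0) (r : ℤ)
  | ppInv (i : D.I0)
  | pmInv (i : D.I0)
  | hh (i : D.I0) (m : ℤ)

namespace TQA

/-- the free algebra on the Drinfeld generators -/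
abbrev FA (D : TQAData) := FreeAlgebra ℂ (TQAGen D)

variable (D : TQAData)

def gXp (i : D.I0) (r : ℤ) : FA D := FreeAlgebra.ι ℂ (TQAGen.xp i r)
def gXm (i : D.I0) (r : ℤ) : FA D := FreeAlgebra.ι ℂ (TQAGen.xm i r)
def gPp (i : D.I0) (r : ℤ) : FA D := FreeAlgebra.ι ℂ (TQAGen.pp i r)
def gPm (i : D.I0) (r : ℤ) : FA D := FreeAlgebra.ι ℂ (TQAGen.pm i r)
def gPpInv (i : D.I0) : FA D := FreeAlgebra.ι ℂ (TQAGen.ppInv i)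
def gPmInv (i : D.I0) : FA D := FreeAlgebra.ι ℂ (TQAGen.pmInv i)
def gH (i : D.I0) (m : ℤ) : FA D := FreeAlgebra.ι ℂ (TQAGen.hh i m)

/-- the current `x^ε` for a sign `ε` (`true` = `+`). -/
def gX : Bool → D.I0 → ℤ → FA D
  | true => gXp D
  | false => gXm D

/-- sign attached to a Boolean -/
def sg (ε : Bool) : ℤ := if ε then 1 else -1

/-- Cartan generators -/
def IsCartanGen : TQAGen D → Prop
  | TQAGen.pp _ _ => True
  | TQAGen.pm _ _ => True
  | TQAGen.ppInv _ => True
  | TQAGen.pmInv _ => True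
  | TQAGen.hh _ _ => True
  | _ => False

/-- The inner term of the Serre relation
`x_j x_i x_i - (q^{2Md_{ij}}+q^{-2Md_{ij}}) x_i x_j x_i + x_i x_i x_j` in modes. -/
def serreS (ε : Bool) (i j : D.I0) (k n1 n2 : ℤ) : FA D :=
  gX D ε j k * gX D ε i n1 * gX D ε i n2
    - D.serreC i j • (gX D ε i n1 * gX D ε j k * gX D ε i n2)
    + gX D ε i n1 * gX D ε i n2 * gX D ε j k

variable (μp μm : D.I0 → ℤ)

/-- The defining relations of the shifted twisted quantum affine algebra
`𝒰_q^{μ₊,μ₋}(ĝ^σ)`, written in terms of the modes of the Drinfeld currents.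
The Cartan currents are
`φ_i^±(z) = z^{∓α_i(μ_±)} φ^±_{i,∓α_i(μ_±)} exp(±(q_i−q_i⁻¹) ∑_{m≥1} h_{i,±m} z^{±m})`,
with invertible leading coefficients; this is encoded by the support relations,
the invertibility relations, and the exponential recursions `pp_exp`/`pm_exp`. -/
inductive Rel : FA D → FA D → Prop
  | x_supp (ε : Bool) (i : D.I0) (r : ℤ) (hr : ¬ ((D.N i : ℤ) ∣ r)) :
      Rel (gX D ε i r) 0
  | h_supp (i : D.I0) (m : ℤ) (hm : ¬ ((D.N i : ℤ) ∣ m) ∨ m = 0) :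
      Rel (gH D i m) 0
  | pp_supp (i : D.I0) (r : ℤ) (hr : r < -μp i) : Rel (gPp D i r) 0
  | pm_supp (i : D.I0) (r : ℤ) (hr : μm i < r) : Rel (gPm D i r) 0
  | cartan_comm (a b : TQAGen D) (ha : IsCartanGen D a) (hb : IsCartanGen D b) :
      Rel (FreeAlgebra.ι ℂ a * FreeAlgebra.ι ℂ b) (FreeAlgebra.ι ℂ b * FreeAlgebra.ι ℂ a)
  | pp_inv_l (i : D.I0) : Rel (gPpInv D i * gPp D i (-μp i)) 1
  | pp_inv_r (i : D.I0) : Rel (gPp D i (-μp i) * gPpInv D i) 1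
  | pm_inv_l (i : D.I0) : Rel (gPmInv D i * gPm D i (μm i)) 1
  | pm_inv_r (i : D.I0) : Rel (gPm D i (μm i) * gPmInv D i) 1
  | pp_exp (i : D.I0) (m : ℕ) :
      Rel (((m : ℂ) + 1) • gPp D i (-μp i + (m + 1)))
        (D.qd i •
          ∑ k ∈ Finset.range (m + 1),
            ((k : ℂ) + 1) •
              (gH D i ((k : ℤ) + 1) * gPp D i (-μp i + (m + 1) - ((k : ℤ) + 1))))
  | pm_exp (i : D.I0) (m : ℕ) :
      Rel ((-((m : ℂ) + 1)) • gPm D i (μm i - (m + 1)))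
        (D.qd i •
          ∑ k ∈ Finset.range (m + 1),
            ((k : ℂ) + 1) •
              (gH D i (-((k : ℤ) + 1)) * gPm D i (μm i - (m + 1) + ((k : ℤ) + 1))))
  | lead_conj_p (ε : Bool) (i j : D.I0) (r : ℤ) :
      Rel (gPp D i (-μp i) * gX D ε j r)
        ((D.q ^ (sg ε * ∑ s ∈ Finset.range D.M, D.Cs i j s)) •
          (gX D ε j r * gPp D i (-μp i)))
  | lead_conj_m (ε : Bool) (i j : D.I0) (r : ℤ) :
      Rel (gPm D i (μm i) * gX D ε j r)
        ((D.q ^ (-(sg ε) * ∑ s ∈ Finset.range D.M, D.Cs i j s)) •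
          (gX D ε j r * gPm D i (μm i)))
  | h_x (ε : Bool) (i j : D.I0) (m r : ℤ) (hm : m ≠ 0) :
      Rel (gH D i m * gX D ε j r - gX D ε j r * gH D i m)
        ((((sg ε : ℤ) : ℂ) * D.hxCoef i j m) • gX D ε j (m + r))
  | xp_xm (i j : D.I0) (r r' : ℤ) :
      Rel (gXp D i r * gXm D j r' - gXm D j r' * gXp D i r)
        (if i = j ∧ ((D.N i : ℤ) ∣ r') then
            (D.qd i)⁻¹ • (gPp D i (r + r') - gPm D i (r + r'))
          else 0)
  | xx (ε : Bool) (i j : D.I0) (r r' : ℤ) :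
      Rel (∑ K : Finset (Fin D.M),
            ((-1 : ℂ) ^ K.card *
                ∏ s ∈ K, (D.ζ ^ ((s : ℕ) + 1) * D.q ^ (sg ε * D.Cs i j (s : ℕ)))) •
              (gX D ε i (r + (D.M : ℤ) - (K.card : ℤ)) * gX D ε j (r' + (K.card : ℤ))))
          (∑ K : Finset (Fin D.M),
            ((-1 : ℂ) ^ K.card * (∏ s ∈ K, D.ζ ^ ((s : ℕ) + 1)) *
                ∏ s ∈ Kᶜ, D.q ^ (sg ε * D.Cs i j (s : ℕ))) •
              (gX D ε j (r' + (K.card : ℤ)) * gX D ε i (r + (D.M : ℤ) - (K.card : ℤ))))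
  | serre1 (ε : Bool) (i j : D.I0) (hij : D.Cij i j = -1) (hne : i ≠ j) (k m1 m2 : ℤ) :
      Rel (∑ t ∈ Finset.range D.M,
            D.pcoef (sg ε) i j t •
              (serreS D ε i j k (m1 + (D.pa i j t : ℤ)) (m2 + (D.pb i j t : ℤ)) +
               serreS D ε i j k (m2 + (D.pa i j t : ℤ)) (m1 + (D.pb i j t : ℤ))))
          0
  | serre2 (ε : Bool) (i : D.I0) (hii : D.Ciσ i = -1) (m : Fin 3 → ℤ) :
      Rel (∑ π : Equiv.Perm (Fin 3),
            ((D.sq ^ (3 : ℕ)) •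
                (gX D ε i (m (π 0) - sg ε) * gX D ε i (m (π 1)) * gX D ε i (m (π 2)))
              - (D.sq + D.sq⁻¹) •
                (gX D ε i (m (π 0)) * gX D ε i (m (π 1) - sg ε) * gX D ε i (m (π 2)))
              + (D.sq ^ (3 : ℕ))⁻¹ •
                (gX D ε i (m (π 0)) * gX D ε i (m (π 1)) * gX D ε i (m (π 2) - sg ε))))
          0
  | serre3 (ε : Bool) (i : D.I0) (hii : D.Ciσ i = -1) (m : Fin 3 → ℤ) :
      Rel (∑ π : Equiv.Perm (Fin 3),
            (((D.sq ^ (3 : ℕ))⁻¹) •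
                (gX D ε i (m (π 0) + sg ε) * gX D ε i (m (π 1)) * gX D ε i (m (π 2)))
              - (D.sq + D.sq⁻¹) •
                (gX D ε i (m (π 0)) * gX D ε i (m (π 1) + sg ε) * gX D ε i (m (π 2)))
              + (D.sq ^ (3 : ℕ)) •
                (gX D ε i (m (π 0)) * gX D ε i (m (π 1)) * gX D ε i (m (π 2) + sg ε))))
          0

/-- The shifted twisted quantum affine algebra `𝒰_q^{μ₊,μ₋}(ĝ^σ)`, presented by the
Drinfeld generators and relations. -/
abbrev U := RingQuot (Rel D μp μm)

/-- the canonical projection from the free algebra -/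
def mkU : FA D →ₐ[ℂ] U D μp μm := RingQuot.mkAlgHom ℂ (Rel D μp μm)

/-- the generator `x^+_{i,r}` of `𝒰_q^{μ₊,μ₋}(ĝ^σ)` -/
def xp (i : D.I0) (r : ℤ) : U D μp μm := mkU D μp μm (gXp D i r)
/-- the generator `x^-_{i,r}` -/
def xm (i : D.I0) (r : ℤ) : U D μp μm := mkU D μp μm (gXm D i r)
/-- the generator `φ^+_{i,r}` -/
def pp (i : D.I0) (r : ℤ) : U D μp μm := mkU D μp μm (gPp D i r)
/-- the generator `φ^-_{i,r}` -/
def pm (i : D.I0) (r : ℤ) : U D μp μm := mkU D μp μm (gPm D i r)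
/-- the generator `φ^+_{i,-α_i(μ₊)}⁻¹` -/
def ppInv (i : D.I0) : U D μp μm := mkU D μp μm (gPpInv D i)
/-- the generator `φ^-_{i,α_i(μ₋)}⁻¹` -/
def pmInv (i : D.I0) : U D μp μm := mkU D μp μm (gPmInv D i)
/-- the generator `h_{i,m}` -/
def hgen (i : D.I0) (m : ℤ) : U D μp μm := mkU D μp μm (gH D i m)

end TQA
namespace TQA

/-- The twisted Cartan datum of type `A₂⁽²⁾`: `𝔤 = A₂` with its order-2 diagram
automorphism `σ` (which fixes no node), `I₀ = {1}`, `C_{1,σ(1)} = -1`, `C_{1,1} = 2`,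
and `q₁ = q^{1/2}`. -/
def A22 (q sq : ℂ) (hq0 : q ≠ 0) (hqr : ∀ n : ℕ, 0 < n → q ^ n ≠ 1)
    (hsq : sq ^ 2 = q) : TQAData where
  I0 := Unit
  finI0 := inferInstance
  deqI0 := inferInstance
  M := 2
  hM := Or.inl rfl
  fixed := fun _ => false
  Cs := fun _ _ s => if s = 0 then -1 else 2
  Cfin := fun _ _ => 2
  q := q
  hq0 := hq0
  hqroot := hqr
  sq := sq
  hsq := hsq
  qi := fun _ => sq
  hqi0 := fun _ h => hq0 (by have h' : sq = 0 := h; rw [← hsq, h']; ring)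
  hqi1 := fun _ h => hqr 1 one_pos
    (by have h' : sq * sq = 1 := h; rw [pow_one, ← hsq, pow_two]; exact h')

/-- generators of the twisted quantum affine Borel algebra `𝒰_q(𝔟^σ)` of type `A₂⁽²⁾`:
the Chevalley generators `e_0^+, e_1^+` and `k_0^{±1}, k_1^{±1}` -/
inductive BGen : Type
  | e (i : Fin 2)
  | k (i : Fin 2)
  | kInv (i : Fin 2)

/-- the Cartan matrix of the twisted affine algebra `A₂⁽²⁾` (nodes `0`, `1`) -/
def CaffA22 : Fin 2 → Fin 2 → ℤ := ![![2, -1], ![-4, 2]]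

/-- `q_0 = q²` and `q_1 = q^{1/2}` -/
def qBA22 (q sq : ℂ) : Fin 2 → ℂ := ![q ^ 2, sq]

/-- the quantum integer `[n]_t = (tⁿ - t⁻ⁿ)/(t - t⁻¹)` -/
def qint (t : ℂ) (n : ℤ) : ℂ := (t ^ n - t ^ (-n)) / (t - t⁻¹)

/-- the quantum factorial `[r]_t!` -/
def qfact (t : ℂ) : ℕ → ℂ
  | 0 => 1
  | n + 1 => qint t (n + 1) * qfact t n

def bE (i : Fin 2) : FreeAlgebra ℂ BGen := FreeAlgebra.ι ℂ (BGen.e i)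
def bK (i : Fin 2) : FreeAlgebra ℂ BGen := FreeAlgebra.ι ℂ (BGen.k i)
def bKInv (i : Fin 2) : FreeAlgebra ℂ BGen := FreeAlgebra.ι ℂ (BGen.kInv i)

/-- the defining relations of the Borel algebra `𝒰_q(𝔟^σ)` of type `A₂⁽²⁾`:
the `k_i` are invertible and commute, `k_i e_j^+ = q_i^{C^σ_{i,j}} e_j^+ k_i`, and the
quantum Serre relations `∑_{r=0}^{1-C^σ_{i,j}} (-1)^r (e_i^+)^{(1-C^σ_{i,j}-r)} e_j^+ (e_i^+)^{(r)} = 0`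
hold for `i ≠ j`, with divided powers `(e_i^+)^{(r)} = (e_i^+)^r / [r]_{q_i}!`. -/
inductive BRel (q sq : ℂ) : FreeAlgebra ℂ BGen → FreeAlgebra ℂ BGen → Prop
  | kk (i j : Fin 2) : BRel q sq (bK i * bK j) (bK j * bK i)
  | kkInv (i j : Fin 2) : BRel q sq (bK i * bKInv j) (bKInv j * bK i)
  | kInv_l (i : Fin 2) : BRel q sq (bKInv i * bK i) 1
  | kInv_r (i : Fin 2) : BRel q sq (bK i * bKInv i) 1
  | ke (i j : Fin 2) :
      BRel q sq (bK i * bE j) ((qBA22 q sq i ^ CaffA22 i j) • (bE j * bK i))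
  | kInvE (i j : Fin 2) :
      BRel q sq (bKInv i * bE j) ((qBA22 q sq i ^ (-CaffA22 i j)) • (bE j * bKInv i))
  | serre (i j : Fin 2) (hij : i ≠ j) :
      BRel q sq (∑ r ∈ Finset.range ((1 - CaffA22 i j).toNat + 1),
              ((-1 : ℂ) ^ r * (qfact (qBA22 q sq i) ((1 - CaffA22 i j).toNat - r))⁻¹ *
                  (qfact (qBA22 q sq i) r)⁻¹) •
                (bE i ^ ((1 - CaffA22 i j).toNat - r) * bE j * bE i ^ r))
        0

/-- the twisted quantum affine Borel algebra `𝒰_q(𝔟^σ)` of type `A₂⁽²⁾` -/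
abbrev UBorelA22 (q sq : ℂ) := RingQuot (BRel q sq)

end TQA

namespace TQAEmb

open TQA

/-! ### The positive part and its skew derivations -/

/-- The standing hypothesis on the quantum parameter: nonzero and not a root of unity. -/
class QGen (q : ℂ) : Prop where
  ne0 : q ≠ 0
  root : ∀ n : ℕ, 0 < n → q ^ n ≠ 1

section adc

variable {R S : Type*} [Ring R] [Algebra ℂ R] [Ring S] [Algebra ℂ S]

/-- Iterated `q`-commutators: `adc q d x y (m+1) = x E - q^{dm-2} E x` with `E = adc q d x y m`,
starting from `y`. -/
def adc (q : ℂ) (d : ℤ) (x y : R) : ℕ → R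
  | 0 => y
  | m + 1 => x * adc q d x y m - q ^ (d * m - 2) • (adc q d x y m * x)

lemma adc_succ (q : ℂ) (d : ℤ) (x y : R) (m : ℕ) :
    adc q d x y (m + 1) = x * adc q d x y m - q ^ (d * m - 2) • (adc q d x y m * x) := rfl

lemma map_adc (f : R →ₐ[ℂ] S) (q : ℂ) (d : ℤ) (x y : R) (m : ℕ) :
    f (adc q d x y m) = adc q d (f x) (f y) m := by
  induction m with
  | zero => rfl
  | succ m ih => simp [adc_succ, ih]

lemma adc_smul (q : ℂ) (d : ℤ) (a b : ℂ) (x y : R) (m : ℕ) :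
    adc q d (a • x) (b • y) m = (a ^ m * b) • adc q d x y m := by
  induction m with
  | zero => simp [adc]
  | succ m ih =>
    simp only [adc_succ, ih, smul_mul_smul_comm, smul_sub, smul_smul]
    congr 2 <;> ring

end adc

/-- The symmetric bilinear form on the root lattice of `A₂⁽²⁾`. -/
def bil (i j : Fin 2) : ℤ := ![![4, -2], ![-2, 1]] i j

/-- The nilpotency degrees `1 - C_{ij}` of the Serre relations. -/
def Ns (i : Fin 2) : ℕ := ![2, 5] i

lemma bil_comm (i j : Fin 2) : bil i j = bil j i := by fin_cases i <;> fin_cases j <;> rfl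

lemma bil_ne {i j : Fin 2} (h : i ≠ j) : bil i j = -2 := by
  fin_cases i <;> fin_cases j <;> first | rfl | exact absurd rfl h

lemma bil_Ns (i : Fin 2) : bil i i * ((Ns i : ℤ) - 1) = 4 := by fin_cases i <;> rfl

lemma bil_pos (i : Fin 2) : 0 < bil i i := by fin_cases i <;> decide

lemma Ns_pos (i : Fin 2) : 0 < Ns i := by fin_cases i <;> decide

/-- The quantum Serre relations in iterated `q`-commutator form. -/
inductive ARel (q : ℂ) : FreeAlgebra ℂ (Fin 2) → FreeAlgebra ℂ (Fin 2) → Prop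
  | serre (i j : Fin 2) (h : i ≠ j) :
      ARel q (adc q (bil i i) (FreeAlgebra.ι ℂ i) (FreeAlgebra.ι ℂ j) (Ns i)) 0

/-- The positive part: the algebra on `e_0, e_1` with the quantum Serre relations of `A₂⁽²⁾`. -/
def A (q : ℂ) : Type := RingQuot (ARel q)

instance (q : ℂ) : Ring (A q) := inferInstanceAs (Ring (RingQuot (ARel q)))
instance (q : ℂ) : Algebra ℂ (A q) := inferInstanceAs (Algebra ℂ (RingQuot (ARel q)))

/-- The projection from the free algebra. -/
def Amk (q : ℂ) : FreeAlgebra ℂ (Fin 2) →ₐ[ℂ] A q := RingQuot.mkAlgHom ℂ (ARel q)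

lemma Amk_surjective (q : ℂ) : Function.Surjective (Amk q) :=
  RingQuot.mkAlgHom_surjective ℂ (ARel q)

section A
variable {q : ℂ}

variable (q) in
/-- The Chevalley generators of `A`. -/
def e (i : Fin 2) : A q := Amk q (FreeAlgebra.ι ℂ i)

variable {R : Type*} [Ring R] [Algebra ℂ R]

lemma e_serre {i j : Fin 2} (h : i ≠ j) : adc q (bil i i) (e q i) (e q j) (Ns i) = 0 := by
  have : Amk q _ = Amk q _ := RingQuot.mkAlgHom_rel ℂ (ARel.serre (q := q) i j h)
  rwa [map_adc, map_zero] at this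

/-- The universal property of `A`. -/
def Alift (x : Fin 2 → R)
    (h : ∀ i j, i ≠ j → adc q (bil i i) (x i) (x j) (Ns i) = 0) : A q →ₐ[ℂ] R :=
  RingQuot.liftAlgHom ℂ ⟨FreeAlgebra.lift ℂ x, by
    rintro _ _ ⟨i, j, hij⟩
    rw [map_adc, map_zero, FreeAlgebra.lift_ι_apply, FreeAlgebra.lift_ι_apply, h i j hij]⟩

@[simp] lemma Alift_e (x : Fin 2 → R) (h) (i : Fin 2) : Alift (q := q) x h (e q i) = x i := by
  have : Alift (q := q) x h (e q i) = FreeAlgebra.lift ℂ x (FreeAlgebra.ι ℂ i) :=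
    RingQuot.liftAlgHom_mkAlgHom_apply ℂ _ _ _
  rw [this, FreeAlgebra.lift_ι_apply]

lemma A_hom_ext {f g : A q →ₐ[ℂ] R} (h : ∀ i, f (e q i) = g (e q i)) : f = g := by
  have H : f.comp (Amk q) = g.comp (Amk q) := FreeAlgebra.hom_ext (funext h)
  ext u
  obtain ⟨u, rfl⟩ := Amk_surjective q u
  exact DFunLike.congr_fun H u

/-- Induction over words, peeling off the leftmost letter. -/
lemma A_induction {P : A q → Prop} (one : P 1) (add : ∀ x y, P x → P y → P (x + y))
    (smul : ∀ (c : ℂ) x, P x → P (c • x)) (mul : ∀ i x, P x → P (e q i * x)) (u : A q) : P u := by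
  obtain ⟨u, rfl⟩ := Amk_surjective q u
  suffices H : ∀ x, P x → P (Amk q u * x) by simpa using H 1 one
  induction u using FreeAlgebra.induction with
  | grade0 r => intro x hx; rw [AlgHom.commutes, ← Algebra.smul_def]; exact smul r x hx
  | grade1 i => intro x hx; exact mul i x hx
  | mul a b ha hb => intro x hx; rw [map_mul, mul_assoc]; exact ha _ (hb _ hx)
  | add a b ha hb => intro x hx; rw [map_add, add_mul]; exact add _ _ (ha _ hx) (hb _ hx)

/-- Two linear maps out of `A` agree if they agree on `1` and this propagates along left
multiplication by generators. -/
lemma A_lin_ext {M : Type*} [AddCommGroup M] [Module ℂ M] (f g : A q →ₗ[ℂ] M) (one : f 1 = g 1)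
    (mul : ∀ i x, f x = g x → f (e q i * x) = g (e q i * x)) (u : A q) : f u = g u := by
  induction u using A_induction with
  | one => exact one
  | add x y hx hy => rw [map_add, map_add, hx, hy]
  | smul c x hx => rw [map_smul, map_smul, hx]
  | mul i x hx => exact mul i x hx

variable (q) in
/-- The torus automorphism `σ_i^n`, scaling `e_j` by `q^{n (α_i, α_j)}`. -/
def sig (n : ℤ) (i : Fin 2) : A q →ₐ[ℂ] A q :=
  Alift (fun j => q ^ (n * bil i j) • e q j) (fun i j h => by
    rw [adc_smul, e_serre h, smul_zero])

@[simp] lemma sig_e (n : ℤ) (i j : Fin 2) : sig q n i (e q j) = q ^ (n * bil i j) • e q j := by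
  simp [sig]

lemma sig_sig (n m : ℤ) (i j : Fin 2) (x : A q) : sig q n i (sig q m j x) = sig q m j (sig q n i x) := by
  rw [← AlgHom.comp_apply, ← AlgHom.comp_apply]
  congr 1
  apply A_hom_ext
  intro k
  simp [smul_smul, mul_comm]

lemma sig_add [hq : QGen q] (n m : ℤ) (i : Fin 2) (x : A q) :
    sig q n i (sig q m i x) = sig q (n + m) i x := by
  rw [← AlgHom.comp_apply]
  congr 1
  apply A_hom_ext
  intro k
  simp [smul_smul, add_mul, zpow_add₀ hq.ne0, mul_comm]

@[simp] lemma sig_zero (i : Fin 2) (x : A q) : sig q 0 i x = x := by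
  have : sig q 0 i = AlgHom.id ℂ _ := by apply A_hom_ext; simp
  rw [this]; rfl

/-! ### Skew derivations -/

section der
variable [hq : QGen q]

/-- The matrix whose upper right entry is used to define the skew derivations. -/
def derX (q : ℂ) (ε : ℤ) (k j : Fin 2) : Matrix (Fin 2) (Fin 2) (A q) :=
  !![e q j, if k = j then 1 else 0; 0, q ^ (ε * bil k j) • e q j]

lemma mat_sub {R : Type*} [Ring R] (a b c d a' b' c' d' : R) :
    !![a, b; c, d] - !![a', b'; c', d'] = !![a - a', b - b'; c - c', d - d'] := by
  ext i j; fin_cases i <;> fin_cases j <;> rfl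

lemma mat_smul {R : Type*} [Ring R] [Algebra ℂ R] (z : ℂ) (a b c d : R) :
    z • !![a, b; c, d] = !![z • a, z • b; z • c, z • d] := by
  ext i j; fin_cases i <;> fin_cases j <;> rfl

lemma derX_adc_diag (ε : ℤ) (hε : ε = 1 ∨ ε = -1) (i j : Fin 2) (hij : i ≠ j) (m : ℕ) :
    adc q (bil i i) (derX q ε i i) (derX q ε i j) (m + 1) =
      !![adc q (bil i i) (e q i) (e q j) (m + 1),
        (∑ l ∈ Finset.range (m + 1), (q ^ (ε * (bil i i * l - 2)) - q ^ (bil i i * l - 2))) •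
          adc q (bil i i) (e q i) (e q j) m;
        0, q ^ (ε * (bil i i * (m + 1) - 2)) • adc q (bil i i) (e q i) (e q j) (m + 1)] := by
  have h0 := hq.ne0
  induction m with
  | zero =>
    simp only [adc, derX, if_pos, if_neg hij, bil_ne hij, Matrix.mul_fin_two, mat_smul, mat_sub]
    ext a b
    fin_cases a <;> fin_cases b <;> simp
    · module
    · have : q ^ (ε * (bil i i - 2)) = q ^ (ε * bil i i) * q ^ (-(ε * 2)) := by
        rw [← zpow_add₀ h0]; ring_nf
      rw [this, zpow_neg]
      module
  | succ m ih =>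
    rw [adc_succ, ih]
    rw [adc_succ q _ (e q i) _ (m+1)]
    have hF := adc_succ q (bil i i) (e q i) (e q j) m
    set F := adc q (bil i i) (e q i) (e q j) m
    set E := adc q (bil i i) (e q i) (e q j) (m + 1)
    rw [Finset.sum_range_succ _ (m+1)]
    set c := ∑ l ∈ Finset.range (m + 1), (q ^ (ε * (bil i i * l - 2)) - q ^ (bil i i * l - 2)) with hc
    simp only [derX, if_pos, Matrix.mul_fin_two, mat_smul, mat_sub]
    ext a b
    fin_cases a <;> fin_cases b <;> simp
    · rcases hε with rfl | rfl
      · have : c = 0 := by rw [hc]; simp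
        rw [this]; simp
      · have h2 : q ^ (bil i i * ((m:ℤ) + 1) - 2) = q ^ (bil i i * (m:ℤ)- 2) * q ^ bil i i := by
          rw [← zpow_add₀ h0]; ring_nf
        have h3 : q ^ (-bil i i) = (q ^ bil i i)⁻¹ := by rw [zpow_neg]
        have h4 : q ^ bil i i ≠ 0 := zpow_ne_zero _ h0
        rw [add_smul, sub_smul]
        simp only [neg_one_mul, h3]
        have : c • E = c • (e q i * F) - (c * q ^ (bil i i * (m:ℤ)- 2)) • (F * e q i) := by
          rw [hF, smul_sub, smul_smul]
        rw [this, h2]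
        have h5 : (q ^ (bil i i * (m:ℤ) - 2) * q ^ bil i i) • (q ^ bil i i)⁻¹ • c • (F * e q i) =
            (c * q ^ (bil i i * (m:ℤ) - 2)) • (F * e q i) := by
          rw [smul_smul, smul_smul]; congr 1; field_simp
        rw [h5]
        module
    · have : q ^ (ε * (bil i i * ((m:ℤ) + 1 + 1) - 2)) = q ^ (ε * bil i i) * q ^ (ε * (bil i i * ((m:ℤ) + 1) - 2)) := by
        rw [← zpow_add₀ h0]; ring_nf
      rw [this]
      simp only [smul_sub, smul_smul]
      congr 2 <;> ring

lemma derX_adc_off (ε : ℤ) (i j : Fin 2) (hij : i ≠ j) (m : ℕ) :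
    adc q (bil i i) (derX q ε j i) (derX q ε j j) m =
      !![adc q (bil i i) (e q i) (e q j) m,
        (∏ l ∈ Finset.range m, (1 - q ^ (bil i i * l - 2 - 2 * ε))) • e q i ^ m;
        0, q ^ (ε * (bil j j - 2 * m)) • adc q (bil i i) (e q i) (e q j) m] := by
  have h0 := hq.ne0
  induction m with
  | zero => simp [adc, derX]
  | succ m ih =>
    rw [adc_succ, ih]
    rw [adc_succ q _ (e q i) _ m]
    set E := adc q (bil i i) (e q i) (e q j) m
    rw [Finset.prod_range_succ]
    set c := ∏ l ∈ Finset.range m, (1 - q ^ (bil i i * l - 2 - 2 * ε)) with hc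
    simp only [derX, if_neg hij.symm, bil_ne hij.symm, Matrix.mul_fin_two, mat_smul, mat_sub]
    ext a b
    fin_cases a <;> fin_cases b <;> simp
    · have : q ^ (bil i i * (m:ℤ) - 2 - 2 * ε) = q ^ (bil i i * (m:ℤ) - 2) * q ^ (-(ε * 2)) := by
        rw [← zpow_add₀ h0]; ring_nf
      rw [this, ← pow_succ, ← pow_succ']
      simp only [zpow_neg]
      module
    · have : q ^ (ε * (bil j j - 2 * ((m:ℤ) + 1))) = q ^ (ε * (bil j j - 2 * (m:ℤ))) * q ^ (-(ε * 2)) := by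
        rw [← zpow_add₀ h0]; ring_nf
      rw [this]
      simp only [smul_sub, smul_smul, zpow_neg]
      congr 2; ring

lemma derX_serre (ε : ℤ) (hε : ε = 1 ∨ ε = -1) (k : Fin 2) (i j : Fin 2) (hij : i ≠ j) :
    adc q (bil i i) (derX q ε k i) (derX q ε k j) (Ns i) = 0 := by
  have h0 := hq.ne0
  by_cases hk : k = i
  · subst hk
    obtain ⟨n, hn⟩ : ∃ n, Ns k = n + 1 := ⟨Ns k - 1, (Nat.sub_add_cancel (Ns_pos k)).symm⟩
    have hE := e_serre (q := q) hij
    rw [hn] at hE ⊢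
    rw [derX_adc_diag ε hε k j hij, hE]
    have hn4 : bil k k * n = 4 := by have := bil_Ns k; rw [hn] at this; simpa using this
    have : (∑ l ∈ Finset.range (n + 1), (q ^ (ε * (bil k k * l - 2)) - q ^ (bil k k * l - 2))) = 0 := by
      rcases hε with rfl | rfl
      · simp
      · rw [Finset.sum_sub_distrib, sub_eq_zero, ← Finset.sum_range_reflect]
        apply Finset.sum_congr rfl
        intro l hl
        have hl' : l ≤ n := by simpa [Nat.lt_succ_iff] using hl
        congr 1
        simp only [Nat.add_sub_cancel, Nat.cast_sub hl']
        linear_combination -hn4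
    rw [this]
    ext a b; fin_cases a <;> fin_cases b <;> simp
  · have hk : k = j := by omega
    subst hk
    rw [derX_adc_off ε i k hij, e_serre hij]
    have : (∏ l ∈ Finset.range (Ns i), (1 - q ^ (bil i i * (l:ℤ) - 2 - 2 * ε))) = 0 := by
      rcases hε with rfl | rfl
      · apply Finset.prod_eq_zero (i := Ns i - 1)
        · have := Ns_pos i; simp; omega
        · have := bil_Ns i
          rw [Nat.cast_sub (Ns_pos i)]
          simp [this]
      · apply Finset.prod_eq_zero (i := 0)
        · simpa using Ns_pos i
        · simp
    rw [this]
    ext a b; fin_cases a <;> fin_cases b <;> simp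

/-- The sign `ε = ±1` attached to a Boolean. -/
def bs (b : Bool) : ℤ := if b then 1 else -1

lemma bs_or (b : Bool) : bs b = 1 ∨ bs b = -1 := by cases b <;> simp [bs]

/-- The triangular representation of `A` encoding a skew derivation. -/
def derM (b : Bool) (k : Fin 2) : A q →ₐ[ℂ] Matrix (Fin 2) (Fin 2) (A q) :=
  Alift (derX q (bs b) k) (fun i j h => derX_serre _ (bs_or b) k i j h)

lemma derM_apply (b : Bool) (k : Fin 2) (u : A q) :
    derM b k u 0 0 = u ∧ derM b k u 1 0 = 0 ∧ derM b k u 1 1 = sig q (bs b) k u := by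
  induction u using A_induction with
  | one => simp
  | add x y hx hy => simp [hx, hy]
  | smul c x hx => simp [hx]
  | mul i x hx =>
    rw [map_mul, map_mul]
    simp only [Matrix.mul_apply, Fin.sum_univ_two, hx]
    simp [derM, derX]

/-- The skew derivation `r^ε_k`: `r(e_j) = δ_{kj}`, `r(uv) = u r(v) + r(u) σ_k^ε(v)`. -/
def der (b : Bool) (k : Fin 2) : A q →ₗ[ℂ] A q where
  toFun u := derM b k u 0 1
  map_add' x y := by simp
  map_smul' c x := by simp

lemma der_mul (b : Bool) (k : Fin 2) (u v : A q) :
    der b k (u * v) = u * der b k v + der b k u * sig q (bs b) k v := by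
  have h1 := derM_apply b k u
  have h2 := derM_apply b k v
  simp [der, Matrix.mul_apply, Fin.sum_univ_two, h1, h2]

@[simp] lemma der_one (b : Bool) (k : Fin 2) : der b k (1 : A q) = 0 := by
  simp [der]

@[simp] lemma der_e (b : Bool) (k j : Fin 2) : der b k (e q j) = if k = j then 1 else 0 := by
  simp [der, derM, derX]

lemma der_e_mul (b : Bool) (k j : Fin 2) (x : A q) :
    der b k (e q j * x) = e q j * der b k x + if k = j then sig q (bs b) k x else 0 := by
  rw [der_mul, der_e]; split_ifs <;> simp

/-- `r_i` lowers the weight by `α_i`. -/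
lemma der_sig (b : Bool) (i j : Fin 2) (n : ℤ) (u : A q) :
    der b i (sig q n j u) = q ^ (n * bil j i) • sig q n j (der b i u) := by
  have h0 := hq.ne0
  refine A_lin_ext ((der b i).comp (sig q n j).toLinearMap)
    (q ^ (n * bil j i) • (sig q n j).toLinearMap.comp (der b i)) (by simp) ?_ u
  intro k x hx
  simp only [LinearMap.comp_apply, AlgHom.toLinearMap_apply, LinearMap.smul_apply] at hx ⊢
  rw [map_mul, sig_e, smul_mul_assoc, map_smul, der_e_mul, der_e_mul, hx, map_add, map_mul, sig_e]
  by_cases h : i = k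
  · subst h
    simp only [if_true, sig_sig, smul_add, smul_mul_assoc, mul_smul_comm]
  · simp [h]
    simp only [smul_smul, mul_comm]

/-- The two families of skew derivations commute up to a power of `q`. -/
lemma der_comm (i j : Fin 2) (u : A q) :
    der true j (der false i u) = q ^ (-bil i j) • der false i (der true j u) := by
  have h0 := hq.ne0
  refine A_lin_ext ((der true j).comp (der false i))
    (q ^ (-bil i j) • (der false i).comp (der true j)) (by simp) ?_ u
  intro k x hx
  simp only [LinearMap.comp_apply, LinearMap.smul_apply] at hx ⊢
  rw [der_e_mul, der_e_mul, map_add, map_add, der_e_mul, der_e_mul, hx]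
  have e1 : bs true = 1 := rfl
  have e2 : bs false = -1 := rfl
  rw [e1, e2]
  by_cases h : i = k <;> by_cases h' : j = k
  · subst h; subst h'
    simp [der_sig, smul_smul]
    rw [inv_mul_cancel₀ (zpow_ne_zero _ h0), one_smul]
    abel
  · subst h
    simp [h', der_sig]
  · subst h'
    simp [h, der_sig]
    rw [bil_comm, ← mul_smul, inv_mul_cancel₀ (zpow_ne_zero _ h0), one_smul]
  · simp [h, h']

end der
end A
end TQAEmb

namespace TQAEmb

open TQA

set_option linter.unusedSectionVars false

section P2
variable {q : ℂ}

lemma QGen.zpow_eq_one [hq : QGen q] {n : ℤ} (h : q ^ n = 1) : n = 0 := by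
  by_contra hn
  rcases Int.natAbs_eq n with h' | h'
  · rw [h', zpow_natCast] at h
    exact hq.root _ (Int.natAbs_pos.mpr hn) h
  · rw [h', zpow_neg, inv_eq_one, zpow_natCast] at h
    exact hq.root _ (Int.natAbs_pos.mpr hn) h

lemma QGen.zpow_inj [hq : QGen q] {n m : ℤ} (h : q ^ n = q ^ m) : n = m := by
  have : q ^ (n - m) = 1 := by
    rw [zpow_sub₀ hq.ne0, h, div_self (zpow_ne_zero _ hq.ne0)]
  have := QGen.zpow_eq_one this
  omega

/-! ### The root-lattice grading of the positive part -/

/-- The simple roots in the root lattice `Fin 2 → ℤ`. -/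
def rt (i : Fin 2) : Fin 2 → ℤ := Pi.single i 1

/-- The coaction of the torus, recording the root-lattice degree. -/
def gr : A q →ₐ[ℂ] AddMonoidAlgebra (A q) (Fin 2 → ℤ) :=
  Alift (fun i => AddMonoidAlgebra.single (rt i) (e q i)) (fun i j h => by
    have : ∀ m, adc q (bil i i) (AddMonoidAlgebra.single (rt i) (e q i))
        (AddMonoidAlgebra.single (rt j) (e q j)) m =
        AddMonoidAlgebra.single (m • rt i + rt j) (adc q (bil i i) (e q i) (e q j) m) := by
      intro m
      induction m with
      | zero => simp [adc]
      | succ m ih =>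
        rw [adc_succ, ih, adc_succ, AddMonoidAlgebra.single_mul_single,
          AddMonoidAlgebra.single_mul_single, AddMonoidAlgebra.smul_single]
        have h1 : m • rt i + rt j + rt i = (m + 1) • rt i + rt j := by
          rw [add_smul, one_smul]; abel
        have h2 : rt i + (m • rt i + rt j) = (m + 1) • rt i + rt j := by
          rw [add_smul, one_smul]; abel
        rw [h1, h2, ← AddMonoidAlgebra.single_sub]
    rw [this, e_serre h, AddMonoidAlgebra.single_zero])

/-- The homogeneous component of degree `β`. -/
def cmpt (β : Fin 2 → ℤ) : A q →ₗ[ℂ] A q where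
  toFun u := (gr u).coeff β
  map_add' x y := by simp
  map_smul' c x := by simp

lemma cmpt_one (β : Fin 2 → ℤ) : cmpt β (1 : A q) = if β = 0 then 1 else 0 := by
  simp only [cmpt, LinearMap.coe_mk, AddHom.coe_mk, map_one, AddMonoidAlgebra.one_def,
    AddMonoidAlgebra.coeff_single, Finsupp.single_apply, eq_comm]

lemma cmpt_mul (β : Fin 2 → ℤ) (i : Fin 2) (x : A q) :
    cmpt β (e q i * x) = e q i * cmpt (β - rt i) x := by
  simp only [cmpt, LinearMap.coe_mk, AddHom.coe_mk, map_mul, gr, Alift_e]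
  rw [AddMonoidAlgebra.coeff_single_mul_apply]
  congr 2
  abel

lemma sum_cmpt (u : A q) : (gr u).coeff.sum (fun _ x => x) = u := by
  induction u using A_induction with
  | one => simp [AddMonoidAlgebra.one_def]
  | add x y hx hy =>
    rw [map_add, AddMonoidAlgebra.coeff_add, Finsupp.sum_add_index' (by simp) (by simp), hx, hy]
  | smul c x hx =>
    rw [map_smul, AddMonoidAlgebra.coeff_smul]
    conv_rhs => rw [← hx]
    rw [Finsupp.sum_smul_index' (by simp), Finsupp.smul_sum]
  | mul i x hx =>
    rw [map_mul]
    conv_rhs => rw [← hx]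
    simp only [gr, Alift_e]
    rw [← gr]
    generalize (gr x) = g
    induction g using AddMonoidAlgebra.induction_linear with
    | zero => simp
    | add f g hf hg =>
      rw [mul_add, AddMonoidAlgebra.coeff_add, Finsupp.sum_add_index' (by simp) (by simp), hf, hg,
        AddMonoidAlgebra.coeff_add, Finsupp.sum_add_index' (by simp) (by simp), mul_add]
    | single a b =>
      rw [AddMonoidAlgebra.single_mul_single, AddMonoidAlgebra.coeff_single,
        AddMonoidAlgebra.coeff_single, Finsupp.sum_single_index rfl, Finsupp.sum_single_index rfl]

/-- An element all of whose homogeneous components vanish is zero. -/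
lemma eq_zero_of_cmpt {u : A q} (h : ∀ β, cmpt β u = 0) : u = 0 := by
  rw [← sum_cmpt u]
  apply Finset.sum_eq_zero
  intro β _
  exact h β

lemma cmpt_cmpt (β γ : Fin 2 → ℤ) (u : A q) :
    cmpt γ (cmpt β u) = if γ = β then cmpt β u else 0 := by
  revert β γ
  induction u using A_induction with
  | one =>
    intro β γ
    rw [cmpt_one]
    split_ifs with h1 h2 h2
    · subst h1; subst h2; simp [cmpt_one]
    · subst h1; simp [cmpt_one, h2]
    · simp
    · simp
  | add x y hx hy => intro β γ; simp only [map_add, hx, hy]; split_ifs <;> simp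
  | smul c x hx => intro β γ; simp only [map_smul, hx]; split_ifs <;> simp
  | mul i x hx =>
    intro β γ
    rw [cmpt_mul, cmpt_mul, hx]
    simp only [sub_left_inj]
    split_ifs <;> simp

lemma cmpt_nonneg {β : Fin 2 → ℤ} {i : Fin 2} (hi : β i < 0) (u : A q) : cmpt β u = 0 := by
  revert β
  induction u using A_induction with
  | one =>
    intro β hi
    rw [cmpt_one, if_neg]
    rintro rfl; simp at hi
  | add x y hx hy => intro β hi; simp only [map_add, hx hi, hy hi, add_zero]
  | smul c x hx => intro β hi; simp only [map_smul, hx hi, smul_zero]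
  | mul j x hx =>
    intro β hi
    rw [cmpt_mul, hx, mul_zero]
    simp only [Pi.sub_apply, rt]
    have : 0 ≤ (Pi.single j 1 : Fin 2 → ℤ) i := by
      by_cases h : i = j
      · subst h; simp
      · simp [h]
    omega

lemma cmpt_zero_scalar (u : A q) : ∃ c : ℂ, cmpt 0 u = c • 1 := by
  induction u using A_induction with
  | one => exact ⟨1, by simp [cmpt_one]⟩
  | add x y hx hy =>
    obtain ⟨c, hc⟩ := hx
    obtain ⟨d, hd⟩ := hy
    exact ⟨c + d, by rw [map_add, hc, hd, add_smul]⟩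
  | smul c x hx =>
    obtain ⟨d, hd⟩ := hx
    exact ⟨c * d, by rw [map_smul, hd, smul_smul]⟩
  | mul i x hx =>
    refine ⟨0, ?_⟩
    rw [cmpt_mul, cmpt_nonneg (i := i), mul_zero, zero_smul]
    simp [rt]

/-- The pairing of a simple root with a root-lattice element. -/
def pair (i : Fin 2) (β : Fin 2 → ℤ) : ℤ := ∑ j, bil i j * β j

lemma pair_add (i : Fin 2) (β γ : Fin 2 → ℤ) : pair i (β + γ) = pair i β + pair i γ := by
  simp [pair, Fin.sum_univ_two]; ring

lemma pair_sub (i : Fin 2) (β γ : Fin 2 → ℤ) : pair i (β - γ) = pair i β - pair i γ := by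
  simp [pair, Fin.sum_univ_two]; ring

lemma pair_rt (i j : Fin 2) : pair i (rt j) = bil i j := by
  simp only [pair, Fin.sum_univ_two, rt]
  fin_cases j <;> simp

@[simp] lemma pair_zero (i : Fin 2) : pair i 0 = 0 := by simp [pair]

lemma sig_cmpt [hq : QGen q] (n : ℤ) (i : Fin 2) (β : Fin 2 → ℤ) (u : A q) :
    sig q n i (cmpt β u) = q ^ (n * pair i β) • cmpt β u := by
  revert β
  induction u using A_induction with
  | one =>
    intro β
    rw [cmpt_one]
    split_ifs with h
    · subst h; simp
    · simp
  | add x y hx hy => intro β; simp only [map_add, hx, hy, smul_add]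
  | smul c x hx => intro β; simp only [map_smul, hx, smul_comm c]
  | mul j x hx =>
    intro β
    rw [cmpt_mul, map_mul, hx, sig_e, smul_mul_smul_comm, pair_sub, pair_rt, ← zpow_add₀ hq.ne0]
    congr 2
    ring

lemma cmpt_sig [hq : QGen q] (n : ℤ) (i : Fin 2) (β : Fin 2 → ℤ) (u : A q) :
    cmpt β (sig q n i u) = q ^ (n * pair i β) • cmpt β u := by
  revert β
  induction u using A_induction with
  | one =>
    intro β
    rw [map_one, cmpt_one]
    split_ifs with h
    · subst h; simp
    · simp
  | add x y hx hy => intro β; simp only [map_add, hx, hy, smul_add]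
  | smul c x hx => intro β; simp only [map_smul, hx, smul_comm c]
  | mul j x hx =>
    intro β
    rw [cmpt_mul, map_mul, sig_e, smul_mul_assoc, map_smul, cmpt_mul, hx, pair_sub, pair_rt,
      mul_smul_comm, smul_smul, ← zpow_add₀ hq.ne0]
    congr 2
    ring

lemma cmpt_der [hq : QGen q] (b : Bool) (i : Fin 2) (γ : Fin 2 → ℤ) (u : A q) :
    cmpt γ (der b i u) = der b i (cmpt (γ + rt i) u) := by
  revert γ
  induction u using A_induction with
  | one =>
    intro γ
    rw [der_one, cmpt_one]
    split_ifs with h <;> simp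
  | add x y hx hy => intro β; simp only [map_add, hx, hy]
  | smul c x hx => intro β; simp only [map_smul, hx]
  | mul j x hx =>
    intro γ
    rw [cmpt_mul, der_e_mul, der_e_mul, map_add, cmpt_mul, hx]
    have h1 : γ - rt j + rt i = γ + rt i - rt j := by abel
    rw [h1]
    congr 1
    split_ifs with h
    · subst h
      rw [cmpt_sig]
      simp only [add_sub_cancel_right]
      rw [sig_cmpt]
    · simp

/-! ### The kernel of `r^+_i` and local nilpotency of the adjoint action -/

section ker
variable [hq : QGen q] (i : Fin 2)

/-- The adjoint action of `e_i`. -/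
def Ead : A q →ₗ[ℂ] A q :=
  LinearMap.mulLeft ℂ (e q i) - (LinearMap.mulRight ℂ (e q i)).comp (sig q 1 i).toLinearMap

lemma Ead_apply (x : A q) : Ead i x = e q i * x - sig q 1 i x * e q i := rfl

lemma Ead_mul (x y : A q) : Ead i (x * y) = Ead i x * y + sig q 1 i x * Ead i y := by
  simp only [Ead_apply, map_mul]; noncomm_ring

lemma Ead_sig (x : A q) : Ead i (sig q 1 i x) = q ^ (-bil i i) • sig q 1 i (Ead i x) := by
  have h := zpow_ne_zero (bil i i) hq.ne0
  simp only [Ead_apply, map_sub, map_mul, sig_e, one_mul, zpow_neg, smul_mul_assoc, mul_smul_comm]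
  rw [← smul_sub, smul_smul, inv_mul_cancel₀ h, one_smul]

lemma Ead_pow_sig (n : ℕ) (x : A q) :
    ∃ c : ℂ, (Ead i ^ n) (sig q 1 i x) = c • sig q 1 i ((Ead i ^ n) x) := by
  induction n generalizing x with
  | zero => exact ⟨1, by simp⟩
  | succ n ih =>
    obtain ⟨c, hc⟩ := ih (Ead i x)
    refine ⟨q ^ (-bil i i) * c, ?_⟩
    rw [pow_succ, Module.End.mul_apply, Module.End.mul_apply, Ead_sig, map_smul, hc, smul_smul]

lemma Ead_nil_mul (n : ℕ) : ∀ (a b : ℕ) (x y : A q), a + b = n → (Ead i ^ a) x = 0 →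
    (Ead i ^ b) y = 0 → (Ead i ^ n) (x * y) = 0 := by
  induction n with
  | zero =>
    intro a b x y hab hx _
    have : a = 0 := by omega
    subst this
    have : x = 0 := by simpa using hx
    simp [this]
  | succ n ih =>
    intro a b x y hab hx hy
    rw [pow_succ, Module.End.mul_apply, Ead_mul, map_add]
    have h1 : (Ead i ^ n) (Ead i x * y) = 0 := by
      cases a with
      | zero =>
        have : x = 0 := by simpa using hx
        simp [this]
      | succ a =>
        refine ih a b _ _ (by omega) ?_ hy
        rwa [pow_succ, Module.End.mul_apply] at hx
    have h2 : (Ead i ^ n) (sig q 1 i x * Ead i y) = 0 := by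
      cases b with
      | zero =>
        have : y = 0 := by simpa using hy
        simp [this]
      | succ b =>
        refine ih a b _ _ (by omega) ?_ ?_
        · obtain ⟨c, hc⟩ := Ead_pow_sig i a x
          rw [hc, hx]; simp
        · rwa [pow_succ, Module.End.mul_apply] at hy
    rw [h1, h2, add_zero]

/-- The subalgebra generated by the iterated `q`-commutators of `e_i` with the other generator. -/
def Ksub : Subalgebra ℂ (A q) :=
  Algebra.adjoin ℂ {x | ∃ j, i ≠ j ∧ ∃ m : ℕ, x = adc q (bil i i) (e q i) (e q j) m}

lemma adc_mem_Ksub {j : Fin 2} (hij : i ≠ j) (m : ℕ) :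
    adc q (bil i i) (e q i) (e q j) m ∈ Ksub i := Algebra.subset_adjoin ⟨j, hij, m, rfl⟩

lemma sig_adc (j : Fin 2) (m : ℕ) (n : ℤ) (k : Fin 2) :
    sig q n k (adc q (bil i i) (e q i) (e q j) m) =
      ((q ^ (n * bil k i)) ^ m * q ^ (n * bil k j)) • adc q (bil i i) (e q i) (e q j) m := by
  rw [map_adc, sig_e, sig_e, adc_smul]

lemma Ead_adc (j : Fin 2) (hij : i ≠ j) (m : ℕ) :
    Ead i (adc q (bil i i) (e q i) (e q j) m) = adc q (bil i i) (e q i) (e q j) (m + 1) := by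
  rw [Ead_apply, sig_adc, adc_succ, smul_mul_assoc]
  congr 2
  rw [bil_ne hij, ← zpow_natCast, ← zpow_mul, ← zpow_add₀ hq.ne0]
  congr 1; ring

lemma Ead_pow_adc (j : Fin 2) (hij : i ≠ j) (n m : ℕ) :
    (Ead i ^ n) (adc q (bil i i) (e q i) (e q j) m) = adc q (bil i i) (e q i) (e q j) (m + n) := by
  induction n with
  | zero => simp
  | succ n ih => rw [pow_succ', Module.End.mul_apply, ih, Ead_adc i j hij]; rfl

lemma adc_big (j : Fin 2) (hij : i ≠ j) (n : ℕ) :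
    adc q (bil i i) (e q i) (e q j) (Ns i + n) = 0 := by
  induction n with
  | zero => exact e_serre hij
  | succ n ih => rw [← add_assoc, adc_succ, ih]; simp

lemma Ksub_nil (x : A q) (hx : x ∈ Ksub i) : ∃ n, (Ead i ^ n) x = 0 := by
  induction hx using Algebra.adjoin_induction with
  | mem x hx =>
    obtain ⟨j, hij, m, rfl⟩ := hx
    exact ⟨Ns i, by rw [Ead_pow_adc i j hij, add_comm, adc_big i j hij]⟩
  | algebraMap r => exact ⟨1, by simp [Ead_apply, Algebra.commutes]⟩
  | add x y _ _ hx hy =>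
    obtain ⟨a, ha⟩ := hx
    obtain ⟨b, hb⟩ := hy
    refine ⟨a + b, ?_⟩
    rw [map_add]
    nth_rewrite 1 [add_comm a b]
    rw [pow_add, pow_add, Module.End.mul_apply, Module.End.mul_apply, ha, hb]
    simp
  | mul x y _ _ hx hy =>
    obtain ⟨a, ha⟩ := hx
    obtain ⟨b, hb⟩ := hy
    exact ⟨a + b, Ead_nil_mul i _ a b x y rfl ha hb⟩

lemma Ksub_sig (x : A q) (hx : x ∈ Ksub i) : sig q 1 i x ∈ Ksub i := by
  induction hx using Algebra.adjoin_induction with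
  | mem x hx =>
    obtain ⟨j, hij, m, rfl⟩ := hx
    rw [sig_adc]
    exact Subalgebra.smul_mem _ (adc_mem_Ksub i hij m) _
  | algebraMap r => rw [AlgHom.commutes]; exact Subalgebra.algebraMap_mem _ _
  | add x y _ _ hx hy => rw [map_add]; exact Subalgebra.add_mem _ hx hy
  | mul x y _ _ hx hy => rw [map_mul]; exact Subalgebra.mul_mem _ hx hy

lemma Ksub_Ead (x : A q) (hx : x ∈ Ksub i) : Ead i x ∈ Ksub i := by
  induction hx using Algebra.adjoin_induction with
  | mem x hx =>
    obtain ⟨j, hij, m, rfl⟩ := hx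
    rw [Ead_adc i j hij]
    exact adc_mem_Ksub i hij (m + 1)
  | algebraMap r => simp [Ead_apply, Algebra.commutes]
  | add x y _ _ hx hy => rw [map_add]; exact Subalgebra.add_mem _ hx hy
  | mul x y h1 h2 hx hy =>
    rw [Ead_mul]
    exact Subalgebra.add_mem _ (Subalgebra.mul_mem _ hx h2)
      (Subalgebra.mul_mem _ (Ksub_sig i x h1) hy)

lemma Ksub_der (x : A q) (hx : x ∈ Ksub i) : der true i x = 0 := by
  induction hx using Algebra.adjoin_induction with
  | mem x hx =>
    obtain ⟨j, hij, m, rfl⟩ := hx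
    cases m with
    | zero => simp [adc, hij]
    | succ m =>
      have h : derM true i (adc q (bil i i) (e q i) (e q j) (m + 1)) =
          adc q (bil i i) (derX q 1 i i) (derX q 1 i j) (m + 1) := by
        rw [map_adc]; simp [derM, bs]
      change derM true i _ 0 1 = 0
      rw [h, derX_adc_diag 1 (Or.inl rfl) i j hij]
      simp
  | algebraMap r => rw [Algebra.algebraMap_eq_smul_one, map_smul, der_one, smul_zero]
  | add x y _ _ hx hy => rw [map_add, hx, hy, add_zero]
  | mul x y _ _ hx hy => rw [der_mul, hx, hy]; simp

/-- Sums of fewer than `n` powers of `e_i` with left coefficients in `Ksub i`. -/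
def Fsub (n : ℕ) : Submodule ℂ (A q) :=
  Submodule.span ℂ {u | ∃ x ∈ Ksub i, ∃ k < n, u = x * e q i ^ k}

lemma Fsub_mono {n m : ℕ} (h : n ≤ m) : Fsub (q := q) i n ≤ Fsub i m :=
  Submodule.span_mono (by rintro _ ⟨x, hx, k, hk, rfl⟩; exact ⟨x, hx, k, hk.trans_le h, rfl⟩)

lemma Fsub_mul_i (n : ℕ) (u : A q) (hu : u ∈ Fsub i n) : e q i * u ∈ Fsub i (n + 1) := by
  induction hu using Submodule.span_induction with
  | mem u hu =>
    obtain ⟨x, hx, k, hk, rfl⟩ := hu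
    have : e q i * (x * e q i ^ k) = Ead i x * e q i ^ k + sig q 1 i x * e q i ^ (k + 1) := by
      rw [Ead_apply, pow_succ']; noncomm_ring
    rw [this]
    exact add_mem (Submodule.subset_span ⟨_, Ksub_Ead i x hx, k, by omega, rfl⟩)
      (Submodule.subset_span ⟨_, Ksub_sig i x hx, k + 1, by omega, rfl⟩)
  | zero => simp
  | add x y _ _ hx hy => rw [mul_add]; exact add_mem hx hy
  | smul c x _ hx => rw [mul_smul_comm]; exact Submodule.smul_mem _ _ hx

lemma Fsub_mul_j (n : ℕ) (j : Fin 2) (hij : i ≠ j) (u : A q) (hu : u ∈ Fsub i n) :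
    e q j * u ∈ Fsub i n := by
  induction hu using Submodule.span_induction with
  | mem u hu =>
    obtain ⟨x, hx, k, hk, rfl⟩ := hu
    rw [← mul_assoc]
    exact Submodule.subset_span
      ⟨_, Subalgebra.mul_mem _ (adc_mem_Ksub i hij 0) hx, k, hk, rfl⟩
  | zero => simp
  | add x y _ _ hx hy => rw [mul_add]; exact add_mem hx hy
  | smul c x _ hx => rw [mul_smul_comm]; exact Submodule.smul_mem _ _ hx

lemma exists_Fsub (u : A q) : ∃ n, u ∈ Fsub i n := by
  induction u using A_induction with
  | one => exact ⟨1, Submodule.subset_span ⟨1, Subalgebra.one_mem _, 0, by omega, by simp⟩⟩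
  | add x y hx hy =>
    obtain ⟨a, ha⟩ := hx
    obtain ⟨b, hb⟩ := hy
    exact ⟨max a b, add_mem (Fsub_mono i (le_max_left _ _) ha) (Fsub_mono i (le_max_right _ _) hb)⟩
  | smul c x hx =>
    obtain ⟨a, ha⟩ := hx
    exact ⟨a, Submodule.smul_mem _ _ ha⟩
  | mul j x hx =>
    obtain ⟨a, ha⟩ := hx
    by_cases h : i = j
    · subst h; exact ⟨a + 1, Fsub_mul_i i a x ha⟩
    · exact ⟨a, Fsub_mul_j i a j h x ha⟩

lemma qsum_ne (k : ℕ) (d : ℤ) (hd : 0 < d) : ∑ l ∈ Finset.range (k + 1), (q ^ d) ^ l ≠ 0 := by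
  intro h
  have := geom_sum_mul (q ^ d) (k + 1)
  rw [h, zero_mul, eq_comm, sub_eq_zero, ← zpow_natCast, ← zpow_mul] at this
  have := QGen.zpow_eq_one this
  push_cast at this
  rcases mul_eq_zero.mp this with h | h <;> omega

lemma der_e_pow (k : ℕ) : der true i (e q i ^ (k + 1)) =
    (∑ l ∈ Finset.range (k + 1), (q ^ bil i i) ^ l) • e q i ^ k := by
  induction k with
  | zero => simp
  | succ k ih =>
    rw [pow_succ, der_mul, ih, der_e, if_pos rfl, sig_e]
    rw [Finset.sum_range_succ' _ (k + 1)]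
    simp only [bs, if_true, one_mul, mul_one, pow_zero, smul_mul_smul_comm, ← pow_succ]
    rw [add_smul, one_smul, add_comm]
    congr 2
    rw [Finset.sum_mul]; simp only [pow_succ]

lemma der_pow_mul (x : A q) (hx : x ∈ Ksub i) (k : ℕ) :
    ∃ c : ℂ, c ≠ 0 ∧ (der true i ^ k) (x * e q i ^ k) = c • x := by
  induction k with
  | zero => exact ⟨1, one_ne_zero, by simp⟩
  | succ k ih =>
    obtain ⟨c, hc, h⟩ := ih
    refine ⟨(∑ l ∈ Finset.range (k + 1), (q ^ bil i i) ^ l) * c,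
      mul_ne_zero (qsum_ne k _ (bil_pos i)) hc, ?_⟩
    rw [pow_succ, Module.End.mul_apply, der_mul, Ksub_der i x hx, der_e_pow, zero_mul, add_zero,
      mul_smul_comm, map_smul, h, smul_smul]

lemma der_pow_Fsub (n : ℕ) (u : A q) (hu : u ∈ Fsub i n) : (der true i ^ n) u = 0 := by
  induction hu using Submodule.span_induction with
  | mem u hu =>
    obtain ⟨x, hx, k, hk, rfl⟩ := hu
    obtain ⟨c, -, h⟩ := der_pow_mul i x hx k
    obtain ⟨l, rfl⟩ := Nat.exists_eq_add_of_lt hk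
    rw [show k + l + 1 = l + 1 + k by ring, pow_add, Module.End.mul_apply, h, pow_succ,
      Module.End.mul_apply, map_smul, Ksub_der i x hx]
    simp
  | zero => simp
  | add x y _ _ hx hy => rw [map_add, hx, hy, add_zero]
  | smul c x _ hx => rw [map_smul, hx, smul_zero]

lemma Fsub_top (n : ℕ) (u : A q) (hu : u ∈ Fsub i (n + 1)) :
    ∃ x ∈ Ksub i, u - x * e q i ^ n ∈ Fsub i n := by
  induction hu using Submodule.span_induction with
  | mem u hu =>
    obtain ⟨x, hx, k, hk, rfl⟩ := hu
    by_cases h : k = n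
    · subst h; exact ⟨x, hx, by simp⟩
    · refine ⟨0, Subalgebra.zero_mem _, ?_⟩
      rw [zero_mul, sub_zero]
      exact Submodule.subset_span ⟨x, hx, k, by omega, rfl⟩
  | zero => exact ⟨0, Subalgebra.zero_mem _, by simp⟩
  | add u v _ _ hu hv =>
    obtain ⟨x, hx, h1⟩ := hu
    obtain ⟨y, hy, h2⟩ := hv
    refine ⟨x + y, Subalgebra.add_mem _ hx hy, ?_⟩
    rw [add_mul, add_sub_add_comm]
    exact add_mem h1 h2
  | smul c u _ hu =>
    obtain ⟨x, hx, h1⟩ := hu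
    refine ⟨c • x, Subalgebra.smul_mem _ hx _, ?_⟩
    rw [smul_mul_assoc, ← smul_sub]
    exact Submodule.smul_mem _ _ h1

/-- The kernel of `r^+_i` is `Ksub i`. -/
lemma mem_Ksub_of_der (u : A q) (hu : der true i u = 0) : u ∈ Ksub i := by
  obtain ⟨n, hn⟩ := exists_Fsub i u
  induction n with
  | zero =>
    have : u = 0 := by simpa [Fsub] using hn
    rw [this]; exact Subalgebra.zero_mem _
  | succ n ih =>
    obtain ⟨x, hx, h⟩ := Fsub_top i n u hn
    cases n with
    | zero =>
      have : u - x = 0 := by simpa [Fsub] using h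
      rw [sub_eq_zero.mp this]; exact hx
    | succ n =>
      apply ih
      obtain ⟨c, hc, h'⟩ := der_pow_mul i x hx (n + 1)
      have h2 := der_pow_Fsub i (n + 1) _ h
      rw [map_sub, h', pow_succ, Module.End.mul_apply, hu, map_zero, zero_sub, neg_eq_zero] at h2
      have : x = 0 := by simpa [hc] using h2
      simpa [this] using h

lemma der_Ead (x : A q) :
    der false i (Ead i x) = Ead i (der false i x) + sig q (-1) i x - sig q 1 i x := by
  have h := zpow_ne_zero (bil i i) hq.ne0
  rw [Ead_apply, map_sub, der_e_mul, if_pos rfl, der_mul, der_e, if_pos rfl, der_sig, Ead_apply,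
    sig_e]
  simp only [bs, one_mul, smul_mul_smul_comm, mul_one]
  rw [← zpow_add₀ hq.ne0]
  simp
  abel

lemma sig_Ead_pow (a : ℤ) (u : A q) (hu : ∀ n : ℤ, sig q n i u = q ^ (n * a) • u) (k : ℕ) (n : ℤ) :
    sig q n i ((Ead i ^ k) u) = q ^ (n * (a + bil i i * k)) • (Ead i ^ k) u := by
  induction k with
  | zero => simp [hu]
  | succ k ih =>
    rw [pow_succ', Module.End.mul_apply]
    set v := (Ead i ^ k) u
    rw [Ead_apply, map_sub, map_mul, map_mul, sig_sig, ih, sig_e, map_smul, smul_mul_smul_comm,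
      smul_mul_smul_comm, mul_comm (q ^ (n * (a + bil i i * k))), ← smul_sub, ← zpow_add₀ hq.ne0]
    congr 2
    push_cast
    ring

/-- A nonzero weight vector killed by both `r^+_i` and `r^-_i` pairs nonpositively with `α_i`:
it spans a locally finite lowest-weight module for the adjoint `sl_2`-triple. -/
lemma pair_nonpos (a : ℤ) (u : A q) (h1 : der true i u = 0) (h2 : der false i u = 0)
    (hu : ∀ n : ℤ, sig q n i u = q ^ (n * a) • u) (hne : u ≠ 0) : a ≤ 0 := by
  by_contra ha
  push Not at ha
  have h0 := hq.ne0
  have key : ∀ k : ℕ, der false i ((Ead i ^ (k + 1)) u) =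
      (∑ l ∈ Finset.range (k + 1), (q ^ (-(a + bil i i * l)) - q ^ (a + bil i i * l))) •
        (Ead i ^ k) u := by
    intro k
    induction k with
    | zero =>
      simp only [zero_add, pow_one, der_Ead, h2, hu, map_zero, pow_zero, Module.End.one_apply]
      simp [sub_smul]
    | succ k ih =>
      rw [pow_succ', Module.End.mul_apply, der_Ead, ih, map_smul, Finset.sum_range_succ _ (k + 1), add_smul,
        sig_Ead_pow i a u hu, sig_Ead_pow i a u hu, pow_succ' _ k, Module.End.mul_apply, sub_smul,
        add_sub_assoc]
      simp
  obtain ⟨n, hn⟩ := Ksub_nil i u (mem_Ksub_of_der i u h1)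
  induction n with
  | zero => exact hne (by simpa using hn)
  | succ k ih =>
    apply ih
    have := key k
    rw [hn, map_zero, eq_comm, smul_eq_zero] at this
    rcases this with h | h
    · exfalso
      set Q := q ^ bil i i with hQ
      have hQ0 : Q ≠ 0 := zpow_ne_zero _ h0
      have e1 : ∀ l : ℕ, q ^ (a + bil i i * l) = q ^ a * Q ^ l := by
        intro l; rw [zpow_add₀ h0, zpow_mul, zpow_natCast]
      have e2 : ∑ l ∈ Finset.range (k + 1), q ^ (-(a + bil i i * l)) =
          q ^ (-a) * (Q ^ k)⁻¹ * ∑ l ∈ Finset.range (k + 1), Q ^ l := by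
        rw [← Finset.sum_range_reflect, Finset.mul_sum]
        apply Finset.sum_congr rfl
        intro l hl
        have hl' : l ≤ k := by simpa [Nat.lt_succ_iff] using hl
        rw [zpow_neg, e1, mul_inv, zpow_neg, mul_assoc]
        congr 1
        simp only [Nat.add_sub_cancel]
        have : Q ^ k = Q ^ (k - l) * Q ^ l := by rw [← pow_add]; congr 1; omega
        rw [this]
        field_simp
      rw [Finset.sum_sub_distrib, e2] at h
      simp only [e1] at h
      rw [← Finset.mul_sum, ← sub_mul] at h
      rcases mul_eq_zero.mp h with h | h
      · rw [sub_eq_zero, hQ, ← zpow_natCast, ← zpow_mul, ← zpow_neg, ← zpow_add₀ h0] at h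
        have := QGen.zpow_inj h
        have := mul_nonneg (bil_pos i).le (Int.natCast_nonneg k)
        omega
      · exact qsum_ne k _ (bil_pos i) h
    · exact h

end ker
end P2
end TQAEmb

namespace TQAEmb

open TQA
open scoped TensorProduct

set_option linter.unusedSectionVars false

/-! ### The Serre relations as iterated `q`-commutators -/

section conv

variable {R : Type*} [Ring R] [Algebra ℂ R]

lemma adc_two (q : ℂ) (h0 : q ≠ 0) (a b : R) :
    adc q 4 a b 2 = a * (a * b) - (q ^ 2 + (q ^ 2)⁻¹) • (a * (b * a)) + b * (a * a) := by
  have e1 : q ^ (-2 : ℤ) = (q ^ 2)⁻¹ := by rw [zpow_neg]; norm_cast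
  have e2 : q ^ (2 : ℤ) = q ^ 2 := by norm_cast
  simp only [adc, Nat.cast_zero, Nat.cast_one, mul_zero, mul_one, zero_sub, e1,
    show (4 : ℤ) - 2 = 2 by norm_num, e2, mul_sub, sub_mul, smul_sub, mul_smul_comm,
    smul_mul_assoc, smul_smul, mul_assoc]
  match_scalars <;> field_simp <;> try ring

lemma adc_five (q : ℂ) (h0 : q ≠ 0) (a b : R) :
    adc q 1 a b 5 = a * (a * (a * (a * (a * b))))
      - (q ^ 2 + q + 1 + q⁻¹ + (q ^ 2)⁻¹) • (a * (a * (a * (a * (b * a)))))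
      + (q ^ 3 + q ^ 2 + 2 * q + 2 + 2 * q⁻¹ + (q ^ 2)⁻¹ + (q ^ 3)⁻¹) •
        (a * (a * (a * (b * (a * a)))))
      - (q ^ 3 + q ^ 2 + 2 * q + 2 + 2 * q⁻¹ + (q ^ 2)⁻¹ + (q ^ 3)⁻¹) •
        (a * (a * (b * (a * (a * a)))))
      + (q ^ 2 + q + 1 + q⁻¹ + (q ^ 2)⁻¹) • (a * (b * (a * (a * (a * a)))))
      - b * (a * (a * (a * (a * a)))) := by
  have e1 : q ^ (-2 : ℤ) = (q ^ 2)⁻¹ := by rw [zpow_neg]; norm_cast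
  have e2 : q ^ (2 : ℤ) = q ^ 2 := by norm_cast
  have e3 : q ^ (-1 : ℤ) = q⁻¹ := by rw [zpow_neg, zpow_one]
  simp only [adc, Nat.cast_zero, Nat.cast_one, Nat.cast_ofNat, mul_zero, one_mul, zero_sub,
    show (1 : ℤ) - 2 = -1 by norm_num, show (3 : ℤ) - 2 = 1 by norm_num,
    show (4 : ℤ) - 2 = 2 by norm_num, sub_self, zero_add, Nat.cast_add, show (1 : ℤ) + 1 = 2 by norm_num,
    e1, e2, e3, zpow_zero, zpow_one, one_smul, mul_sub, sub_mul, smul_sub, mul_smul_comm,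
    smul_mul_assoc, smul_smul, mul_assoc]
  match_scalars <;> field_simp <;> ring

/-- The Serre polynomial is symmetric under `q ↔ q⁻¹`. -/
lemma adc_inv (q : ℂ) (h0 : q ≠ 0) (i : Fin 2) (a b : R) :
    adc q⁻¹ (bil i i) a b (Ns i) = adc q (bil i i) a b (Ns i) := by
  fin_cases i
  · change adc q⁻¹ 4 a b 2 = adc q 4 a b 2
    rw [adc_two _ h0, adc_two _ (inv_ne_zero h0)]
    congr 3
    field_simp
    ring
  · change adc q⁻¹ 1 a b 5 = adc q 1 a b 5
    rw [adc_five _ h0, adc_five _ (inv_ne_zero h0)]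
    have c1 : q⁻¹ ^ 2 + q⁻¹ + 1 + q⁻¹⁻¹ + (q⁻¹ ^ 2)⁻¹ = q ^ 2 + q + 1 + q⁻¹ + (q ^ 2)⁻¹ := by
      simp only [inv_inv, inv_pow]; ring
    have c2 : q⁻¹ ^ 3 + q⁻¹ ^ 2 + 2 * q⁻¹ + 2 + 2 * q⁻¹⁻¹ + (q⁻¹ ^ 2)⁻¹ + (q⁻¹ ^ 3)⁻¹ =
        q ^ 3 + q ^ 2 + 2 * q + 2 + 2 * q⁻¹ + (q ^ 2)⁻¹ + (q ^ 3)⁻¹ := by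
      simp only [inv_inv, inv_pow]; ring
    rw [c1, c2]

lemma qint_two (t : ℂ) (h0 : t ≠ 0) (h1 : t ^ 2 - 1 ≠ 0) : qint t 2 = t + t⁻¹ := by
  have : t - t⁻¹ ≠ 0 := by
    intro h; apply h1; field_simp at h; linear_combination h
  rw [qint, zpow_neg, div_eq_iff this]
  norm_cast
  field_simp
  ring

lemma qint_one (t : ℂ) (h0 : t ≠ 0) (h1 : t ^ 2 - 1 ≠ 0) : qint t 1 = 1 := by
  have : t - t⁻¹ ≠ 0 := by
    intro h; apply h1; field_simp at h; linear_combination h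
  rw [qint, zpow_neg, zpow_one, div_self this]

lemma qint_three (t : ℂ) (h0 : t ≠ 0) (h1 : t ^ 2 - 1 ≠ 0) :
    qint t 3 = t ^ 2 + 1 + (t ^ 2)⁻¹ := by
  have : t - t⁻¹ ≠ 0 := by
    intro h; apply h1; field_simp at h; linear_combination h
  rw [qint, zpow_neg, div_eq_iff this]
  norm_cast
  field_simp
  ring

lemma qint_four (t : ℂ) (h0 : t ≠ 0) (h1 : t ^ 2 - 1 ≠ 0) :
    qint t 4 = (t + t⁻¹) * (t ^ 2 + (t ^ 2)⁻¹) := by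
  have : t - t⁻¹ ≠ 0 := by
    intro h; apply h1; field_simp at h; linear_combination h
  rw [qint, zpow_neg, div_eq_iff this]
  norm_cast
  field_simp
  ring

lemma qint_five (t : ℂ) (h0 : t ≠ 0) (h1 : t ^ 2 - 1 ≠ 0) :
    qint t 5 = t ^ 4 + t ^ 2 + 1 + (t ^ 2)⁻¹ + (t ^ 4)⁻¹ := by
  have : t - t⁻¹ ≠ 0 := by
    intro h; apply h1; field_simp at h; linear_combination h
  rw [qint, zpow_neg, div_eq_iff this]
  norm_cast
  field_simp
  ring

lemma qint_ne (t : ℂ) (h0 : t ≠ 0) (ht : ∀ n : ℕ, 0 < n → t ^ n ≠ 1) (n : ℕ) (hn : 0 < n) :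
    qint t n ≠ 0 := by
  have h1 : t ^ 2 - 1 ≠ 0 := sub_ne_zero.mpr (ht 2 (by norm_num))
  have : t - t⁻¹ ≠ 0 := by
    intro h; apply h1; field_simp at h; linear_combination h
  rw [qint, zpow_neg, zpow_natCast]
  apply div_ne_zero _ this
  intro h
  have h2 := pow_ne_zero n h0
  field_simp at h
  rw [mul_zero, sub_eq_zero, ← pow_mul] at h
  exact ht _ (by omega) h

/-- With divided powers written out, the left side of the quantum Serre relation is a non-zero
multiple of an iterated `q`-commutator. -/
lemma serre_conv {q sq : ℂ} [hq : QGen q] (hs : sq ^ 2 = q) (i j : Fin 2) (hij : i ≠ j) (a b : R) :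
    ∃ c : ℂ, c ≠ 0 ∧ ∑ r ∈ Finset.range ((1 - CaffA22 i j).toNat + 1),
      ((-1 : ℂ) ^ r * (qfact (qBA22 q sq i) ((1 - CaffA22 i j).toNat - r))⁻¹ *
          (qfact (qBA22 q sq i) r)⁻¹) •
        (a ^ ((1 - CaffA22 i j).toNat - r) * b * a ^ r) =
      c • adc q (bil i i) a b (Ns i) := by
  have h0 := hq.ne0
  have hs0 : sq ≠ 0 := by rintro rfl; apply h0; rw [← hs]; simp
  have hsr : ∀ n : ℕ, 0 < n → sq ^ n ≠ 1 := by
    intro n hn h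
    apply hq.root n hn
    rw [← hs, ← pow_mul, mul_comm, pow_mul, h, one_pow]
  have hs1 : sq ^ 2 - 1 ≠ 0 := sub_ne_zero.mpr (hsr 2 (by norm_num))
  obtain ⟨rfl, rfl⟩ | ⟨rfl, rfl⟩ : (i = 0 ∧ j = 1) ∨ (i = 1 ∧ j = 0) := by omega
  · have hQ0 : q ^ 2 ≠ 0 := pow_ne_zero _ h0
    have hQ1 : (q ^ 2) ^ 2 - 1 ≠ 0 := by
      rw [← pow_mul]; exact sub_ne_zero.mpr (hq.root _ (by norm_num))
    have hne := qint_ne (q ^ 2) hQ0 (fun n hn => by rw [← pow_mul]; exact hq.root _ (by omega)) 2 (by norm_num)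
    have e2 := qint_two _ hQ0 hQ1
    push_cast at hne
    refine ⟨(qint (q ^ 2) 2)⁻¹, inv_ne_zero hne, ?_⟩
    have : (1 - CaffA22 0 1).toNat = 2 := rfl
    rw [this]
    change _ = _ • adc q 4 a b 2
    rw [adc_two _ h0]
    have hb : qBA22 q sq 0 = q ^ 2 := rfl
    rw [hb]
    simp only [Finset.sum_range_succ, Finset.sum_range_zero, qfact]
    norm_num [qint_one _ hQ0 hQ1, show ∀ t, qfact t 0 = 1 from fun _ => rfl]
    rw [← e2]
    simp only [smul_add, smul_sub, smul_smul, mul_assoc, pow_two a]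
    rw [inv_mul_cancel₀ hne]
    module
  · have h2 := qint_ne sq hs0 hsr 2 (by norm_num)
    have h3 := qint_ne sq hs0 hsr 3 (by norm_num)
    have h4 := qint_ne sq hs0 hsr 4 (by norm_num)
    have h5 := qint_ne sq hs0 hsr 5 (by norm_num)
    have e2 := qint_two _ hs0 hs1
    have e3 := qint_three _ hs0 hs1
    have e4 := qint_four _ hs0 hs1
    have e5 := qint_five _ hs0 hs1
    push_cast at h2 h3 h4 h5
    refine ⟨(qint sq 5 * (qint sq 4 * (qint sq 3 * qint sq 2)))⁻¹, by positivity, ?_⟩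
    have : (1 - CaffA22 1 0).toNat = 5 := rfl
    rw [this]
    change _ = _ • adc q 1 a b 5
    rw [adc_five _ h0]
    have hb : qBA22 q sq 1 = sq := rfl
    rw [hb]
    have c1 : qint sq 5 = q ^ 2 + q + 1 + q⁻¹ + (q ^ 2)⁻¹ := by
      rw [e5, ← hs]; field_simp
    have c2 : qint sq 5 * qint sq 4 = qint sq 2 * (q ^ 3 + q ^ 2 + 2 * q + 2 + 2 * q⁻¹ + (q ^ 2)⁻¹ + (q ^ 3)⁻¹) := by
      rw [e5, e4, e2, ← hs]; field_simp; ring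
    have c2' : (q ^ 3 + q ^ 2 + 2 * q + 2 + 2 * q⁻¹ + (q ^ 2)⁻¹ + (q ^ 3)⁻¹) = qint sq 5 * qint sq 4 / qint sq 2 := by
      rw [c2]; field_simp
    rw [← c1, c2']
    simp only [Finset.sum_range_succ, Finset.sum_range_zero, qfact]
    norm_num [qint_one _ hs0 hs1, show ∀ t, qfact t 0 = 1 from fun _ => rfl]
    simp only [smul_add, smul_sub, smul_smul, mul_assoc, pow_succ, pow_zero, one_mul]
    generalize qint sq 2 = x2 at *
    generalize qint sq 3 = x3 at *
    generalize qint sq 4 = x4 at *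
    generalize qint sq 5 = x5 at *
    match_scalars <;> field_simp

end conv

end TQAEmb

namespace TQAEmb

open TQA
open scoped TensorProduct

set_option linter.unusedSectionVars false

/-! ### The Borel algebra -/

/-- The Borel algebra, as a type of its own so that instance search does not unfold the quotient. -/
def B (q sq : ℂ) : Type := RingQuot (BRel q sq)

instance (q sq : ℂ) : Ring (B q sq) := inferInstanceAs (Ring (RingQuot (BRel q sq)))
instance (q sq : ℂ) : Algebra ℂ (B q sq) := inferInstanceAs (Algebra ℂ (RingQuot (BRel q sq)))

/-- The projection from the free algebra. -/
def Bmk (q sq : ℂ) : FreeAlgebra ℂ BGen →ₐ[ℂ] B q sq := RingQuot.mkAlgHom ℂ (BRel q sq)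

lemma Bmk_surjective (q sq : ℂ) : Function.Surjective (Bmk q sq) :=
  RingQuot.mkAlgHom_surjective ℂ (BRel q sq)

section B
variable {q sq : ℂ} [hq : QGen q] [hs : Fact (sq ^ 2 = q)]

lemma qB_pow (i j : Fin 2) : qBA22 q sq i ^ CaffA22 i j = q ^ bil i j := by
  have h := hs.out
  have hs0 : sq ≠ 0 := by rintro rfl; apply hq.ne0; rw [← h]; simp
  fin_cases i <;> fin_cases j <;> simp [qBA22, CaffA22, bil] <;> norm_cast
  · ring
  · rw [← h]; ring

lemma Bmk_rel {a b : FreeAlgebra ℂ BGen} (h : BRel q sq a b) : Bmk q sq a = Bmk q sq b :=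
  RingQuot.mkAlgHom_rel ℂ h

variable (q sq) in
/-- The generators `e_i` of the Borel algebra. -/
def Be (i : Fin 2) : B q sq := Bmk q sq (bE i)

variable (q sq) in
/-- The invertible generators `k_i` of the Borel algebra. -/
def kU (i : Fin 2) : (B q sq)ˣ where
  val := Bmk q sq (bK i)
  inv := Bmk q sq (bKInv i)
  val_inv := by rw [← map_mul, Bmk_rel (BRel.kInv_r i), map_one]
  inv_val := by rw [← map_mul, Bmk_rel (BRel.kInv_l i), map_one]

lemma kU_comm (i j : Fin 2) : Commute (kU q sq i) (kU q sq j) := by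
  ext
  have := Bmk_rel (BRel.kk (q := q) (sq := sq) i j)
  simpa [kU] using this

lemma kU_Be (i j : Fin 2) :
    (kU q sq i : B q sq) * Be q sq j = q ^ bil i j • (Be q sq j * kU q sq i) := by
  have := Bmk_rel (BRel.ke (q := q) (sq := sq) i j)
  rw [qB_pow] at this
  simpa [kU, Be] using this

lemma Be_serre {i j : Fin 2} (h : i ≠ j) :
    adc q (bil i i) (Be q sq i) (Be q sq j) (Ns i) = 0 := by
  have := Bmk_rel (BRel.serre (q := q) (sq := sq) i j h)
  obtain ⟨c, hc, h2⟩ := serre_conv hs.out i j h (Be q sq i) (Be q sq j)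
  rw [map_zero, map_sum] at this
  simp only [map_smul, map_mul, map_pow] at this
  change ∑ r ∈ _, _ • (Be q sq i ^ _ * Be q sq j * Be q sq i ^ _) = 0 at this
  rw [h2] at this
  exact (smul_eq_zero.mp this).resolve_left hc

variable {R : Type*} [Ring R] [Algebra ℂ R]

/-- The universal property of the Borel algebra. -/
def Blift (E : Fin 2 → R) (k : Fin 2 → Rˣ) (kk : ∀ i j, k i * k j = k j * k i)
    (ke : ∀ i j, (k i : R) * E j = q ^ bil i j • (E j * k i))
    (se : ∀ i j, i ≠ j → adc q (bil i i) (E i) (E j) (Ns i) = 0) : B q sq →ₐ[ℂ] R :=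
  RingQuot.liftAlgHom ℂ ⟨FreeAlgebra.lift ℂ (fun g => match g with
    | BGen.e i => E i
    | BGen.k i => (k i : R)
    | BGen.kInv i => ((k i)⁻¹ : Rˣ)), by
    have h0 := hq.ne0
    intro a b h
    have kk' : ∀ i j, (k i : R) * k j = k j * k i := fun i j => by
      rw [← Units.val_mul, kk, Units.val_mul]
    cases h with
    | kk i j => simpa [bK] using kk' i j
    | kkInv i j =>
      simp only [bK, bKInv, map_mul, FreeAlgebra.lift_ι_apply]
      rw [← Units.val_mul, ← Units.val_mul]
      congr 1
      exact ((Commute.inv_right (kk i j : Commute (k i) (k j))))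
    | kInv_l i => simp [bK, bKInv]
    | kInv_r i => simp [bK, bKInv]
    | ke i j =>
      rw [qB_pow]
      simpa [bK, bE] using ke i j
    | kInvE i j =>
      rw [zpow_neg, qB_pow]
      simp only [bE, bKInv, map_mul, map_smul, FreeAlgebra.lift_ι_apply]
      rw [Units.inv_mul_eq_iff_eq_mul, mul_smul_comm, ← mul_assoc, ke, smul_mul_assoc,
        smul_smul, mul_assoc, Units.mul_inv, mul_one, inv_mul_cancel₀ (zpow_ne_zero _ h0), one_smul]
    | serre i j h =>
      rw [map_zero, map_sum]
      simp only [map_smul, map_mul, map_pow, bE, FreeAlgebra.lift_ι_apply]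
      obtain ⟨c, hc, h2⟩ := serre_conv hs.out i j h (E i) (E j)
      rw [h2, se i j h, smul_zero]⟩

section lift
variable (E : Fin 2 → R) (k : Fin 2 → Rˣ) (kk ke se)

@[simp] lemma Blift_Be (i : Fin 2) : Blift (q := q) (sq := sq) E k kk ke se (Be q sq i) = E i := by
  have : Blift (q := q) (sq := sq) E k kk ke se (Be q sq i) = FreeAlgebra.lift ℂ _ (bE i) :=
    RingQuot.liftAlgHom_mkAlgHom_apply ℂ _ _ _
  rw [this, bE, FreeAlgebra.lift_ι_apply]

@[simp] lemma Blift_kU (i : Fin 2) :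
    Blift (q := q) (sq := sq) E k kk ke se (kU q sq i : B q sq) = k i := by
  have : Blift (q := q) (sq := sq) E k kk ke se (kU q sq i : B q sq) = FreeAlgebra.lift ℂ _ (bK i) :=
    RingQuot.liftAlgHom_mkAlgHom_apply ℂ _ _ _
  rw [this, bK, FreeAlgebra.lift_ι_apply]

@[simp] lemma Blift_kUinv (i : Fin 2) :
    Blift (q := q) (sq := sq) E k kk ke se ((kU q sq i)⁻¹ : (B q sq)ˣ) = ((k i)⁻¹ : Rˣ) := by
  have : Blift (q := q) (sq := sq) E k kk ke se ((kU q sq i)⁻¹ : (B q sq)ˣ) =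
      FreeAlgebra.lift ℂ _ (bKInv i) :=
    RingQuot.liftAlgHom_mkAlgHom_apply ℂ _ _ _
  rw [this, bKInv, FreeAlgebra.lift_ι_apply]

end lift

lemma B_induction {P : B q sq → Prop} (one : P 1) (add : ∀ x y, P x → P y → P (x + y))
    (smul : ∀ (c : ℂ) x, P x → P (c • x)) (e : ∀ i x, P x → P (Be q sq i * x))
    (k : ∀ i x, P x → P (kU q sq i * x))
    (ki : ∀ i x, P x → P (((kU q sq i)⁻¹ : (B q sq)ˣ) * x)) (u : B q sq) : P u := by
  obtain ⟨u, rfl⟩ := Bmk_surjective q sq u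
  suffices H : ∀ x, P x → P (Bmk q sq u * x) by simpa using H 1 one
  induction u using FreeAlgebra.induction with
  | grade0 r => intro x hx; rw [AlgHom.commutes, ← Algebra.smul_def]; exact smul r x hx
  | grade1 g =>
    intro x hx
    cases g with
    | e i => exact e i x hx
    | k i => exact k i x hx
    | kInv i => exact ki i x hx
  | mul a b ha hb => intro x hx; rw [map_mul, mul_assoc]; exact ha _ (hb _ hx)
  | add a b ha hb => intro x hx; rw [map_add, add_mul]; exact add _ _ (ha _ hx) (hb _ hx)

variable (q sq) in
/-- The inclusion of the positive part in the Borel algebra. -/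
def inc : A q →ₐ[ℂ] B q sq := Alift (Be q sq) (fun _ _ h => Be_serre h)

@[simp] lemma inc_e (i : Fin 2) : inc q sq (e q i) = Be q sq i := by simp [inc]

lemma kU_inc (i : Fin 2) (x : A q) :
    (kU q sq i : B q sq) * inc q sq x = inc q sq (sig q 1 i x) * kU q sq i := by
  induction x using A_induction with
  | one => simp
  | add x y hx hy => simp [mul_add, add_mul, hx, hy]
  | smul c x hx => simp [hx]
  | mul j x hx =>
    rw [map_mul, map_mul, map_mul, ← mul_assoc, inc_e, kU_Be, smul_mul_assoc, mul_assoc, hx]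
    simp [mul_assoc]

lemma kUi_inc (i : Fin 2) (x : A q) :
    (((kU q sq i)⁻¹ : (B q sq)ˣ) : B q sq) * inc q sq x =
      inc q sq (sig q (-1) i x) * ((kU q sq i)⁻¹ : (B q sq)ˣ) := by
  rw [Units.inv_mul_eq_iff_eq_mul, ← mul_assoc, kU_inc, mul_assoc, Units.mul_inv, mul_one, sig_add]
  simp

lemma kU_zpow_inc (n : ℤ) (i : Fin 2) (x : A q) :
    ((kU q sq i ^ n : (B q sq)ˣ) : B q sq) * inc q sq x =
      inc q sq (sig q n i x) * (kU q sq i ^ n : (B q sq)ˣ) := by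
  induction n using Int.induction_on generalizing x with
  | zero => simp
  | succ n ih =>
    rw [zpow_add, zpow_one, Units.val_mul, mul_assoc, kU_inc, ← mul_assoc, ih, sig_add, mul_assoc]
  | pred n ih =>
    rw [zpow_sub, Units.val_mul, zpow_one, mul_assoc, kUi_inc, ← mul_assoc, ih, sig_add, mul_assoc]
    simp [sub_eq_add_neg]

variable (q sq) in
/-- The torus element `k_β = k_0^{β_0} k_1^{β_1}`. -/
def kT (β : Fin 2 → ℤ) : (B q sq)ˣ := kU q sq 0 ^ β 0 * kU q sq 1 ^ β 1

lemma kT_add (β γ : Fin 2 → ℤ) : kT q sq (β + γ) = kT q sq β * kT q sq γ := by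
  have := ((kU_comm (q := q) (sq := sq) 1 0).zpow_zpow (β 1) (γ 0)).eq
  simp only [kT, Pi.add_apply, zpow_add]
  rw [mul_assoc, mul_assoc, ← mul_assoc (kU q sq 1 ^ β 1), this]
  simp only [mul_assoc]

@[simp] lemma kT_zero : kT q sq 0 = 1 := by simp [kT]

lemma kT_rt (i : Fin 2) : kT q sq (rt i) = kU q sq i := by
  fin_cases i <;> simp [kT, rt]

lemma kT_neg (β : Fin 2 → ℤ) : kT q sq (-β) = (kT q sq β)⁻¹ := by
  rw [eq_inv_iff_mul_eq_one, ← kT_add]; simp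

lemma kT_inc (β : Fin 2 → ℤ) (x : A q) :
    (kT q sq β : B q sq) * inc q sq x =
      inc q sq (sig q (β 0) 0 (sig q (β 1) 1 x)) * kT q sq β := by
  rw [kT, Units.val_mul, mul_assoc, kU_zpow_inc, ← mul_assoc, kU_zpow_inc, mul_assoc]

/-- The Borel algebra is spanned by the products of elements of the positive part and torus
elements. -/
lemma B_span (b : B q sq) : ∃ s : (Fin 2 → ℤ) →₀ A q,
    b = s.sum (fun β u => inc q sq u * kT q sq β) := by
  classical
  suffices H : b ∈ Submodule.span ℂ {b : B q sq | ∃ u β, b = inc q sq u * kT q sq β} by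
    induction H using Submodule.span_induction with
    | mem x hx =>
      obtain ⟨u, β, rfl⟩ := hx
      exact ⟨Finsupp.single β u, by rw [Finsupp.sum_single_index]; simp⟩
    | zero => exact ⟨0, by simp⟩
    | add x y _ _ hx hy =>
      obtain ⟨s, rfl⟩ := hx
      obtain ⟨t, rfl⟩ := hy
      refine ⟨s + t, ?_⟩
      rw [Finsupp.sum_add_index'] <;> intros <;> simp [add_mul]
    | smul c x _ hx =>
      obtain ⟨s, rfl⟩ := hx
      refine ⟨c • s, ?_⟩
      rw [Finsupp.sum_smul_index' (by simp), Finsupp.smul_sum]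
      simp
  have key : ∀ (f : B q sq →ₗ[ℂ] B q sq), (∀ u β, ∃ v γ, f (inc q sq u * kT q sq β) =
      inc q sq v * kT q sq γ) → ∀ x ∈ Submodule.span ℂ {b : B q sq | ∃ u β, b = inc q sq u * kT q sq β},
      f x ∈ Submodule.span ℂ {b : B q sq | ∃ u β, b = inc q sq u * kT q sq β} := by
    intro f hf x hx
    induction hx using Submodule.span_induction with
    | mem x hx =>
      obtain ⟨u, β, rfl⟩ := hx
      obtain ⟨v, γ, h⟩ := hf u β
      exact Submodule.subset_span ⟨v, γ, h⟩
    | zero => simp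
    | add x y _ _ hx hy => rw [map_add]; exact add_mem hx hy
    | smul c x _ hx => rw [map_smul]; exact Submodule.smul_mem _ _ hx
  induction b using B_induction with
  | one => exact Submodule.subset_span ⟨1, 0, by simp⟩
  | add x y hx hy => exact add_mem hx hy
  | smul c x hx => exact Submodule.smul_mem _ _ hx
  | e i x hx =>
    refine key (LinearMap.mulLeft ℂ (Be q sq i)) (fun u β => ⟨e q i * u, β, ?_⟩) x hx
    simp [mul_assoc]
  | k i x hx =>
    refine key (LinearMap.mulLeft ℂ (kU q sq i : B q sq)) (fun u β => ⟨sig q 1 i u, rt i + β, ?_⟩) x hx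
    rw [LinearMap.mulLeft_apply, ← mul_assoc, kU_inc, kT_add, kT_rt, Units.val_mul, mul_assoc]
  | ki i x hx =>
    refine key (LinearMap.mulLeft ℂ (((kU q sq i)⁻¹ : (B q sq)ˣ) : B q sq))
      (fun u β => ⟨sig q (-1) i u, -rt i + β, ?_⟩) x hx
    rw [LinearMap.mulLeft_apply, ← mul_assoc, kUi_inc, kT_add, kT_neg, kT_rt, Units.val_mul, mul_assoc]

variable (q sq) in
/-- The Borel algebra acts on its positive part. -/
def Brep : B q sq →ₐ[ℂ] Module.End ℂ (A q) :=
  Blift (fun i => Algebra.lmul ℂ (A q) (e q i))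
    (fun i => ⟨(sig q 1 i).toLinearMap, (sig q (-1) i).toLinearMap,
      by ext x; simp [sig_add], by ext x; simp [sig_add]⟩)
    (fun i j => by ext x; simp [sig_sig 1 1 i j])
    (fun i j => by ext x; simp)
    (fun i j h => by
      have := map_adc (Algebra.lmul ℂ (A q)) q (bil i i) (e q i) (e q j) (Ns i)
      rw [e_serre h, map_zero] at this
      exact this.symm)

lemma inc_injective : Function.Injective (inc q sq) := by
  have h : ∀ x : A q, Brep q sq (inc q sq x) = Algebra.lmul ℂ (A q) x := by
    intro x
    have : (Brep q sq).comp (inc q sq) = Algebra.lmul ℂ (A q) := by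
      apply A_hom_ext
      intro i
      rw [AlgHom.comp_apply, inc_e, Brep, Blift_Be]
    exact DFunLike.congr_fun this x
  intro x y hxy
  have := congrArg (fun f => f 1) ((h x).symm.trans ((congrArg _ hxy).trans (h y)))
  simpa using this

end B

end TQAEmb

namespace TQAEmb

open TQA
open scoped TensorProduct

set_option linter.unusedSectionVars false

section hopf
variable {q sq : ℂ} [hq : QGen q] [hs : Fact (sq ^ 2 = q)]

/-! ### The coaction of the Borel algebra on its positive part -/

/-- The coefficients of the coaction on iterated `q`-commutators. -/
def cc (q : ℂ) (d : ℤ) : ℕ → ℕ → ℂ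
  | 0, _ => 1
  | a + 1, 0 => (1 - q ^ (d * a - 4)) * cc q d a 0
  | a + 1, j + 1 => (1 - q ^ (d * (a + 2 * (j + 1)) - 4)) * cc q d a (j + 1) +
      q ^ (d * (a + 1)) * cc q d (a + 1) j

lemma cc_vanish (i : Fin 2) (a j : ℕ) (h : a + 1 + j = Ns i) : cc q (bil i i) (a + 1) j = 0 := by
  have h0 := hq.ne0
  fin_cases i
  · have h' : a + 1 + j = 2 := h
    change cc q 4 (a + 1) j = 0
    obtain ⟨rfl, rfl⟩ | ⟨rfl, rfl⟩ : (a = 0 ∧ j = 1) ∨ (a = 1 ∧ j = 0) := by omega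
    · simp [cc]; field_simp; norm_cast; ring
    · simp [cc]
  · have h' : a + 1 + j = 5 := h
    change cc q 1 (a + 1) j = 0
    obtain ⟨rfl, rfl⟩ | ⟨rfl, rfl⟩ | ⟨rfl, rfl⟩ | ⟨rfl, rfl⟩ | ⟨rfl, rfl⟩ :
      (a = 0 ∧ j = 4) ∨ (a = 1 ∧ j = 3) ∨ (a = 2 ∧ j = 2) ∨ (a = 3 ∧ j = 1) ∨ (a = 4 ∧ j = 0) := by
      omega
    all_goals
      simp [cc]
    all_goals
      norm_cast
      field_simp
      ring

/-- The elements `(e_i^a k_i^j k_o) ⊗ E_j` occurring in the coaction on `E_m`. -/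
def TT (i o : Fin 2) (p : ℕ × ℕ) : B q sq ⊗[ℂ] A q :=
  (Be q sq i ^ p.1 * (kU q sq i : B q sq) ^ p.2 * kU q sq o) ⊗ₜ[ℂ]
    adc q (bil i i) (e q i) (e q o) p.2

variable (q sq) in
/-- The coaction on generators. -/
def cop (i : Fin 2) : B q sq ⊗[ℂ] A q := Be q sq i ⊗ₜ 1 + (kU q sq i : B q sq) ⊗ₜ e q i

lemma k_pow_e (i : Fin 2) (n : ℕ) : (kU q sq i : B q sq) * Be q sq i ^ n =
    q ^ (bil i i * n) • (Be q sq i ^ n * kU q sq i) := by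
  have h0 := hq.ne0
  have := kU_inc (sq := sq) i (e q i ^ n)
  rw [map_pow, map_pow, inc_e, sig_e, smul_pow, map_smul, map_pow, inc_e, smul_mul_assoc] at this
  rw [this, ← zpow_natCast, ← zpow_mul]; simp

lemma kk_e (i o : Fin 2) (h : i ≠ o) (j : ℕ) :
    (kU q sq i : B q sq) ^ j * kU q sq o * Be q sq i =
    q ^ (bil i i * j - 2) • (Be q sq i * ((kU q sq i : B q sq) ^ j * kU q sq o)) := by
  have h0 := hq.ne0
  have h1 := kU_inc (sq := sq) o (e q i)
  have h2 := kU_zpow_inc (sq := sq) j i (e q i)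
  rw [zpow_natCast, Units.val_pow_eq_pow_val] at h2
  rw [inc_e] at h1 h2
  rw [mul_assoc, h1, sig_e, bil_ne h.symm, map_smul, inc_e, smul_mul_assoc, mul_smul_comm,
    ← mul_assoc, h2, sig_e, map_smul, inc_e, smul_mul_assoc, smul_mul_assoc, smul_smul,
    ← zpow_add₀ h0, mul_assoc]
  congr 2; ring

lemma k_adc (i o : Fin 2) (h : i ≠ o) (m : ℕ) (p : ℂ) :
    (kU q sq i : B q sq) * inc q sq (adc p (bil i i) (e q i) (e q o) m) =
    q ^ (bil i i * m - 2) • (inc q sq (adc p (bil i i) (e q i) (e q o) m) * kU q sq i) := by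
  have h0 := hq.ne0
  rw [kU_inc, map_adc, sig_e, sig_e, adc_smul, map_smul, smul_mul_assoc, bil_ne h,
    ← zpow_natCast, ← zpow_mul, ← zpow_add₀ h0]
  congr 2; ring

lemma cop_TT (i o : Fin 2) (h : i ≠ o) (a j m : ℕ) (hm : a + j = m) :
    cop q sq i * TT i o (a, j) - q ^ (bil i i * m - 2) • (TT i o (a, j) * cop q sq i) =
    (1 - q ^ (bil i i * (a + 2 * j) - 4)) • TT i o (a + 1, j) +
      q ^ (bil i i * a) • TT i o (a, j + 1) := by
  have h0 := hq.ne0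
  subst hm
  have c1 := k_pow_e (q := q) (sq := sq) i a
  have c2 := kk_e (q := q) (sq := sq) i o h j
  have c3 : (kU q sq o : B q sq) * kU q sq i = kU q sq i * kU q sq o := by
    rw [← Units.val_mul, (kU_comm o i).eq, Units.val_mul]
  have X1 : Be q sq i * (Be q sq i ^ a * (kU q sq i : B q sq) ^ j * kU q sq o) =
      Be q sq i ^ (a + 1) * (kU q sq i : B q sq) ^ j * kU q sq o := by
    rw [pow_succ']; simp only [mul_assoc]
  have X2 : (kU q sq i : B q sq) * (Be q sq i ^ a * (kU q sq i : B q sq) ^ j * kU q sq o) =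
      q ^ (bil i i * a) • (Be q sq i ^ a * (kU q sq i : B q sq) ^ (j + 1) * kU q sq o) := by
    rw [mul_assoc, ← mul_assoc, c1, pow_succ' _ j, smul_mul_assoc]; simp only [mul_assoc]
  have X3 : (Be q sq i ^ a * (kU q sq i : B q sq) ^ j * kU q sq o) * Be q sq i =
      q ^ (bil i i * j - 2) • (Be q sq i ^ (a + 1) * (kU q sq i : B q sq) ^ j * kU q sq o) := by
    rw [mul_assoc (Be q sq i ^ a), mul_assoc (Be q sq i ^ a), c2, mul_smul_comm, pow_succ]
    simp only [mul_assoc]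
  have X4 : (Be q sq i ^ a * (kU q sq i : B q sq) ^ j * kU q sq o) * kU q sq i =
      (Be q sq i ^ a * (kU q sq i : B q sq) ^ (j + 1) * kU q sq o) := by
    rw [mul_assoc, c3, pow_succ]; simp only [mul_assoc]
  have Y := adc_succ q (bil i i) (e q i) (e q o) j
  replace Y := eq_add_of_sub_eq Y.symm
  have hd : q ^ bil i i ≠ 0 := zpow_ne_zero _ h0
  have f1 : q ^ (bil i i * ((a:ℤ) + j) - 2) = q ^ (bil i i * (a:ℤ)) * q ^ (bil i i * (j:ℤ) - 2) := by
    rw [← zpow_add₀ h0]; congr 1; ring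
  have f2 : q ^ (bil i i * ((a:ℤ) + 2 * j) - 4) =
      q ^ (bil i i * (a:ℤ)) * q ^ (bil i i * (j:ℤ) - 2) * q ^ (bil i i * (j:ℤ) - 2) := by
    rw [← zpow_add₀ h0, ← zpow_add₀ h0]; congr 1; ring
  rw [Nat.cast_add, f1, f2]
  simp only [TT, cop, add_mul, mul_add, Algebra.TensorProduct.tmul_mul_tmul, X1, X2, X3, X4,
    one_mul, mul_one, Y, TensorProduct.tmul_add, TensorProduct.tmul_smul, ← TensorProduct.smul_tmul',
    smul_add, smul_smul]
  module

lemma adc_cop (i o : Fin 2) (h : i ≠ o) (m : ℕ) :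
    adc q (bil i i) (cop q sq i) (cop q sq o) m =
      inc q sq (adc q (bil i i) (e q i) (e q o) m) ⊗ₜ 1 +
      ∑ p ∈ Finset.HasAntidiagonal.antidiagonal m, cc q (bil i i) p.1 p.2 • TT (sq := sq) i o p := by
  have h0 := hq.ne0
  induction m with
  | zero => simp [adc, cop, TT, cc]
  | succ m ih =>
    rw [adc_succ, ih, mul_add, add_mul, smul_add, Finset.mul_sum, Finset.sum_mul, Finset.smul_sum,
      add_sub_add_comm, ← Finset.sum_sub_distrib]
    congr 1
    · have := k_adc (q := q) (sq := sq) i o h m q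
      rw [adc_succ q _ (e q i), map_sub, map_mul, map_smul, map_mul, inc_e]
      simp only [cop, add_mul, mul_add, Algebra.TensorProduct.tmul_mul_tmul, one_mul, mul_one, this,
        TensorProduct.sub_tmul, ← TensorProduct.smul_tmul']
      module
    · have key : ∀ p ∈ Finset.HasAntidiagonal.antidiagonal m, cop q sq i * (cc q (bil i i) p.1 p.2 • TT i o p) -
          q ^ (bil i i * (m:ℤ) - 2) • ((cc q (bil i i) p.1 p.2 • TT i o p) * cop q sq i) =
          ((1 - q ^ (bil i i * (p.1 + 2 * p.2) - 4)) * cc q (bil i i) p.1 p.2) • TT i o (p.1 + 1, p.2) +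
          (q ^ (bil i i * p.1) * cc q (bil i i) p.1 p.2) • TT i o (p.1, p.2 + 1) := by
        rintro ⟨a, j⟩ hp
        have := cop_TT (q := q) (sq := sq) i o h a j m (Finset.HasAntidiagonal.mem_antidiagonal.mp hp)
        rw [mul_smul_comm, smul_mul_assoc, smul_comm, ← smul_sub, this, smul_add, smul_smul, smul_smul]
        congr 2 <;> ring
      rw [Finset.sum_congr rfl key, Finset.sum_add_distrib]
      -- split the coefficient of `TT (a, j)` into the contributions of `(a-1, j)` and `(a, j-1)`
      let u : ℕ × ℕ → ℂ := fun p => match p with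
        | (0, _) => 0
        | (a + 1, j) => (1 - q ^ (bil i i * (a + 2 * j) - 4)) * cc q (bil i i) a j
      let v : ℕ × ℕ → ℂ := fun p => match p with
        | (_, 0) => 0
        | (a, j + 1) => q ^ (bil i i * a) * cc q (bil i i) a j
      have huv : ∀ p ∈ Finset.HasAntidiagonal.antidiagonal (m + 1), cc q (bil i i) p.1 p.2 • TT (sq := sq) i o p =
          u p • TT (q := q) i o p + v p • TT (q := q) i o p := by
        rintro ⟨a, j⟩ hp
        rw [← add_smul]
        congr 1
        rcases a with _ | a <;> rcases j with _ | j
        · simp at hp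
        · simp [u, v, cc]
        · simp [u, v, cc]
        · simp [u, v, cc]
      rw [Finset.sum_congr rfl huv, Finset.sum_add_distrib, Finset.Nat.sum_antidiagonal_succ,
        Finset.Nat.sum_antidiagonal_succ']
      simp [u, v]

variable (q sq) in
/-- The coaction `Δ : A → B ⊗ A`, the restriction of the coproduct. -/
def cop' : A q →ₐ[ℂ] B q sq ⊗[ℂ] A q := Alift (cop q sq) (fun i j h => by
  rw [adc_cop i j h, e_serre h, map_zero, TensorProduct.zero_tmul, zero_add]
  apply Finset.sum_eq_zero
  rintro ⟨a, l⟩ hp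
  have hp' := Finset.HasAntidiagonal.mem_antidiagonal.mp hp
  simp only at hp'
  rcases a with _ | a
  · obtain rfl : l = Ns i := by omega
    simp [TT, e_serre h]
  · rw [cc_vanish i a l (by omega), zero_smul])

lemma cop'_mul (i : Fin 2) (x : A q) : cop' q sq (e q i * x) =
    (Be q sq i ⊗ₜ 1) * cop' q sq x + ((kU q sq i : B q sq) ⊗ₜ e q i) * cop' q sq x := by
  rw [map_mul, cop', Alift_e, cop, add_mul]

/-- Application of a linear endomorphism in the second tensor factor. -/
abbrev lT (f : A q →ₗ[ℂ] A q) : B q sq ⊗[ℂ] A q →ₗ[ℂ] B q sq ⊗[ℂ] A q := f.lTensor (B q sq)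

lemma lT_sig (i : Fin 2) (x : A q) :
    ((kU q sq i : B q sq) ⊗ₜ 1) * lT (sig q 1 i).toLinearMap (cop' q sq x) =
      cop' q sq (sig q 1 i x) * ((kU q sq i : B q sq) ⊗ₜ[ℂ] (1 : A q)) := by
  have h0 := hq.ne0
  have hm : ∀ t, lT (sq := sq) (sig q 1 i).toLinearMap t =
      Algebra.TensorProduct.map (AlgHom.id ℂ (B q sq)) (sig q 1 i) t := fun t => rfl
  rw [hm]
  induction x using A_induction with
  | one => simp
  | add x y hx hy => simp only [map_add, mul_add, add_mul, hx, hy]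
  | smul c x hx => simp only [map_smul, mul_smul_comm, smul_mul_assoc, hx]
  | mul j x hx =>
    rw [map_mul, map_mul, ← mul_assoc]
    have : ((kU q sq i : B q sq) ⊗ₜ[ℂ] (1 : A q)) *
        Algebra.TensorProduct.map (AlgHom.id ℂ (B q sq)) (sig q 1 i) (cop' q sq (e q j)) =
        cop' q sq (sig q 1 i (e q j)) * ((kU q sq i : B q sq) ⊗ₜ[ℂ] (1 : A q)) := by
      rw [sig_e, map_smul, cop', Alift_e, cop]
      have hc : (kU q sq i : B q sq) * kU q sq j = kU q sq j * kU q sq i := by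
        rw [← Units.val_mul, (kU_comm i j).eq, Units.val_mul]
      simp [mul_add, add_mul, kU_Be, hc, ← TensorProduct.smul_tmul', TensorProduct.tmul_smul]
    rw [this, mul_assoc, hx, ← mul_assoc, ← map_mul, ← map_mul]

lemma lT_mul_left (f : A q →ₗ[ℂ] A q) (b : B q sq) (t : B q sq ⊗[ℂ] A q) :
    lT f ((b ⊗ₜ 1) * t) = (b ⊗ₜ 1) * lT f t := by
  induction t with
  | zero => simp
  | tmul x y => simp
  | add x y hx hy => rw [mul_add, map_add, hx, hy, map_add, mul_add]

lemma lT_der (i : Fin 2) (x : A q) :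
    lT (der true i) (cop' q sq x) =
      cop' q sq (der true i x) * ((kU q sq i : B q sq) ⊗ₜ[ℂ] (1 : A q)) := by
  induction x using A_induction with
  | one => simp [Algebra.TensorProduct.one_def]
  | add x y hx hy => simp only [map_add, add_mul, hx, hy]
  | smul c x hx => simp only [map_smul, smul_mul_assoc, hx]
  | mul j x hx =>
    have key : ∀ t : B q sq ⊗[ℂ] A q, lT (der true i) (((kU q sq j : B q sq) ⊗ₜ e q j) * t) =
        ((kU q sq j : B q sq) ⊗ₜ e q j) * lT (der true i) t +
        if i = j then ((kU q sq j : B q sq) ⊗ₜ 1) * lT (sig q 1 i).toLinearMap t else 0 := by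
      intro t
      induction t with
      | zero => simp
      | tmul b a =>
        simp only [Algebra.TensorProduct.tmul_mul_tmul, LinearMap.lTensor_tmul, der_e_mul,
          TensorProduct.tmul_add]
        split_ifs <;> simp [bs]
      | add x y hx hy =>
        rw [mul_add, map_add, hx, hy, map_add, mul_add]
        split_ifs
        · rw [map_add, mul_add]; abel
        · abel
    rw [cop'_mul, map_add, lT_mul_left, key, hx, der_e_mul, map_add, cop'_mul]
    split_ifs with hij
    · subst hij
      rw [lT_sig]
      simp only [add_mul, mul_assoc, bs, if_true]
      abel
    · simp only [add_mul, mul_assoc, map_zero, zero_mul, add_zero]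

lemma lT_cmpt_mul (γ : Fin 2 → ℤ) (i : Fin 2) (x : A q) :
    lT (cmpt γ) (cop' q sq (e q i * x)) = (Be q sq i ⊗ₜ 1) * lT (cmpt γ) (cop' q sq x) +
      ((kU q sq i : B q sq) ⊗ₜ e q i) * lT (cmpt (γ - rt i)) (cop' q sq x) := by
  rw [cop'_mul, map_add, lT_mul_left]
  congr 1
  generalize cop' q sq x = t
  induction t with
  | zero => simp
  | tmul b a => simp [cmpt_mul]
  | add x y hx hy => rw [mul_add, map_add, hx, hy, map_add, mul_add]

lemma cmpt_neg_rt (i : Fin 2) : (cmpt (0 - rt i) : A q →ₗ[ℂ] A q) = 0 := by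
  ext x
  exact cmpt_nonneg (i := i) (by simp [rt]) x

lemma lT_cmpt_zero (x : A q) : lT (cmpt 0) (cop' q sq x) = inc q sq x ⊗ₜ 1 := by
  induction x using A_induction with
  | one => simp [Algebra.TensorProduct.one_def, cmpt_one]
  | add x y hx hy => simp only [map_add, hx, hy, TensorProduct.add_tmul]
  | smul c x hx => simp only [map_smul, hx, TensorProduct.smul_tmul']
  | mul i x hx =>
    rw [lT_cmpt_mul, hx, cmpt_neg_rt]
    simp

/-- The height of an element of the root lattice. -/
def ht (β : Fin 2 → ℤ) : ℤ := β 0 + β 1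

lemma ht_rt (i : Fin 2) : ht (rt i) = 1 := by fin_cases i <;> simp [ht, rt]
lemma ht_sub (β γ : Fin 2 → ℤ) : ht (β - γ) = ht β - ht γ := by simp [ht]; ring

lemma lT_cmpt_top (x : A q) : ∀ β γ : Fin 2 → ℤ, ht β ≤ ht γ →
    lT (cmpt γ) (cop' q sq (cmpt β x)) =
      if γ = β then (kT q sq β : B q sq) ⊗ₜ cmpt β x else 0 := by
  induction x using A_induction with
  | one =>
    intro β γ h
    rw [cmpt_one]
    by_cases hβ : β = 0
    · subst hβ
      simp [Algebra.TensorProduct.one_def, cmpt_one]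
      split_ifs <;> simp
    · simp [hβ]
  | add x y hx hy =>
    intro β γ h
    simp only [map_add, hx β γ h, hy β γ h]
    split_ifs <;> simp [TensorProduct.tmul_add]
  | smul c x hx =>
    intro β γ h
    simp only [map_smul, hx β γ h]
    split_ifs <;> simp
  | mul i x hx =>
    intro β γ h
    rw [cmpt_mul, lT_cmpt_mul, hx, hx, if_neg]
    · by_cases hg : γ = β
      · subst hg
        have : kT q sq γ = kU q sq i * kT q sq (γ - rt i) := by
          rw [← kT_rt, ← kT_add]; simp
        simp [this]
      · rw [if_neg, if_neg hg]; · simp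
        simpa using hg
    · rintro rfl
      rw [ht_sub, ht_rt] at h; omega
    · rw [ht_sub, ht_sub]; omega
    · rw [ht_sub, ht_rt]; omega

end hopf

end TQAEmb

namespace TQAEmb

open TQA MulOpposite
open scoped TensorProduct

set_option linter.unusedSectionVars false

section hopf
variable {q sq : ℂ} [hq : QGen q] [hs : Fact (sq ^ 2 = q)]

/-! ### The antipode -/

variable (q sq) in
/-- The inverse generators of the torus. -/
abbrev ki (i : Fin 2) : B q sq := ((kU q sq i)⁻¹ : (B q sq)ˣ)

lemma ki_comm (i j : Fin 2) : ki q sq i * ki q sq j = ki q sq j * ki q sq i := by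
  rw [← Units.val_mul, ← Units.val_mul, ((kU_comm i j).inv_inv).eq]

lemma inc_ki (i : Fin 2) (x : A q) :
    inc q sq x * ki q sq i = ki q sq i * inc q sq (sig q 1 i x) := by
  rw [kUi_inc, sig_add]; simp

lemma inc_ki_pow (i : Fin 2) (n : ℕ) (x : A q) :
    inc q sq x * ki q sq i ^ n = ki q sq i ^ n * inc q sq (sig q n i x) := by
  induction n generalizing x with
  | zero => simp
  | succ n ih =>
    rw [pow_succ', ← mul_assoc, inc_ki, mul_assoc, ih, sig_add, mul_assoc]; simp

lemma op_adc (i o : Fin 2) (h : i ≠ o) (m : ℕ) : ∃ s : ℂ,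
    adc q (bil i i) (op (-(ki q sq i * Be q sq i))) (op (-(ki q sq o * Be q sq o))) m =
      op (s • (ki q sq i ^ m * ki q sq o *
        inc q sq (adc q⁻¹ (bil i i) (e q i) (e q o) m))) := by
  have h0 := hq.ne0
  induction m with
  | zero => exact ⟨-1, by simp [adc]⟩
  | succ m ih =>
    obtain ⟨s, ih⟩ := ih
    refine ⟨s * q ^ (2 * (bil i i * m - 2)), ?_⟩
    rw [adc_succ, ih, ← op_mul, ← op_mul, ← op_smul, ← op_sub]
    congr 1
    have hE : ∀ n : ℤ, sig q n i (adc q⁻¹ (bil i i) (e q i) (e q o) m) =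
        q ^ (n * (bil i i * m - 2)) • adc q⁻¹ (bil i i) (e q i) (e q o) m := by
      intro n
      rw [map_adc, sig_e, sig_e, adc_smul, bil_ne h, ← zpow_natCast, ← zpow_mul, ← zpow_add₀ h0]
      congr 2; ring
    rw [adc_succ q⁻¹]
    have hE1 := hE 1
    set E := adc q⁻¹ (bil i i) (e q i) (e q o) m
    have h1 : inc q sq E * ki q sq i = q ^ (bil i i * (m:ℤ) - 2) • (ki q sq i * inc q sq E) := by
      rw [inc_ki, hE1, map_smul, mul_smul_comm, one_mul]
    have h2 : Be q sq i * (ki q sq i ^ m * ki q sq o) =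
        q ^ (bil i i * (m:ℤ) - 2) • (ki q sq i ^ m * ki q sq o * Be q sq i) := by
      rw [← inc_e, ← mul_assoc, inc_ki_pow, sig_e, map_smul, mul_smul_comm, smul_mul_assoc,
        mul_assoc, inc_ki, sig_e, map_smul, mul_smul_comm, mul_smul_comm, smul_smul,
        ← zpow_add₀ h0, bil_ne h.symm, mul_assoc]
      congr 2; ring
    have h3 : ki q sq i ^ m * ki q sq o * ki q sq i = ki q sq i ^ (m + 1) * ki q sq o := by
      rw [mul_assoc, ki_comm o i, pow_succ, mul_assoc]
    have h3' : ki q sq i * (ki q sq i ^ m * ki q sq o) = ki q sq i ^ (m + 1) * ki q sq o := by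
      rw [pow_succ', mul_assoc]
    set κ := ki q sq i ^ m * ki q sq o
    have L1 : κ * inc q sq E * (ki q sq i * Be q sq i) =
        q ^ (bil i i * (m:ℤ) - 2) • (ki q sq i ^ (m + 1) * ki q sq o * (inc q sq E * Be q sq i)) := by
      rw [← h3, mul_assoc κ, ← mul_assoc (inc q sq E), h1]
      simp only [smul_mul_assoc, mul_smul_comm, mul_assoc]
    have L2 : (ki q sq i * Be q sq i) * (κ * inc q sq E) =
        q ^ (bil i i * (m:ℤ) - 2) • (ki q sq i ^ (m + 1) * ki q sq o * (Be q sq i * inc q sq E)) := by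
      rw [← h3', mul_assoc (ki q sq i), ← mul_assoc (Be q sq i), h2]
      simp only [smul_mul_assoc, mul_smul_comm, mul_assoc]
    have hp : q ^ (2 * (bil i i * (m:ℤ) - 2)) =
        q ^ (bil i i * (m:ℤ) - 2) * q ^ (bil i i * (m:ℤ) - 2) := by
      rw [← zpow_add₀ h0]; congr 1; ring
    have hi : q⁻¹ ^ (bil i i * (m:ℤ) - 2) = (q ^ (bil i i * (m:ℤ) - 2))⁻¹ := inv_zpow _ _
    have hne : q ^ (bil i i * (m:ℤ) - 2) ≠ 0 := zpow_ne_zero _ h0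
    rw [map_sub, map_smul, map_mul, map_mul, inc_e, hp, hi]
    rw [mul_neg, neg_mul, smul_mul_assoc, mul_smul_comm, L1, L2, mul_sub, mul_smul_comm]
    generalize q ^ (bil i i * (m:ℤ) - 2) = p at *
    match_scalars <;> field_simp

variable (q sq) in
/-- The antipode of the Borel algebra. -/
def Sa : B q sq →ₐ[ℂ] (B q sq)ᵐᵒᵖ :=
  Blift (fun i => op (-(ki q sq i * Be q sq i)))
    (fun i => ⟨op (ki q sq i), op (kU q sq i : B q sq), by rw [← op_mul]; simp,
      by rw [← op_mul]; simp⟩)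
    (fun i j => by
      ext
      simp only [Units.val_mul]
      rw [← op_mul, ← op_mul, ki_comm])
    (fun i j => by
      simp only
      rw [← op_mul, ← op_mul, ← op_smul]
      congr 1
      rw [neg_mul, mul_neg, smul_neg, mul_assoc, ← inc_e, inc_ki, sig_e, one_mul, map_smul,
        mul_smul_comm, mul_smul_comm, ← mul_assoc, ki_comm, ← mul_assoc])
    (fun i j h => by
      obtain ⟨s, hs⟩ := op_adc (q := q) (sq := sq) i j h (Ns i)
      rw [hs, adc_inv _ hq.ne0, e_serre h]; simp)

variable (q sq) in
/-- The antipode as a linear endomorphism. -/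
def Sl : B q sq →ₗ[ℂ] B q sq where
  toFun b := unop (Sa q sq b)
  map_add' x y := by simp
  map_smul' c x := by simp

lemma Sl_mul (a b : B q sq) : Sl q sq (a * b) = Sl q sq b * Sl q sq a := by simp [Sl]
lemma Sl_one : Sl q sq 1 = 1 := by simp [Sl]
lemma Sl_Be (i : Fin 2) : Sl q sq (Be q sq i) = -(ki q sq i * Be q sq i) := by
  simp [Sl, Sa]
lemma Sl_k (i : Fin 2) : Sl q sq (kU q sq i) = ki q sq i := by
  simp [Sl, Sa]
lemma Sl_ki (i : Fin 2) : Sl q sq (ki q sq i) = kU q sq i := by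
  simp only [Sl, Sa, LinearMap.coe_mk, AddHom.coe_mk, Blift_kUinv]
  rfl

/-- The square of the antipode on homogeneous elements. -/
lemma Sl_Sl (x : A q) : ∀ β : Fin 2 → ℤ, Sl q sq (Sl q sq (inc q sq (cmpt β x))) =
    q ^ (-(4 * β 0 + β 1)) • inc q sq (cmpt β x) := by
  have h0 := hq.ne0
  induction x using A_induction with
  | one =>
    intro β
    rw [cmpt_one]
    split_ifs with h
    · subst h; simp [Sl_one]
    · simp
  | add x y hx hy => intro β; simp only [map_add, hx, hy, smul_add]
  | smul c x hx => intro β; simp only [map_smul, hx]; rw [smul_comm]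
  | mul i x hx =>
    intro β
    rw [cmpt_mul, map_mul, Sl_mul, Sl_mul, hx, inc_e, Sl_Be, map_neg, Sl_mul, Sl_Be, Sl_ki, neg_mul,
      neg_mul, neg_mul, neg_neg]
    have : ki q sq i * Be q sq i * kU q sq i = q ^ (-bil i i) • Be q sq i := by
      rw [← inc_e, kUi_inc, mul_assoc]; simp
    rw [this, smul_mul_smul_comm, ← zpow_add₀ h0]
    congr 2
    fin_cases i <;> simp [rt, bil] <;> ring

variable (q sq) in
/-- The contraction `b ⊗ a ↦ S(b) a`. -/
def muS : B q sq ⊗[ℂ] A q →ₗ[ℂ] B q sq :=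
  TensorProduct.lift ((LinearMap.mul ℂ (B q sq)).compl₁₂ (Sl q sq) (inc q sq).toLinearMap)

lemma muS_tmul (b : B q sq) (a : A q) : muS q sq (b ⊗ₜ a) = Sl q sq b * inc q sq a := rfl

lemma muS_cop (x : A q) : muS q sq (cop' q sq x) = inc q sq (cmpt 0 x) := by
  induction x using A_induction with
  | one => simp [Algebra.TensorProduct.one_def, cmpt_one, muS_tmul, Sl_one]
  | add x y hx hy => simp only [map_add, hx, hy]
  | smul c x hx => simp only [map_smul, hx]
  | mul i x hx =>
    rw [cmpt_mul, cmpt_neg_rt, cop'_mul]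
    simp only [LinearMap.zero_apply, mul_zero, map_zero]
    generalize cop' q sq x = t
    induction t with
    | zero => simp
    | tmul b a =>
      simp [muS_tmul, Sl_mul, Sl_Be, Sl_k, mul_assoc]
    | add x y hx hy =>
      rw [mul_add, mul_add, map_add, map_add, map_add] at *
      rw [add_add_add_comm, hx, hy, add_zero]

lemma Sl_kT (β : Fin 2 → ℤ) : Sl q sq (kT q sq β) = ((kT q sq β)⁻¹ : (B q sq)ˣ) := by
  let h : (B q sq)ˣ →* ((B q sq)ˣ)ᵐᵒᵖ :=
    (Units.opEquiv (M := B q sq)).toMonoidHom.comp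
      (Units.map ((Sa q sq : B q sq →* (B q sq)ᵐᵒᵖ)))
  have h1 : ∀ u : (B q sq)ˣ, Sl q sq (u : B q sq) = ((unop (h u) : (B q sq)ˣ) : B q sq) := fun u => rfl
  have h2 : ∀ i, h (kU q sq i) = op (kU q sq i)⁻¹ := by
    intro i
    apply unop_injective
    apply Units.ext
    rw [← h1, Sl_k]; rfl
  rw [h1]
  congr 1
  simp only [kT, map_mul, map_zpow, h2]
  simp [mul_inv_rev]

lemma kT_inv (β : Fin 2 → ℤ) : (kT q sq β)⁻¹ = kT q sq (-β) := by
  rw [inv_eq_iff_mul_eq_one, ← kT_add]; simp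

/-! ### Elements killed by all skew derivations are scalars -/

variable (q sq) in
/-- Contraction of the first tensor factor with a linear functional. -/
def contr (φ : B q sq →ₗ[ℂ] ℂ) : B q sq ⊗[ℂ] A q →ₗ[ℂ] A q :=
  (TensorProduct.lid ℂ (A q)).toLinearMap ∘ₗ φ.rTensor (A q)

lemma contr_tmul (φ : B q sq →ₗ[ℂ] ℂ) (b : B q sq) (a : A q) :
    contr q sq φ (b ⊗ₜ a) = φ b • a := by simp [contr]

lemma contr_lT (φ : B q sq →ₗ[ℂ] ℂ) (f : A q →ₗ[ℂ] A q) (t : B q sq ⊗[ℂ] A q) :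
    contr q sq φ (lT f t) = f (contr q sq φ t) := by
  induction t with
  | zero => simp
  | tmul b a => simp [contr, lT]
  | add x y hx hy => simp only [map_add, hx, hy]

lemma eq_of_contr {s t : B q sq ⊗[ℂ] A q} (h : ∀ φ, contr q sq φ s = contr q sq φ t) :
    s = t := by
  classical
  let b := Module.Basis.ofVectorSpace ℂ (B q sq)
  apply (TensorProduct.equivFinsuppOfBasisLeft (N := A q) b).injective
  ext i
  rw [TensorProduct.equivFinsuppOfBasisLeft_apply, TensorProduct.equivFinsuppOfBasisLeft_apply]
  exact h (b.coord i)

lemma cmpt_rt (k : Fin 2) (u : A q) : ∃ c : ℂ, cmpt (rt k) u = c • e q k := by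
  induction u using A_induction with
  | one =>
    refine ⟨0, ?_⟩
    rw [cmpt_one, if_neg, zero_smul]
    intro h
    have := ht_rt k
    rw [h] at this; simp [ht] at this
  | add x y hx hy =>
    obtain ⟨c, hc⟩ := hx
    obtain ⟨d, hd⟩ := hy
    exact ⟨c + d, by rw [map_add, hc, hd, add_smul]⟩
  | smul a x hx =>
    obtain ⟨c, hc⟩ := hx
    exact ⟨a * c, by rw [map_smul, hc, smul_smul]⟩
  | mul i x hx =>
    rw [cmpt_mul]
    by_cases h : i = k
    · subst h
      obtain ⟨c, hc⟩ := cmpt_zero_scalar x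
      exact ⟨c, by rw [sub_self, hc, mul_smul_comm, mul_one]⟩
    · refine ⟨0, ?_⟩
      rw [cmpt_nonneg (i := i), mul_zero, zero_smul]
      fin_cases i <;> fin_cases k <;> simp_all [rt]

lemma exists_neg {γ : Fin 2 → ℤ} (h : ht γ ≤ 0) (h0 : γ ≠ 0) : ∃ i, γ i < 0 := by
  by_contra hc
  push Not at hc
  apply h0
  have h1 := hc 0
  have h2 := hc 1
  simp only [ht] at h
  ext i
  fin_cases i <;> simp <;> omega

lemma cmpt_eq_zero {β γ : Fin 2 → ℤ} {u : A q} (hu : cmpt β u = u) (h : γ ≠ β) :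
    cmpt γ u = 0 := by
  rw [← hu, cmpt_cmpt, if_neg h]

end hopf

/-- A homogeneous element of positive degree killed by the skew derivations vanishes: it would be
primitive, and then the square of the antipode gives incompatible scalars. -/
lemma GKhom {q sq : ℂ} [hq : QGen q] (hs : Fact (sq ^ 2 = q)) (n : ℕ) : ∀ β : Fin 2 → ℤ, ht β = n + 1 → ∀ u : A q,
    cmpt β u = u → (∀ i, der true i u = 0) → u = 0 := by
  have h0 := hq.ne0
  induction n using Nat.strong_induction_on with
  | _ n IH =>
  intro β hβ u hu hd
  have hβ0 : β ≠ 0 := by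
    rintro rfl
    simp [ht] at hβ; omega
  by_contra hne
  have hnn : ∀ i, 0 ≤ β i := by
    intro i
    by_contra hi
    push Not at hi
    exact hne (by rw [← hu, cmpt_nonneg hi])
  have hn0 : n ≠ 0 := by
    rintro rfl
    obtain ⟨k, hk⟩ : ∃ k, β = rt k := by
      have h1 := hnn 0
      have h2 := hnn 1
      simp only [ht] at hβ
      by_cases h : β 0 = 0
      · refine ⟨1, ?_⟩
        ext i
        fin_cases i <;> simp [rt] <;> omega
      · refine ⟨0, ?_⟩
        ext i
        fin_cases i <;> simp [rt] <;> omega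
    obtain ⟨c, hc⟩ := cmpt_rt k u
    rw [← hk, hu] at hc
    have := hd k
    rw [hc, map_smul, der_e, if_pos rfl] at this
    apply hne
    rw [hc, ← one_mul (e q k), ← smul_mul_assoc, this, zero_mul]
  have hf : ∀ i, der false i u = 0 := by
    intro i
    refine IH (n - 1) (by omega) (β - rt i) (by rw [ht_sub, ht_rt, hβ]; omega) _ ?_ ?_
    · rw [cmpt_der, sub_add_cancel, hu]
    · intro j
      rw [der_comm, hd j, map_zero, smul_zero]
  have hk : ∀ n i, sig q n i u = q ^ (n * pair i β) • u := fun n i => by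
    conv_lhs => rw [← hu]
    rw [sig_cmpt, hu]
  have hp : ∀ i, pair i β ≤ 0 := fun i =>
    pair_nonpos i (pair i β) u (hd i) (hf i) (fun n => hk n i) hne
  have hcop : cop' q sq u = (kT q sq β : B q sq) ⊗ₜ u + inc q sq u ⊗ₜ 1 := by
    apply eq_of_contr
    intro φ
    rw [← sub_eq_zero]
    apply eq_zero_of_cmpt
    intro γ
    rw [map_sub, sub_eq_zero]
    by_cases h1 : γ = 0
    · subst h1
      rw [← contr_lT, lT_cmpt_zero, map_add, contr_tmul, contr_tmul, map_add, map_smul, map_smul,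
        cmpt_eq_zero hu hβ0.symm, cmpt_one, if_pos rfl, smul_zero, zero_add]
    · rw [map_add, contr_tmul, contr_tmul, map_add, map_smul, map_smul, cmpt_one, if_neg h1,
        smul_zero, add_zero]
      by_cases h2 : ht β ≤ ht γ
      · have := lT_cmpt_top (sq := sq) u β γ h2
        rw [hu] at this
        rw [← contr_lT, this]
        split_ifs with h3
        · rw [contr_tmul, h3, hu]
        · rw [map_zero, cmpt_eq_zero hu h3, smul_zero]
      · rw [cmpt_eq_zero hu (by rintro rfl; exact h2 le_rfl), smul_zero]
        by_cases h3 : ht γ ≤ 0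
        · obtain ⟨i, hi⟩ := exists_neg h3 h1
          exact cmpt_nonneg hi _
        · push Not at h2 h3
          refine IH (ht γ - 1).toNat (by omega) γ (by omega) _ ?_ ?_
          · rw [cmpt_cmpt, if_pos rfl]
          · intro i
            have h4 : der true i (contr q sq φ (cop' q sq u)) = 0 := by
              rw [← contr_lT, lT_der, hd i, map_zero, zero_mul, map_zero]
            have h5 := cmpt_der true i (γ - rt i) (contr q sq φ (cop' q sq u))
            rw [sub_add_cancel, h4, map_zero] at h5
            exact h5.symm
  have hS : Sl q sq (inc q sq u) = -(((kT q sq β)⁻¹ : (B q sq)ˣ) * inc q sq u) := by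
    have h1 := muS_cop (sq := sq) u
    rw [hcop, map_add, muS_tmul, muS_tmul, cmpt_eq_zero hu hβ0.symm, Sl_kT, map_zero, map_one,
      mul_one] at h1
    exact (neg_eq_of_add_eq_zero_right h1).symm
  have hSS := Sl_Sl (sq := sq) u β
  rw [hu, hS, map_neg, Sl_mul, hS, kT_inv, Sl_kT, kT_inv, neg_neg, neg_mul, neg_neg, kT_inc, hk,
    map_smul, hk, smul_smul, map_smul, smul_mul_assoc, smul_mul_assoc, mul_assoc, ← Units.val_mul, ← kT_add,
    neg_add_cancel, kT_zero, Units.val_one, mul_one, ← zpow_add₀ h0, ← sub_eq_zero, ← sub_smul,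
    smul_eq_zero, sub_eq_zero] at hSS
  rcases hSS with h | h
  · have := hq.zpow_inj h
    have h1 := mul_nonneg (hnn 0) (neg_nonneg.2 (hp 0))
    have h2 := mul_nonneg (hnn 1) (neg_nonneg.2 (hp 1))
    have h3 := hnn 0
    have h4 := hnn 1
    simp only [Pi.neg_apply, ht] at this hβ
    nlinarith
  · exact hne (inc_injective (by rw [h, map_zero]))

/-- An element killed by all skew derivations is a scalar. -/
lemma GK {q sq : ℂ} [hq : QGen q] (hs : Fact (sq ^ 2 = q)) (u : A q) (hd : ∀ i, der true i u = 0) :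
    ∃ c : ℂ, u = c • 1 := by
  obtain ⟨c, hc⟩ := cmpt_zero_scalar u
  refine ⟨c, ?_⟩
  rw [← hc, ← sub_eq_zero]
  apply eq_zero_of_cmpt
  intro γ
  rw [map_sub, cmpt_cmpt]
  split_ifs with h
  · rw [h, sub_self]
  · rw [sub_zero]
    by_cases h3 : ht γ ≤ 0
    · obtain ⟨i, hi⟩ := exists_neg h3 h
      exact cmpt_nonneg hi _
    · push Not at h3
      refine GKhom hs (ht γ - 1).toNat γ (by omega) _ (by rw [cmpt_cmpt, if_pos rfl]) ?_
      intro i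
      have h5 := cmpt_der true i (γ - rt i) u
      rw [sub_add_cancel, hd i, map_zero] at h5
      exact h5.symm


end TQAEmb

namespace TQAEmb

open TQA

set_option linter.unusedSectionVars false

/-! ### The shifted algebra in explicit form -/

section shifted
variable {q sq : ℂ} [hq : QGen q] [hs : Fact (sq ^ 2 = q)]

variable (q sq) in
/-- The Cartan datum of type `A₂⁽²⁾`. -/
abbrev DD : TQAData := A22 q sq hq.ne0 hq.root hs.out

lemma DD_zeta : (DD q sq).ζ = -1 := by
  have : (DD q sq).ζ = Complex.exp (2 * Real.pi * Complex.I / ((2 : ℕ) : ℂ)) := rfl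
  rw [this, ← Complex.exp_pi_mul_I]
  congr 1
  push_cast
  ring

variable (sq) in
/-- `δ = q₁ - q₁⁻¹`. -/
def dl : ℂ := sq - sq⁻¹

lemma sq_ne (q : ℂ) {sq : ℂ} [hq : QGen q] [hs : Fact (sq ^ 2 = q)] : sq ≠ 0 := by
  rintro rfl
  exact hq.ne0 (by rw [← hs.out]; simp)

lemma dl_ne (q : ℂ) {sq : ℂ} [hq : QGen q] [hs : Fact (sq ^ 2 = q)] : dl sq ≠ 0 := by
  have h := sq_ne q (sq := sq)
  intro h1
  have h2 : sq = sq⁻¹ := sub_eq_zero.1 h1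
  have h3 : sq * sq = 1 := by
    nth_rw 2 [h2]
    exact mul_inv_cancel₀ h
  exact hq.root 1 one_pos (by rw [pow_one, ← hs.out, pow_two, h3])

lemma DD_qd : (DD q sq).qd () = dl sq := rfl

lemma DD_hx (m : ℤ) : (DD q sq).hxCoef () () m =
    (m : ℂ)⁻¹ * (dl sq)⁻¹ * ((q ^ (2 * m) - q ^ (-(2 * m))) - (-1) ^ m * (q ^ m - q ^ (-m))) := by
  have : (DD q sq).hxCoef () () m = (m : ℂ)⁻¹ * ∑ s ∈ Finset.range 2,
    ((q ^ (m * (if s = 0 then -1 else 2)) - q ^ (-(m * (if s = 0 then -1 else 2)))) / dl sq) *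
      (DD q sq).ζ ^ (m * ((s : ℤ) + 1)) := rfl
  rw [this, DD_zeta, Finset.sum_range_succ, Finset.sum_range_one]
  have h1 : ((-1 : ℂ)) ^ (m * (((0 : ℕ) : ℤ) + 1)) = (-1) ^ m := by norm_num
  have h2 : ((-1 : ℂ)) ^ (m * (((1 : ℕ) : ℤ) + 1)) = 1 := by
    rw [zpow_mul']; norm_num
  rw [h1, h2]
  simp only [if_true, if_neg one_ne_zero, mul_neg, mul_one, neg_neg, mul_comm m 2]
  ring

variable {R : Type*} [Ring R] [Algebra ℂ R]

/-- The quadratic relation polynomial, applied to a sequence of operators. -/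
def XX (t : ℂ) (X : ℤ → R) (r s : ℤ) : R :=
  X (r + 2) * X s + (t⁻¹ - t ^ 2) • (X (r + 1) * X (s + 1)) - t • (X r * X (s + 2))

lemma univ_fin2 : (Finset.univ : Finset (Finset (Fin 2))) = {∅, {0}, {1}, {0, 1}} := by decide

lemma qsg (ε : Bool) : q ^ (sg ε * 2) = (q ^ sg ε) ^ 2 ∧ q ^ (sg ε * -1) = (q ^ sg ε)⁻¹ := by
  constructor
  · rw [zpow_mul]; norm_cast
  · rw [zpow_mul]; simp

lemma xx_lhs (ε : Bool) (X : ℤ → R) (r r' : ℤ) :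
    (∑ K : Finset (Fin (DD q sq).M),
            ((-1 : ℂ) ^ K.card *
                ∏ s ∈ K, ((DD q sq).ζ ^ ((s : ℕ) + 1) * (DD q sq).q ^ (sg ε * (DD q sq).Cs () () (s : ℕ)))) •
              (X (r + ((DD q sq).M : ℤ) - (K.card : ℤ)) * X (r' + (K.card : ℤ)))) =
      XX (q ^ sg ε) X r r' := by
  change (∑ K : Finset (Fin 2),
            ((-1 : ℂ) ^ K.card *
                ∏ s ∈ K, ((DD q sq).ζ ^ ((s : ℕ) + 1) * q ^ (sg ε * (if (s : ℕ) = 0 then -1 else 2)))) •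
              (X (r + 2 - (K.card : ℤ)) * X (r' + (K.card : ℤ)))) = _
  rw [univ_fin2, DD_zeta]
  obtain ⟨h1, h2⟩ := qsg (q := q) ε
  have h0 : q ^ sg ε ≠ 0 := zpow_ne_zero _ hq.ne0
  rw [Finset.sum_insert (by decide), Finset.sum_insert (by decide), Finset.sum_insert (by decide),
    Finset.sum_singleton]
  have h3 : r + 2 - 1 = r + 1 := by ring
  simp [h1, h2, XX, h3]
  generalize q ^ sg ε = p at *
  match_scalars <;> field_simp <;> ring

lemma xx_rhs (ε : Bool) (X : ℤ → R) (r r' : ℤ) :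
    (∑ K : Finset (Fin (DD q sq).M),
            ((-1 : ℂ) ^ K.card * (∏ s ∈ K, (DD q sq).ζ ^ ((s : ℕ) + 1)) *
                ∏ s ∈ Kᶜ, (DD q sq).q ^ (sg ε * (DD q sq).Cs () () (s : ℕ))) •
              (X (r' + (K.card : ℤ)) * X (r + ((DD q sq).M : ℤ) - (K.card : ℤ)))) =
      -XX (q ^ sg ε) X r' r := by
  change (∑ K : Finset (Fin 2),
            ((-1 : ℂ) ^ K.card * (∏ s ∈ K, (DD q sq).ζ ^ ((s : ℕ) + 1)) *
                ∏ s ∈ Kᶜ, q ^ (sg ε * (if (s : ℕ) = 0 then -1 else 2))) •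
              (X (r' + (K.card : ℤ)) * X (r + 2 - (K.card : ℤ)))) = _
  rw [univ_fin2, DD_zeta]
  obtain ⟨h1, h2⟩ := qsg (q := q) ε
  have h0 : q ^ sg ε ≠ 0 := zpow_ne_zero _ hq.ne0
  rw [Finset.sum_insert (by decide), Finset.sum_insert (by decide), Finset.sum_insert (by decide),
    Finset.sum_singleton]
  have h3 : r + 2 - 1 = r + 1 := by ring
  have c0 : (∅ : Finset (Fin 2))ᶜ = {0, 1} := by decide
  have c1 : ({0} : Finset (Fin 2))ᶜ = {1} := by decide
  have c2 : ({1} : Finset (Fin 2))ᶜ = {0} := by decide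
  have c3 : ({0, 1} : Finset (Fin 2))ᶜ = ∅ := by decide
  rw [c0, c1, c2, c3]
  simp [h1, h2, XX, h3]
  generalize q ^ sg ε = p at *
  match_scalars <;> field_simp <;> ring

/-- The cubic Serre expression with shift `d`. -/
def SS (s : ℂ) (d : ℤ) (X : ℤ → R) (a b c : ℤ) : R :=
  s ^ 3 • (X (a + d) * X b * X c) - (s + s⁻¹) • (X a * X (b + d) * X c)
    + (s ^ 3)⁻¹ • (X a * X b * X (c + d))

lemma univ_perm3 : (Finset.univ : Finset (Equiv.Perm (Fin 3))) =
    {1, Equiv.swap 0 1, Equiv.swap 0 2, Equiv.swap 1 2, Equiv.swap 0 1 * Equiv.swap 1 2,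
      Equiv.swap 1 2 * Equiv.swap 0 1} := by decide

lemma sum_perm3 {M : Type*} [AddCommMonoid M] (F : Fin 3 → Fin 3 → Fin 3 → M) :
    ∑ π : Equiv.Perm (Fin 3), F (π 0) (π 1) (π 2) =
      F 0 1 2 + F 1 0 2 + F 2 1 0 + F 0 2 1 + F 1 2 0 + F 2 0 1 := by
  rw [univ_perm3]
  rw [Finset.sum_insert (by decide), Finset.sum_insert (by decide), Finset.sum_insert (by decide),
    Finset.sum_insert (by decide), Finset.sum_insert (by decide), Finset.sum_singleton]
  have h (π : Equiv.Perm (Fin 3)) (a b c : Fin 3) (h0 : π 0 = a) (h1 : π 1 = b) (h2 : π 2 = c) :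
      F (π 0) (π 1) (π 2) = F a b c := by rw [h0, h1, h2]
  rw [h 1 0 1 2 rfl rfl rfl, h (Equiv.swap 0 1) 1 0 2 (by decide) (by decide) (by decide),
    h (Equiv.swap 0 2) 2 1 0 (by decide) (by decide) (by decide),
    h (Equiv.swap 1 2) 0 2 1 (by decide) (by decide) (by decide),
    h (Equiv.swap 0 1 * Equiv.swap 1 2) 1 2 0 (by decide) (by decide) (by decide),
    h (Equiv.swap 1 2 * Equiv.swap 0 1) 2 0 1 (by decide) (by decide) (by decide)]
  abel

/-- The symmetrisation of a function of three indices. -/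
def sym3 (F : ℤ → ℤ → ℤ → R) (a b c : ℤ) : R :=
  F a b c + F b a c + F c b a + F a c b + F b c a + F c a b

variable (q sq) in
/-- The shifted algebra with `α₁(μ) = -n`, as a type synonym. -/
def UU (n : ℤ) : Type := U (DD q sq) 0 (fun _ => -n)

instance (n : ℤ) : Ring (UU q sq n) :=
  inferInstanceAs (Ring (RingQuot (Rel (DD q sq) 0 (fun _ => -n))))
instance (n : ℤ) : Algebra ℂ (UU q sq n) :=
  inferInstanceAs (Algebra ℂ (RingQuot (Rel (DD q sq) 0 (fun _ => -n))))

variable (q sq) in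
/-- The projection from the free algebra. -/
def Umk (n : ℤ) : FA (DD q sq) →ₐ[ℂ] UU q sq n := mkU (DD q sq) 0 (fun _ => -n)

lemma Umk_rel {n : ℤ} {a b : FA (DD q sq)} (h : Rel (DD q sq) 0 (fun _ => -n) a b) :
    Umk q sq n a = Umk q sq n b := RingQuot.mkAlgHom_rel ℂ h

lemma Umk_surjective (n : ℤ) : Function.Surjective (Umk q sq n) :=
  RingQuot.mkAlgHom_surjective ℂ (Rel (DD q sq) 0 (fun _ => -n))

variable (q sq) in
/-- The generator `x^±_r`, with `ε = true` for the sign `+`. -/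
def X (n : ℤ) (ε : Bool) (r : ℤ) : UU q sq n := Umk q sq n (gX (DD q sq) ε () r)
variable (q sq) in
/-- The generator `φ⁺_r`. -/
def PP (n : ℤ) (r : ℤ) : UU q sq n := Umk q sq n (gPp (DD q sq) () r)
variable (q sq) in
/-- The generator `φ⁻_r`. -/
def PM (n : ℤ) (r : ℤ) : UU q sq n := Umk q sq n (gPm (DD q sq) () r)
variable (q sq) in
/-- The generator `h_r`. -/
def HH (n : ℤ) (r : ℤ) : UU q sq n := Umk q sq n (gH (DD q sq) () r)

variable (q sq) in
/-- The leading coefficient of `φ⁺`. -/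
def KK (n : ℤ) : (UU q sq n)ˣ where
  val := PP q sq n 0
  inv := Umk q sq n (gPpInv (DD q sq) ())
  val_inv := by
    have := Umk_rel (q := q) (sq := sq) (n := n) (Rel.pp_inv_r ())
    rwa [map_mul, map_one] at this
  inv_val := by
    have := Umk_rel (q := q) (sq := sq) (n := n) (Rel.pp_inv_l ())
    rwa [map_mul, map_one] at this

variable (q sq) in
/-- The leading coefficient of `φ⁻`. -/
def LL (n : ℤ) : (UU q sq n)ˣ where
  val := PM q sq n (-n)
  inv := Umk q sq n (gPmInv (DD q sq) ())
  val_inv := by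
    have := Umk_rel (q := q) (sq := sq) (n := n) (Rel.pm_inv_r ())
    rwa [map_mul, map_one] at this
  inv_val := by
    have := Umk_rel (q := q) (sq := sq) (n := n) (Rel.pm_inv_l ())
    rwa [map_mul, map_one] at this

variable {n : ℤ}

lemma U_PP_neg {r : ℤ} (hr : r < 0) : PP q sq n r = 0 := by
  have := Umk_rel (q := q) (sq := sq) (n := n) (Rel.pp_supp () r hr)
  rwa [map_zero] at this

lemma U_PM_pos {r : ℤ} (hr : -n < r) : PM q sq n r = 0 := by
  have := Umk_rel (q := q) (sq := sq) (n := n) (Rel.pm_supp () r (by simpa using hr))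
  rwa [map_zero] at this

lemma U_KL : (KK q sq n : UU q sq n) * LL q sq n = LL q sq n * KK q sq n := by
  have := Umk_rel (q := q) (sq := sq) (n := n)
    (Rel.cartan_comm (TQAGen.pp () 0) (TQAGen.pm () (-n)) trivial trivial)
  rwa [map_mul, map_mul] at this

lemma U_KH (m : ℤ) : (KK q sq n : UU q sq n) * HH q sq n m = HH q sq n m * KK q sq n := by
  have := Umk_rel (q := q) (sq := sq) (n := n)
    (Rel.cartan_comm (TQAGen.pp () 0) (TQAGen.hh () m) trivial trivial)
  rwa [map_mul, map_mul] at this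

lemma U_KX (ε : Bool) (r : ℤ) :
    (KK q sq n : UU q sq n) * X q sq n ε r = q ^ sg ε • (X q sq n ε r * KK q sq n) := by
  have := Umk_rel (q := q) (sq := sq) (n := n) (Rel.lead_conj_p ε () () r)
  rw [map_smul, map_mul, map_mul] at this
  have h : (∑ s ∈ Finset.range (DD q sq).M, (DD q sq).Cs () () s) = 1 := rfl
  rw [h, mul_one] at this
  exact this

lemma U_LX (ε : Bool) (r : ℤ) :
    (LL q sq n : UU q sq n) * X q sq n ε r = q ^ (-sg ε) • (X q sq n ε r * LL q sq n) := by
  have := Umk_rel (q := q) (sq := sq) (n := n) (Rel.lead_conj_m ε () () r)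
  rw [map_smul, map_mul, map_mul] at this
  have h : (∑ s ∈ Finset.range (DD q sq).M, (DD q sq).Cs () () s) = 1 := rfl
  rw [h, mul_one] at this
  exact this

lemma U_HX (ε : Bool) {m : ℤ} (hm : m ≠ 0) (r : ℤ) :
    HH q sq n m * X q sq n ε r - X q sq n ε r * HH q sq n m =
      (((sg ε : ℤ) : ℂ) * (DD q sq).hxCoef () () m) • X q sq n ε (m + r) := by
  have := Umk_rel (q := q) (sq := sq) (n := n) (Rel.h_x ε () () m r hm)
  rw [map_smul, map_sub, map_mul, map_mul] at this
  exact this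

lemma U_xy (r s : ℤ) : X q sq n true r * X q sq n false s - X q sq n false s * X q sq n true r =
    (dl sq)⁻¹ • (PP q sq n (r + s) - PM q sq n (r + s)) := by
  have := Umk_rel (q := q) (sq := sq) (n := n) (Rel.xp_xm () () r s)
  rw [if_pos ⟨rfl, by change ((1 : ℕ) : ℤ) ∣ s; simp⟩, map_smul, map_sub, map_sub, map_mul,
    map_mul] at this
  exact this

lemma U_PP_one : PP q sq n 1 = dl sq • (HH q sq n 1 * PP q sq n 0) := by
  have := Umk_rel (q := q) (sq := sq) (n := n) (Rel.pp_exp () 0)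
  simp at this
  exact this

lemma U_PM_one : PM q sq n (-n - 1) = -(dl sq • (HH q sq n (-1) * PM q sq n (-n))) := by
  have := Umk_rel (q := q) (sq := sq) (n := n) (Rel.pm_exp () 0)
  simp only [Nat.cast_zero, zero_add, Finset.sum_range_one, one_smul, neg_smul, map_neg,
    map_smul, map_mul, sub_add_cancel] at this
  rw [neg_eq_iff_eq_neg] at this
  exact this

lemma serre2_eq (θ : FA (DD q sq) →ₐ[ℂ] R) (ε : Bool) (m : Fin 3 → ℤ) :
    θ (∑ π : Equiv.Perm (Fin 3),
            (((DD q sq).sq ^ (3 : ℕ)) •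
                (gX (DD q sq) ε () (m (π 0) - sg ε) * gX (DD q sq) ε () (m (π 1)) * gX (DD q sq) ε () (m (π 2)))
              - ((DD q sq).sq + (DD q sq).sq⁻¹) •
                (gX (DD q sq) ε () (m (π 0)) * gX (DD q sq) ε () (m (π 1) - sg ε) * gX (DD q sq) ε () (m (π 2)))
              + ((DD q sq).sq ^ (3 : ℕ))⁻¹ •
                (gX (DD q sq) ε () (m (π 0)) * gX (DD q sq) ε () (m (π 1)) * gX (DD q sq) ε () (m (π 2) - sg ε)))) =
      sym3 (SS sq (-sg ε) (fun r => θ (gX (DD q sq) ε () r))) (m 0) (m 1) (m 2) := by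
  rw [map_sum]
  simp only [map_add, map_sub, map_smul, map_mul]
  exact sum_perm3 (fun a b c => SS sq (-sg ε) (fun r => θ (gX (DD q sq) ε () r)) (m a) (m b) (m c))

lemma serre3_eq (θ : FA (DD q sq) →ₐ[ℂ] R) (ε : Bool) (m : Fin 3 → ℤ) :
    θ (∑ π : Equiv.Perm (Fin 3),
            ((((DD q sq).sq ^ (3 : ℕ))⁻¹) •
                (gX (DD q sq) ε () (m (π 0) + sg ε) * gX (DD q sq) ε () (m (π 1)) * gX (DD q sq) ε () (m (π 2)))
              - ((DD q sq).sq + (DD q sq).sq⁻¹) •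
                (gX (DD q sq) ε () (m (π 0)) * gX (DD q sq) ε () (m (π 1) + sg ε) * gX (DD q sq) ε () (m (π 2)))
              + ((DD q sq).sq ^ (3 : ℕ)) •
                (gX (DD q sq) ε () (m (π 0)) * gX (DD q sq) ε () (m (π 1)) * gX (DD q sq) ε () (m (π 2) + sg ε)))) =
      sym3 (SS sq⁻¹ (sg ε) (fun r => θ (gX (DD q sq) ε () r))) (m 0) (m 1) (m 2) := by
  rw [map_sum]
  simp only [map_add, map_sub, map_smul, map_mul]
  refine Eq.trans ?_
    (sum_perm3 (fun a b c => SS sq⁻¹ (sg ε) (fun r => θ (gX (DD q sq) ε () r)) (m a) (m b) (m c)))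
  refine Finset.sum_congr rfl fun π _ => ?_
  rw [SS]
  simp only [inv_inv, inv_pow, add_comm sq⁻¹]
  rfl

lemma U_serre2 (ε : Bool) (a b c : ℤ) : sym3 (SS sq (-sg ε) (X q sq n ε)) a b c = 0 := by
  have := Umk_rel (q := q) (sq := sq) (n := n) (Rel.serre2 ε () rfl ![a, b, c])
  rw [serre2_eq, map_zero] at this
  exact this

lemma U_serre3 (ε : Bool) (a b c : ℤ) : sym3 (SS sq⁻¹ (sg ε) (X q sq n ε)) a b c = 0 := by
  have := Umk_rel (q := q) (sq := sq) (n := n) (Rel.serre3 ε () rfl ![a, b, c])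
  rw [serre3_eq, map_zero] at this
  exact this

end shifted

end TQAEmb

namespace TQAEmb

open TQA

set_option linter.unusedSectionVars false

/-! ### The homomorphism from the Borel algebra -/

section hom
variable {q sq : ℂ} [hq : QGen q] [hs : Fact (sq ^ 2 = q)] {n : ℤ}

local notation "x" => X q sq n true
local notation "y" => X q sq n false
local notation "K" => (KK q sq n : UU q sq n)
local notation "Ki" => (((KK q sq n)⁻¹ : (UU q sq n)ˣ) : UU q sq n)
local notation "L" => (LL q sq n : UU q sq n)

lemma Kx (r : ℤ) : K * x r = q • (x r * K) := by rw [U_KX]; simp [sg]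
lemma Ky (r : ℤ) : K * y r = q⁻¹ • (y r * K) := by rw [U_KX]; simp [sg]
lemma Lx (r : ℤ) : L * x r = q⁻¹ • (x r * L) := by rw [U_LX]; simp [sg]
lemma Ly (r : ℤ) : L * y r = q • (y r * L) := by rw [U_LX]; simp [sg]

lemma unit_conj {R : Type*} [Ring R] [Algebra ℂ R] (k : Rˣ) (a : R) (c : ℂ) (hc : c ≠ 0)
    (h : (k : R) * a = c • (a * k)) : ((k⁻¹ : Rˣ) : R) * a = c⁻¹ • (a * ((k⁻¹ : Rˣ) : R)) := by
  rw [Units.inv_mul_eq_iff_eq_mul, mul_smul_comm, ← mul_assoc, h, smul_mul_assoc, smul_smul,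
    inv_mul_cancel₀ hc, one_smul, Units.mul_inv_cancel_right]

lemma Kix (r : ℤ) : Ki * x r = q⁻¹ • (x r * Ki) := unit_conj _ _ _ hq.ne0 (Kx r)
lemma Kiy (r : ℤ) : Ki * y r = q • (y r * Ki) := by
  have := unit_conj _ _ _ (inv_ne_zero hq.ne0) (Ky (q := q) (sq := sq) (n := n) r)
  rwa [inv_inv] at this

variable (q sq n) in
/-- The element `y₀y₁ - q y₁y₀`. -/
def ZZ : UU q sq n := y 0 * y 1 - q • (y 1 * y 0)

lemma KZ : K * ZZ q sq n = (q ^ 2)⁻¹ • (ZZ q sq n * K) := by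
  rw [ZZ, mul_sub, mul_smul_comm, ← mul_assoc, ← mul_assoc, Ky, Ky, smul_mul_assoc, mul_assoc, Ky,
    smul_mul_assoc, mul_assoc, Ky]
  simp only [mul_smul_comm, sub_mul, smul_mul_assoc, mul_assoc]
  match_scalars <;> field_simp

lemma KiZ : Ki * ZZ q sq n = q ^ 2 • (ZZ q sq n * Ki) := by
  have := unit_conj _ _ _ (inv_ne_zero (pow_ne_zero 2 hq.ne0)) (KZ (q := q) (sq := sq) (n := n))
  rwa [inv_inv] at this

lemma LZ : L * ZZ q sq n = q ^ 2 • (ZZ q sq n * L) := by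
  rw [ZZ, mul_sub, mul_smul_comm, ← mul_assoc, ← mul_assoc, Ly, Ly, smul_mul_assoc, mul_assoc, Ly,
    smul_mul_assoc, mul_assoc, Ly]
  simp only [mul_smul_comm, sub_mul, smul_mul_assoc, mul_assoc]
  match_scalars <;> ring

variable (q sq) in
/-- The structure constant `(q² - q⁻²)/δ`. -/
def eta : ℂ := (q ^ 2 - (q ^ 2)⁻¹) / dl sq

lemma c_one : (DD q sq).hxCoef () () 1 = (q ^ 2 - (q ^ 2)⁻¹ + q - q⁻¹) / dl sq := by
  rw [DD_hx]
  have : q ^ (2 : ℤ) = q ^ 2 := by norm_cast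
  simp [zpow_neg, this]
  ring

lemma c_neg_one : (DD q sq).hxCoef () () (-1) = (q ^ 2 - (q ^ 2)⁻¹ + q - q⁻¹) / dl sq := by
  rw [DD_hx]
  have : q ^ (2 : ℤ) = q ^ 2 := by norm_cast
  simp [zpow_neg, this]
  ring

lemma x0y1 (hn : 0 ≤ n) : x 0 * y 1 - y 1 * x 0 = HH q sq n 1 * K := by
  rw [U_xy, zero_add, U_PM_pos (by omega), sub_zero, U_PP_one, smul_smul,
    inv_mul_cancel₀ (dl_ne q), one_smul]; rfl

lemma x0y0 : x 0 * y 0 - y 0 * x 0 = (dl sq)⁻¹ • (K - PM q sq n 0) := by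
  rw [U_xy, zero_add]; rfl

lemma PM0y (hn : 0 ≤ n) (r : ℤ) : PM q sq n 0 * y r = q • (y r * PM q sq n 0) := by
  rcases hn.lt_or_eq with h | h
  · rw [U_PM_pos (by omega)]; simp
  · subst h; exact Ly r

lemma H1y0 : HH q sq n 1 * y 0 = y 0 * HH q sq n 1 -
    ((q ^ 2 - (q ^ 2)⁻¹ + q - q⁻¹) / dl sq) • y 1 := by
  have := U_HX (q := q) (sq := sq) (n := n) false one_ne_zero 0
  rw [c_one, sub_eq_iff_eq_add] at this
  rw [this]
  simp [sg]
  abel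

lemma xZ (hn : 0 ≤ n) : x 0 * ZZ q sq n - ZZ q sq n * x 0 = eta q sq • (y 1 * K) := by
  have h1 := x0y1 (q := q) (sq := sq) hn
  have h2 := x0y0 (q := q) (sq := sq) (n := n)
  have key : x 0 * ZZ q sq n - ZZ q sq n * x 0 =
      (x 0 * y 0 - y 0 * x 0) * y 1 + y 0 * (x 0 * y 1 - y 1 * x 0) -
        q • ((x 0 * y 1 - y 1 * x 0) * y 0 + y 1 * (x 0 * y 0 - y 0 * x 0)) := by
    simp only [ZZ, mul_sub, sub_mul, mul_smul_comm, smul_mul_assoc, mul_assoc]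
    module
  rw [key, h1, h2, eta]
  simp only [mul_smul_comm, smul_mul_assoc, sub_mul, mul_sub, mul_assoc, Ky, PM0y hn]
  rw [← mul_assoc _ (y 0), H1y0]
  simp only [mul_smul_comm, smul_mul_assoc, sub_mul, mul_sub, mul_assoc]
  have h0 := hq.ne0
  have hd := dl_ne q (sq := sq)
  match_scalars <;> field_simp <;> ring

lemma sym_eq {R : Type*} [Ring R] [Algebra ℂ R] (F : ℤ → ℤ → ℤ → R) (a : ℤ)
    (h : sym3 F a a a = 0) : F a a a = 0 := by
  have : (6 : ℂ) • F a a a = 0 := by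
    rw [← h, sym3]; module
  exact (smul_eq_zero.1 this).resolve_left (by norm_num)

lemma Zy1 : ZZ q sq n * y 1 = q ^ 2 • (y 1 * ZZ q sq n) := by
  have h := sym_eq _ _ (U_serre3 (q := q) (sq := sq) (n := n) false 1 1 1)
  have hs0 := sq_ne q (sq := sq)
  simp only [SS, sg, Bool.false_eq_true, if_false, show (1 : ℤ) + -1 = 0 by norm_num] at h
  have h2 : (sq ^ 3) • (0 : UU q sq n) = 0 := smul_zero _
  rw [← sub_eq_zero, ← h2, ← h]
  simp only [ZZ, mul_sub, sub_mul, smul_sub, smul_add, smul_smul, mul_smul_comm, smul_mul_assoc,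
    mul_assoc, ← hs.out]
  match_scalars <;> field_simp <;> ring

lemma y0Z : y 0 * ZZ q sq n = q ^ 2 • (ZZ q sq n * y 0) := by
  have h := sym_eq _ _ (U_serre2 (q := q) (sq := sq) (n := n) false 0 0 0)
  have hs0 := sq_ne q (sq := sq)
  simp only [SS, sg, Bool.false_eq_true, if_false, neg_neg, zero_add] at h
  have h2 : (sq ^ 3) • (0 : UU q sq n) = 0 := smul_zero _
  rw [← sub_eq_zero, ← h2, ← h]
  simp only [ZZ, mul_sub, sub_mul, smul_sub, smul_add, smul_smul, mul_smul_comm, smul_mul_assoc,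
    mul_assoc, ← hs.out]
  match_scalars <;> field_simp <;> ring

variable (q sq n) in
/-- The images of the Chevalley generators. -/
def EE : Fin 2 → UU q sq n := ![ZZ q sq n * Ki * Ki, x 0]

variable (q sq n) in
/-- The images of the torus generators. -/
def kk : Fin 2 → (UU q sq n)ˣ := ![(KK q sq n)⁻¹ * LL q sq n, KK q sq n]

lemma EE_zero : EE q sq n 0 = ZZ q sq n * Ki * Ki := rfl
lemma EE_one : EE q sq n 1 = x 0 := rfl

lemma kk_comm (i j : Fin 2) : kk q sq n i * kk q sq n j = kk q sq n j * kk q sq n i := by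
  have h : Commute (KK q sq n) (LL q sq n) := Units.ext U_KL
  fin_cases i <;> fin_cases j <;> simp [kk]
  · rw [mul_assoc, ← h.eq]; simp
  · rw [mul_assoc, ← h.eq]; simp

lemma kE (i j : Fin 2) :
    (kk q sq n i : UU q sq n) * EE q sq n j = q ^ bil i j • (EE q sq n j * kk q sq n i) := by
  have h0 := hq.ne0
  have hKL : Commute (KK q sq n) (LL q sq n) := Units.ext U_KL
  have hLK : L * Ki = Ki * L := by
    rw [← Units.val_mul, ← Units.val_mul, hKL.symm.inv_right.eq]
  have e2 : q ^ (-2 : ℤ) = (q ^ 2)⁻¹ := by rw [zpow_neg]; norm_cast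
  have e4 : q ^ (4 : ℤ) = q ^ 4 := by norm_cast
  fin_cases i <;> fin_cases j <;>
    simp only [kk, EE, bil, Fin.zero_eta, Fin.mk_one, Matrix.cons_val_zero, Matrix.cons_val_one,
      Units.val_mul, e2, e4, zpow_one, mul_assoc]
  · rw [← mul_assoc L, LZ, smul_mul_assoc, mul_smul_comm, mul_assoc, ← mul_assoc Ki, KiZ]
    rw [← mul_assoc L, hLK, mul_assoc Ki L, hLK]
    simp only [smul_mul_assoc, mul_assoc]
    match_scalars; ring
  · rw [Lx, mul_smul_comm, ← mul_assoc, Kix]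
    simp only [smul_mul_assoc, mul_assoc]
    match_scalars; field_simp
  · rw [← mul_assoc, KZ, smul_mul_assoc, mul_assoc, Units.mul_inv_cancel_left, Units.inv_mul,
      mul_one]
  · exact Kx 0

lemma serreE0 (hn : 0 ≤ n) : adc q 4 (EE q sq n 0) (EE q sq n 1) 2 = 0 := by
  have h0 := hq.ne0
  have e1 : q ^ (-2 : ℤ) = (q ^ 2)⁻¹ := by rw [zpow_neg]; norm_cast
  have e2 : q ^ (2 : ℤ) = q ^ 2 := by norm_cast
  have step : adc q 4 (EE q sq n 0) (EE q sq n 1) 1 = (-(q ^ 2)⁻¹ * eta q sq) • (y 1 * Ki) := by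
    simp only [adc, Nat.cast_zero, mul_zero, zero_sub, e1, EE, Matrix.cons_val_zero,
      Matrix.cons_val_one]
    have h1 : y 1 * Ki = y 1 * K * Ki * Ki := by simp [mul_assoc]
    have h2 : (-(q ^ 2)⁻¹ * eta q sq) • (y 1 * Ki) =
        (-(q ^ 2)⁻¹) • ((eta q sq • (y 1 * K)) * Ki * Ki) := by
      rw [h1, smul_mul_assoc, smul_mul_assoc, smul_smul]
    rw [h2, ← xZ hn]
    simp only [mul_assoc, Kix, mul_smul_comm, smul_mul_assoc, sub_mul, smul_sub]
    rw [← mul_assoc Ki (x 0), Kix]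
    simp only [mul_assoc, mul_smul_comm, smul_mul_assoc]
    match_scalars <;> field_simp
  rw [adc_succ, step]
  simp only [Nat.cast_one, mul_one, show (4 : ℤ) - 2 = 2 by norm_num, e2, EE, Matrix.cons_val_zero]
  have h1 : ZZ q sq n * Ki * Ki * (y 1 * Ki) = q ^ 2 • (ZZ q sq n * y 1 * (Ki * Ki * Ki)) := by
    rw [mul_assoc, mul_assoc, ← mul_assoc Ki (y 1), Kiy]
    simp only [mul_smul_comm, smul_mul_assoc]
    rw [mul_assoc (y 1), ← mul_assoc Ki (y 1), Kiy]
    simp only [mul_smul_comm, smul_mul_assoc, mul_assoc, smul_smul]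
    rw [pow_two]
  have h2 : y 1 * Ki * (ZZ q sq n * Ki * Ki) = q ^ 2 • (y 1 * ZZ q sq n * (Ki * Ki * Ki)) := by
    rw [mul_assoc, ← mul_assoc Ki, ← mul_assoc Ki, KiZ]
    simp only [mul_smul_comm, smul_mul_assoc, mul_assoc]
  rw [mul_smul_comm, smul_mul_assoc, h1, h2, Zy1, smul_mul_assoc]
  module

lemma serreE1 (hn : 0 ≤ n) : adc q 1 (EE q sq n 1) (EE q sq n 0) 5 = 0 := by
  have h0 := hq.ne0
  rw [show adc q 1 (EE q sq n 1) (EE q sq n 0) 5 = adc q⁻¹ 1 (EE q sq n 1) (EE q sq n 0) 5 from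
    (adc_inv q h0 1 _ _).symm]
  have e2 : q⁻¹ ^ (-2 : ℤ) = q ^ 2 := by rw [zpow_neg, inv_zpow, inv_inv]; norm_cast
  have e1 : q⁻¹ ^ (-1 : ℤ) = q := by simp
  have e2' : q⁻¹ ^ (2 : ℤ) = (q ^ 2)⁻¹ := by rw [inv_zpow]; norm_cast
  have s1 : adc q⁻¹ 1 (EE q sq n 1) (EE q sq n 0) 1 = eta q sq • (y 1 * Ki) := by
    rw [adc_succ]
    simp only [adc, Nat.cast_zero, mul_zero, zero_sub, e2, EE, Matrix.cons_val_zero,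
      Matrix.cons_val_one]
    have h1 : y 1 * Ki = y 1 * K * Ki * Ki := by simp [mul_assoc]
    have h2 : eta q sq • (y 1 * Ki) = (eta q sq • (y 1 * K)) * Ki * Ki := by
      rw [h1, smul_mul_assoc, smul_mul_assoc]
    rw [h2, ← xZ hn]
    simp only [mul_assoc, Kix, mul_smul_comm, sub_mul]
    rw [← mul_assoc Ki (x 0), Kix]
    simp only [mul_assoc, mul_smul_comm, smul_mul_assoc]
    match_scalars <;> field_simp
  have s2 : adc q⁻¹ 1 (EE q sq n 1) (EE q sq n 0) 2 = eta q sq • HH q sq n 1 := by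
    rw [adc_succ, s1]
    have h1 : HH q sq n 1 = HH q sq n 1 * K * Ki := by simp [mul_assoc]
    rw [h1, ← x0y1 hn]
    simp only [Nat.cast_one, mul_one, show (1 : ℤ) - 2 = -1 by norm_num, e1, EE_one, smul_mul_assoc, mul_smul_comm, mul_assoc, Kix, sub_mul, smul_smul]
    match_scalars <;> field_simp
  have s3 : adc q⁻¹ 1 (EE q sq n 1) (EE q sq n 0) 3 =
      (-eta q sq * ((q ^ 2 - (q ^ 2)⁻¹ + q - q⁻¹) / dl sq)) • x 1 := by
    rw [adc_succ, s2]
    have := U_HX (q := q) (sq := sq) (n := n) true one_ne_zero 0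
    simp only [c_one, sg, if_true, Int.cast_one, one_mul, add_zero] at this
    rw [mul_smul, ← this]
    simp only [Nat.cast_ofNat, mul_one, show (1 : ℤ) * 2 - 2 = 0 by norm_num, zpow_zero, EE_one, smul_mul_assoc, mul_smul_comm]
    module
  have h := sym_eq _ _ (U_serre3 (q := q) (sq := sq) (n := n) true 0 0 0)
  have hs0 := sq_ne q (sq := sq)
  simp only [SS, sg, if_true, zero_add] at h
  rw [adc_succ, adc_succ, s3]
  set c := (-eta q sq * ((q ^ 2 - (q ^ 2)⁻¹ + q - q⁻¹) / dl sq))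
  have h2 : (c * (sq ^ 3)⁻¹) • (0 : UU q sq n) = 0 := smul_zero _
  rw [← h2, ← h]
  simp only [Nat.cast_ofNat, show (1 : ℤ) * 3 - 2 = 1 by norm_num,
    show (1 : ℤ) * 4 - 2 = 2 by norm_num, e2', EE_one, zpow_one, mul_sub, sub_mul,
    smul_sub, smul_add, smul_smul, mul_smul_comm, smul_mul_assoc, mul_assoc, ← hs.out]
  match_scalars <;> field_simp <;> ring

lemma serreE (hn : 0 ≤ n) (i j : Fin 2) (h : i ≠ j) :
    adc q (bil i i) (EE q sq n i) (EE q sq n j) (Ns i) = 0 := by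
  fin_cases i <;> fin_cases j
  · exact absurd rfl h
  · exact serreE0 hn
  · exact serreE1 hn
  · exact absurd rfl h

/-- The homomorphism from the Borel algebra to the shifted algebra. -/
def fB (q sq : ℂ) [hq : QGen q] [hs : Fact (sq ^ 2 = q)] {n : ℤ} (hn : 0 ≤ n) :
    B q sq →ₐ[ℂ] UU q sq n :=
  Blift (EE q sq n) (kk q sq n) kk_comm kE (serreE hn)

/-- Its restriction to the positive part. -/
def fA (q sq : ℂ) [hq : QGen q] [hs : Fact (sq ^ 2 = q)] {n : ℤ} (hn : 0 ≤ n) :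
    A q →ₐ[ℂ] UU q sq n :=
  Alift (EE q sq n) (serreE hn)

lemma fB_inc (hn : 0 ≤ n) (u : A q) : fB q sq hn (inc q sq u) = fA q sq hn u := by
  have : (fB q sq hn).comp (inc q sq) = fA q sq hn := by
    apply A_hom_ext
    intro i
    simp [fA, fB, inc_e]
  rw [← this]; rfl

@[simp] lemma fA_e (hn : 0 ≤ n) (i : Fin 2) : fA q sq hn (e q i) = EE q sq n i := by simp [fA]

end hom

end TQAEmb

namespace TQAEmb

open TQA

set_option linter.unusedSectionVars false

/-! ### Lowering operators in the unshifted algebra -/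

section lower
variable {q sq : ℂ} [hq : QGen q] [hs : Fact (sq ^ 2 = q)]

local notation "x" => X q sq 0 true
local notation "y" => X q sq 0 false
local notation "K" => (KK q sq 0 : UU q sq 0)
local notation "Ki" => (((KK q sq 0)⁻¹ : (UU q sq 0)ˣ) : UU q sq 0)
local notation "L" => (LL q sq 0 : UU q sq 0)

lemma PM_zero : PM q sq 0 0 = L := rfl

variable (q sq) in
/-- The element `x₀x₋₁ - q x₋₁x₀`. -/
def TTe : UU q sq 0 := x 0 * x (-1) - q • (x (-1) * x 0)

lemma x0T : x 0 * TTe q sq = q ^ 2 • (TTe q sq * x 0) := by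
  have h := sym_eq _ _ (U_serre2 (q := q) (sq := sq) (n := 0) true 0 0 0)
  have hs0 := sq_ne q (sq := sq)
  simp only [SS, sg, if_true, zero_add] at h
  have h2 : (sq ^ 3) • (0 : UU q sq 0) = 0 := smul_zero _
  rw [← sub_eq_zero, ← h2, ← h]
  simp only [TTe, mul_sub, sub_mul, smul_sub, smul_add, smul_smul, mul_smul_comm, smul_mul_assoc,
    mul_assoc, ← hs.out]
  match_scalars <;> field_simp <;> ring

lemma KT : K * TTe q sq = q ^ 2 • (TTe q sq * K) := by
  rw [TTe, mul_sub, mul_smul_comm, ← mul_assoc, ← mul_assoc, Kx, Kx, smul_mul_assoc, mul_assoc, Kx,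
    smul_mul_assoc, mul_assoc, Kx]
  simp only [mul_smul_comm, sub_mul, smul_mul_assoc, mul_assoc]
  match_scalars <;> ring

lemma KiT : Ki * TTe q sq = (q ^ 2)⁻¹ • (TTe q sq * Ki) :=
  unit_conj _ _ _ (pow_ne_zero 2 hq.ne0) KT

lemma xmy0 : x (-1) * y 0 - y 0 * x (-1) = HH q sq 0 (-1) * L := by
  have h := U_PM_one (q := q) (sq := sq) (n := 0)
  rw [U_xy, add_zero, U_PP_neg (by norm_num)]
  rw [show (-0 - 1 : ℤ) = -1 by norm_num] at h
  rw [h, zero_sub, neg_neg, smul_smul, inv_mul_cancel₀ (dl_ne q), one_smul]; rfl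

lemma xmy1 : x (-1) * y 1 - y 1 * x (-1) = (dl sq)⁻¹ • (K - L) := by
  rw [U_xy, show (-1 + 1 : ℤ) = 0 by norm_num]; rfl

lemma Hy1 : HH q sq 0 (-1) * y 1 = y 1 * HH q sq 0 (-1) -
    ((q ^ 2 - (q ^ 2)⁻¹ + q - q⁻¹) / dl sq) • y 0 := by
  have := U_HX (q := q) (sq := sq) (n := 0) false (m := -1) (by norm_num) 1
  rw [c_neg_one, sub_eq_iff_eq_add] at this
  rw [this]
  simp [sg]
  abel

lemma xmZ : x (-1) * ZZ q sq 0 - ZZ q sq 0 * x (-1) = (-q * eta q sq) • (y 0 * L) := by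
  have h1 := xmy1 (q := q) (sq := sq)
  have h2 := xmy0 (q := q) (sq := sq)
  have key : x (-1) * ZZ q sq 0 - ZZ q sq 0 * x (-1) =
      (x (-1) * y 0 - y 0 * x (-1)) * y 1 + y 0 * (x (-1) * y 1 - y 1 * x (-1)) -
        q • ((x (-1) * y 1 - y 1 * x (-1)) * y 0 + y 1 * (x (-1) * y 0 - y 0 * x (-1))) := by
    simp only [ZZ, mul_sub, sub_mul, mul_smul_comm, smul_mul_assoc, mul_assoc]
    module
  rw [key, h1, h2, eta]
  simp only [mul_smul_comm, smul_mul_assoc, sub_mul, mul_sub, mul_assoc, Ky, Ly]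
  rw [← mul_assoc _ (y 1), Hy1]
  simp only [mul_smul_comm, smul_mul_assoc, sub_mul, mul_sub, mul_assoc]
  have h0 := hq.ne0
  have hd := dl_ne q (sq := sq)
  match_scalars <;> field_simp <;> ring

lemma TZ : TTe q sq * ZZ q sq 0 - ZZ q sq 0 * TTe q sq =
    (-(q * eta q sq) / dl sq) • (K * K - L * L) := by
  have h0 := hq.ne0
  have h1 := xZ (q := q) (sq := sq) le_rfl
  have h2 := xmZ (q := q) (sq := sq)
  have h3 := x0y0 (q := q) (sq := sq) (n := 0)
  rw [PM_zero] at h3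
  have h4 := xmy1 (q := q) (sq := sq)
  have key : TTe q sq * ZZ q sq 0 - ZZ q sq 0 * TTe q sq =
      (x 0 * (x (-1) * ZZ q sq 0 - ZZ q sq 0 * x (-1)) +
        (x 0 * ZZ q sq 0 - ZZ q sq 0 * x 0) * x (-1)) -
      q • (x (-1) * (x 0 * ZZ q sq 0 - ZZ q sq 0 * x 0) +
        (x (-1) * ZZ q sq 0 - ZZ q sq 0 * x (-1)) * x 0) := by
    simp only [TTe, mul_sub, sub_mul, mul_smul_comm, smul_mul_assoc, mul_assoc]
    module
  rw [key, h1, h2]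
  have key2 : (-(q * eta q sq) / dl sq) • (K * K - L * L) =
      (-(q * eta q sq)) • (((dl sq)⁻¹ • (K - L)) * L + ((dl sq)⁻¹ • (K - L)) * K) := by
    simp only [smul_mul_assoc, sub_mul]
    rw [U_KL]
    module
  rw [key2]
  nth_rw 1 [← h3]
  rw [← h4]
  simp only [mul_smul_comm, smul_mul_assoc, sub_mul, mul_sub, mul_assoc, Kx, Lx]
  match_scalars <;> field_simp

lemma E1Y1 : EE q sq 0 1 * y 0 - y 0 * EE q sq 0 1 = (dl sq)⁻¹ • (K - L) := x0y0

lemma E0Y1 : EE q sq 0 0 * y 0 - y 0 * EE q sq 0 0 = 0 := by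
  have h0 := hq.ne0
  rw [EE_zero, mul_assoc, mul_assoc, Kiy, ← mul_assoc (y 0), ← mul_assoc (y 0), y0Z]
  simp only [mul_smul_comm, smul_mul_assoc, mul_assoc]
  rw [← mul_assoc Ki (y 0), Kiy]
  simp only [mul_smul_comm, smul_mul_assoc, mul_assoc]
  module

variable (q sq) in
/-- The lowering operator of the affine node. -/
def Y0 : UU q sq 0 := TTe q sq * K * K

variable (q sq) in
/-- The constant of the lowering relation for the affine node. -/
def c0 : ℂ := (q ^ 4)⁻¹ * (q * eta q sq / dl sq)

lemma c0_ne : c0 q sq ≠ 0 := by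
  have h0 := hq.ne0
  refine mul_ne_zero (inv_ne_zero (pow_ne_zero _ h0)) (div_ne_zero (mul_ne_zero h0 ?_) (dl_ne q))
  refine div_ne_zero ?_ (dl_ne q)
  intro h
  have h2 : q ^ 4 = 1 := by
    field_simp at h
    linear_combination h
  exact hq.root 4 (by norm_num) h2

lemma E1Y0 : EE q sq 0 1 * Y0 q sq - Y0 q sq * EE q sq 0 1 = 0 := by
  rw [EE_one, Y0, mul_assoc, mul_assoc, mul_assoc K K, Kx, ← mul_assoc (x 0) (TTe q sq), x0T]
  simp only [mul_smul_comm, smul_mul_assoc, mul_assoc]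
  rw [← mul_assoc K (x 0), Kx]
  simp only [mul_smul_comm, smul_mul_assoc, mul_assoc]
  module

lemma E0Y0 : EE q sq 0 0 * Y0 q sq - Y0 q sq * EE q sq 0 0 = c0 q sq • (K * K - L * L) := by
  have h0 := hq.ne0
  have h1 : EE q sq 0 0 * Y0 q sq = (q ^ 4)⁻¹ • (ZZ q sq 0 * TTe q sq) := by
    rw [EE_zero, Y0, mul_assoc, mul_assoc, ← mul_assoc Ki (TTe q sq * K), ← mul_assoc Ki (TTe q sq),
      KiT]
    simp only [mul_smul_comm, smul_mul_assoc, mul_assoc]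
    rw [← mul_assoc Ki (TTe q sq), KiT]
    simp only [mul_smul_comm, smul_mul_assoc, mul_assoc, Units.inv_mul_cancel_left, Units.inv_mul,
      mul_one, smul_smul]
    congr 1
    field_simp
  have h2 : Y0 q sq * EE q sq 0 0 = (q ^ 4)⁻¹ • (TTe q sq * ZZ q sq 0) := by
    rw [EE_zero, Y0, mul_assoc, mul_assoc, ← mul_assoc K (ZZ q sq 0 * Ki),
      ← mul_assoc K (ZZ q sq 0), KZ]
    simp only [mul_smul_comm, smul_mul_assoc, mul_assoc]
    rw [← mul_assoc K (ZZ q sq 0), KZ]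
    simp only [mul_smul_comm, smul_mul_assoc, mul_assoc, Units.mul_inv_cancel_left, Units.mul_inv,
      mul_one, smul_smul]
    congr 1
    field_simp
  rw [h1, h2, ← smul_sub, ← neg_sub, TZ, c0]
  module

lemma K_fA (u : A q) : K * fA q sq le_rfl u = fA q sq le_rfl (sig q 1 1 u) * K := by
  induction u using A_induction with
  | one => simp
  | add a b ha hb => simp only [map_add, mul_add, add_mul, ha, hb]
  | smul c a ha => simp only [map_smul, mul_smul_comm, smul_mul_assoc, ha]
  | mul i a ha =>
    have := kE (q := q) (sq := sq) (n := 0) 1 i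
    change K * _ = _ • (_ * K) at this
    rw [map_mul, map_mul, sig_e, map_mul, map_smul, fA_e, ← mul_assoc, this, smul_mul_assoc,
      mul_assoc, ha, one_mul, smul_mul_assoc, smul_mul_assoc, mul_assoc]

lemma L_EE (i : Fin 2) : L * EE q sq 0 i = q ^ (-bil 1 i) • (EE q sq 0 i * L) := by
  have h0 := hq.ne0
  have hKL : Commute (KK q sq 0) (LL q sq 0) := Units.ext U_KL
  have hLK : L * Ki = Ki * L := by
    rw [← Units.val_mul, ← Units.val_mul, hKL.symm.inv_right.eq]
  have e2 : q ^ (2 : ℤ) = q ^ 2 := by norm_cast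
  fin_cases i
  · change L * EE q sq 0 0 = q ^ (- -2 : ℤ) • _
    rw [neg_neg, e2, EE_zero, ← mul_assoc, ← mul_assoc, LZ, smul_mul_assoc, smul_mul_assoc,
      mul_assoc (ZZ q sq 0), hLK, mul_assoc, mul_assoc, hLK]
    simp only [mul_assoc, Fin.zero_eta, EE_zero]
  · change L * EE q sq 0 1 = q ^ (-1 : ℤ) • _
    rw [EE_one, Lx]; simp [EE_one]

lemma L_fA (u : A q) : L * fA q sq le_rfl u = fA q sq le_rfl (sig q (-1) 1 u) * L := by
  induction u using A_induction with
  | one => simp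
  | add a b ha hb => simp only [map_add, mul_add, add_mul, ha, hb]
  | smul c a ha => simp only [map_smul, mul_smul_comm, smul_mul_assoc, ha]
  | mul i a ha =>
    rw [map_mul, map_mul, sig_e, map_mul, map_smul, fA_e, ← mul_assoc, L_EE, smul_mul_assoc,
      mul_assoc, ha, neg_one_mul, smul_mul_assoc, smul_mul_assoc, mul_assoc]

lemma sig_two (m : ℤ) (u : A q) : sig q m 1 (sig q m 1 u) = sig q (-m) 0 u := by
  rw [sig_add]
  congr 1
  apply A_hom_ext
  intro i
  rw [sig_e, sig_e]
  congr 2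
  fin_cases i <;> simp [bil] <;> ring

/-- Commutator with the lowering operator of the finite node. -/
lemma comm_Y1 (u : A q) : fA q sq le_rfl u * y 0 - y 0 * fA q sq le_rfl u =
    (dl sq)⁻¹ • (fA q sq le_rfl (der true 1 u) * K - fA q sq le_rfl (der false 1 u) * L) := by
  induction u using A_induction with
  | one => simp [der_one]
  | add a b ha hb =>
    simp only [map_add, add_mul, mul_add]
    rw [add_sub_add_comm, ha, hb]; module
  | smul c a ha =>
    simp only [map_smul, smul_mul_assoc, mul_smul_comm]
    rw [← smul_sub, ha]; module
  | mul i a ha =>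
    have h : fA q sq le_rfl (e q i * a) * y 0 - y 0 * fA q sq le_rfl (e q i * a) =
        EE q sq 0 i * (fA q sq le_rfl a * y 0 - y 0 * fA q sq le_rfl a) +
        (EE q sq 0 i * y 0 - y 0 * EE q sq 0 i) * fA q sq le_rfl a := by
      rw [map_mul, fA_e]; noncomm_ring
    rw [h, ha, der_e_mul, der_e_mul]
    fin_cases i
    · simp only [Fin.zero_eta, E0Y1, zero_mul, add_zero, one_ne_zero, if_false, map_mul, fA_e,
        mul_assoc, mul_sub, mul_smul_comm]
    · simp only [Fin.mk_one, E1Y1, if_true, map_mul, map_add, fA_e, add_mul, smul_mul_assoc, sub_mul,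
        K_fA, L_fA, bs, mul_assoc, mul_sub, mul_smul_comm]
      simp
      module

/-- Commutator with the lowering operator of the affine node. -/
lemma comm_Y0 (u : A q) : fA q sq le_rfl u * Y0 q sq - Y0 q sq * fA q sq le_rfl u =
    c0 q sq • (fA q sq le_rfl (der false 0 u) * (K * K) -
      fA q sq le_rfl (der true 0 u) * (L * L)) := by
  induction u using A_induction with
  | one => simp [der_one]
  | add a b ha hb =>
    simp only [map_add, add_mul, mul_add]
    rw [add_sub_add_comm, ha, hb]; module
  | smul c a ha =>
    simp only [map_smul, smul_mul_assoc, mul_smul_comm]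
    rw [← smul_sub, ha]; module
  | mul i a ha =>
    have h : fA q sq le_rfl (e q i * a) * Y0 q sq - Y0 q sq * fA q sq le_rfl (e q i * a) =
        EE q sq 0 i * (fA q sq le_rfl a * Y0 q sq - Y0 q sq * fA q sq le_rfl a) +
        (EE q sq 0 i * Y0 q sq - Y0 q sq * EE q sq 0 i) * fA q sq le_rfl a := by
      rw [map_mul, fA_e]; noncomm_ring
    rw [h, ha, der_e_mul, der_e_mul]
    fin_cases i
    · have hK : K * K * fA q sq le_rfl a = fA q sq le_rfl (sig q (-1) 0 a) * (K * K) := by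
        rw [mul_assoc, K_fA, ← mul_assoc, K_fA, sig_two, mul_assoc]
      have hL : L * L * fA q sq le_rfl a = fA q sq le_rfl (sig q 1 0 a) * (L * L) := by
        rw [mul_assoc, L_fA, ← mul_assoc, L_fA, sig_two, mul_assoc, neg_neg]
      simp only [Fin.zero_eta, E0Y0, if_true, map_mul, map_add, fA_e, add_mul, smul_mul_assoc,
        sub_mul, hK, hL, bs, mul_sub, mul_smul_comm]
      simp [mul_assoc]
      module
    · simp only [Fin.mk_one, E1Y0, zero_mul, add_zero, zero_ne_one, if_false, map_mul, fA_e,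
        mul_assoc, mul_sub, mul_smul_comm]

end lower

end TQAEmb

namespace TQAEmb

open TQA

set_option linter.unusedSectionVars false

/-! ### Difference operators satisfying the current relations -/

section ops

/-- The polynomial `(z - Q²w)(z + Q⁻¹w)` of the quadratic current relation. -/
def PQ (Q z w : ℂ) : ℂ := (z - Q ^ 2 * w) * (z + Q⁻¹ * w)

variable {ι S : Type*} [Fintype ι] [DecidableEq ι]

/-- The `r`-th mode `g ↦ ∑ᵢ αᵢ wᵢʳ (g ∘ stᵢ)` of a current of shift operators. -/
def Xop (al w : ι → S → ℂ) (st : ι → S → S) (r : ℤ) : Module.End ℂ (S → ℂ) where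
  toFun g J := ∑ i, al i J * w i J ^ r * g (st i J)
  map_add' g h := by
    funext J; simp only [Pi.add_apply, mul_add, Finset.sum_add_distrib]
  map_smul' c g := by
    funext J
    simp only [Pi.smul_apply, smul_eq_mul, RingHom.id_apply, Finset.mul_sum]
    exact Finset.sum_congr rfl fun i _ => by ring

lemma Xop_apply (al w : ι → S → ℂ) (st : ι → S → S) (r : ℤ) (g : S → ℂ) (J : S) :
    Xop al w st r g J = ∑ i, al i J * w i J ^ r * g (st i J) := rfl

lemma Xop2_apply (al w : ι → S → ℂ) (st : ι → S → S) (r s : ℤ) (g : S → ℂ) (J : S) :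
    (Xop al w st r * Xop al w st s) g J = ∑ i, ∑ k, (al i J * al k (st i J)) *
      (w i J ^ r * w k (st i J) ^ s) * g (st k (st i J)) := by
  rw [Module.End.mul_apply, Xop_apply]
  refine Finset.sum_congr rfl fun i _ => ?_
  rw [Xop_apply, Finset.mul_sum]
  exact Finset.sum_congr rfl fun k _ => by ring

lemma Xop3_apply (al w : ι → S → ℂ) (st : ι → S → S) (r s t : ℤ) (g : S → ℂ) (J : S) :
    (Xop al w st r * Xop al w st s * Xop al w st t) g J = ∑ i, ∑ j, ∑ k,
      (al i J * al j (st i J) * al k (st j (st i J))) *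
      (w i J ^ r * w j (st i J) ^ s * w k (st j (st i J)) ^ t) * g (st k (st j (st i J))) := by
  rw [mul_assoc, Module.End.mul_apply, Xop_apply]
  refine Finset.sum_congr rfl fun i _ => ?_
  rw [Xop2_apply, Finset.mul_sum]
  refine Finset.sum_congr rfl fun k _ => ?_
  rw [Finset.mul_sum]
  exact Finset.sum_congr rfl fun k _ => by ring

/-- The conditions under which the operators `Xop` satisfy the quadratic and cubic relations with
parameter `Q = s²`. -/
structure CurrentData (s : ℂ) (al w : ι → S → ℂ) (st : ι → S → S) : Prop where
  s0 : s ≠ 0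
  w0 : ∀ i J, w i J ≠ 0
  comm : ∀ i j J, st i (st j J) = st j (st i J)
  same : ∀ i J, w i (st i J) = ((s ^ 2) ^ 2)⁻¹ * w i J
  diff : ∀ i j J, i ≠ j → w j (st i J) = w j J
  exch : ∀ i j J, i ≠ j → al i J * al j (st i J) * PQ (s ^ 2) (w i J) (w j J) =
    -(al j J * al i (st j J) * PQ (s ^ 2) (w j J) (w i J))
  nz : ∀ i j J, i ≠ j → PQ (s ^ 2) (w i J) (w j J) ≠ 0

lemma sum2_zero (F : ι → ι → ℂ) (h : ∀ i j, F i j + F j i = 0) : ∑ i, ∑ j, F i j = 0 := by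
  have h1 : ∑ i, ∑ j, F i j = ∑ i, ∑ j, F j i := Finset.sum_comm
  have h2 : ∑ i, ∑ j, F i j + ∑ i, ∑ j, F j i = 0 := by
    rw [← Finset.sum_add_distrib]
    refine Finset.sum_eq_zero fun i _ => ?_
    rw [← Finset.sum_add_distrib]
    exact Finset.sum_eq_zero fun j _ => h i j
  rw [← h1] at h2
  linear_combination (1 / 2 : ℂ) * h2

lemma sum3_zero (F : ι → ι → ι → ℂ)
    (h : ∀ i j k, F i j k + F j i k + F k j i + F i k j + F j k i + F k i j = 0) :
    ∑ i, ∑ j, ∑ k, F i j k = 0 := by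
  set T := ∑ i, ∑ j, ∑ k, F i j k with hT
  have sw12 (G : ι → ι → ι → ℂ) : ∑ i, ∑ j, ∑ k, G i j k = ∑ i, ∑ j, ∑ k, G j i k :=
    Finset.sum_comm
  have sw23 (G : ι → ι → ι → ℂ) : ∑ i, ∑ j, ∑ k, G i j k = ∑ i, ∑ j, ∑ k, G i k j :=
    Finset.sum_congr rfl fun i _ => Finset.sum_comm
  have h1 : ∑ i, ∑ j, ∑ k, F j i k = T := (sw12 F).symm
  have h2 : ∑ i, ∑ j, ∑ k, F i k j = T := (sw23 F).symm
  have h3 : ∑ i, ∑ j, ∑ k, F j k i = T := by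
    rw [← h2, sw12 fun i j k => F i k j]
  have h4 : ∑ i, ∑ j, ∑ k, F k i j = T := by
    rw [← h1, sw23 fun i j k => F j i k]
  have h5 : ∑ i, ∑ j, ∑ k, F k j i = T := by
    rw [← h4, sw12 fun i j k => F k i j]
  have key : ∑ i, ∑ j, ∑ k, (F i j k + F j i k + F k j i + F i k j + F j k i + F k i j) = 0 :=
    Finset.sum_eq_zero fun i _ => Finset.sum_eq_zero fun j _ => Finset.sum_eq_zero fun k _ => h i j k
  simp only [Finset.sum_add_distrib] at key
  rw [h1, h2, h3, h4, h5, ← hT] at key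
  linear_combination (1 / 6 : ℂ) * key

variable {s : ℂ} {al w : ι → S → ℂ} {st : ι → S → S}

lemma PQ_self {Q : ℂ} (hQ : Q ≠ 0) (z : ℂ) : PQ Q z ((Q ^ 2)⁻¹ * z) = 0 := by
  rw [PQ]; field_simp; ring

lemma Xop_xx (h : CurrentData s al w st) (r t : ℤ) :
    XX (s ^ 2) (Xop al w st) r t = -XX (s ^ 2) (Xop al w st) t r := by
  have hs := h.s0
  have key (r t : ℤ) (g : S → ℂ) (J : S) : XX (s ^ 2) (Xop al w st) r t g J = ∑ i, ∑ k,
      (al i J * al k (st i J)) * PQ (s ^ 2) (w i J) (w k (st i J)) *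
        (w i J ^ r * w k (st i J) ^ t) * g (st k (st i J)) := by
    simp only [XX, LinearMap.add_apply, LinearMap.sub_apply, LinearMap.smul_apply, Pi.add_apply,
      Pi.sub_apply, Pi.smul_apply, Xop2_apply, smul_eq_mul, Finset.mul_sum]
    rw [← Finset.sum_add_distrib, ← Finset.sum_sub_distrib]
    refine Finset.sum_congr rfl fun i _ => ?_
    rw [← Finset.sum_add_distrib, ← Finset.sum_sub_distrib]
    refine Finset.sum_congr rfl fun k _ => ?_
    have h1 := h.w0 i J
    have h2 := h.w0 k (st i J)
    rw [zpow_add₀ h1, zpow_add₀ h1, zpow_add₀ h2, zpow_add₀ h2, PQ]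
    norm_cast
    field_simp
    ring
  rw [eq_neg_iff_add_eq_zero]
  refine LinearMap.ext fun g => funext fun J => ?_
  rw [LinearMap.add_apply, Pi.add_apply, key, key, ← Finset.sum_add_distrib]
  simp only [← Finset.sum_add_distrib]
  refine sum2_zero _ fun i k => ?_
  rcases eq_or_ne i k with rfl | hik
  · rw [h.same, PQ_self (pow_ne_zero 2 hs)]; ring
  · rw [h.diff i k J hik, h.diff k i J hik.symm, h.comm i k]
    linear_combination (w i J ^ r * w k J ^ t + w i J ^ t * w k J ^ r) *
      g (st k (st i J)) * h.exch i k J hik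

end ops

end TQAEmb

namespace TQAEmb

open TQA

set_option linter.unusedSectionVars false

/-! ### The cubic relations for difference operators -/

section cubic

/-- The symmetrised monomial. -/
def M3 (a b c : ℤ) (x y z : ℂ) : ℂ :=
  x ^ a * y ^ b * z ^ c + x ^ b * y ^ a * z ^ c + x ^ c * y ^ b * z ^ a + x ^ a * y ^ c * z ^ b +
    x ^ b * y ^ c * z ^ a + x ^ c * y ^ a * z ^ b

lemma M3_swap12 (a b c : ℤ) (x y z : ℂ) : M3 a b c y x z = M3 a b c x y z := by
  rw [M3, M3]; ring

lemma M3_swap23 (a b c : ℤ) (x y z : ℂ) : M3 a b c x z y = M3 a b c x y z := by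
  rw [M3, M3]; ring

/-- The coefficient of the cubic relation on the eigenvalues of the three currents. -/
def C3 (s : ℂ) (d : ℤ) (x y z : ℂ) : ℂ :=
  s ^ 3 * x ^ d - (s + s⁻¹) * y ^ d + (s ^ 3)⁻¹ * z ^ d

/-- The vanishing properties of `C3` that yield the cubic relation for currents with
parameter `s`. -/
structure CubicOK (s : ℂ) (C : ℂ → ℂ → ℂ → ℂ) : Prop where
  all : ∀ x, x ≠ 0 → C x (((s ^ 2) ^ 2)⁻¹ * x) (((s ^ 2) ^ 2)⁻¹ * (((s ^ 2) ^ 2)⁻¹ * x)) = 0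
  two : ∀ x y, x ≠ 0 → y ≠ 0 →
    C x (((s ^ 2) ^ 2)⁻¹ * x) y *
        (PQ (s ^ 2) y (((s ^ 2) ^ 2)⁻¹ * x) * PQ (s ^ 2) y x) -
      C x y (((s ^ 2) ^ 2)⁻¹ * x) *
        (PQ (s ^ 2) (((s ^ 2) ^ 2)⁻¹ * x) y * PQ (s ^ 2) y x) +
      C y x (((s ^ 2) ^ 2)⁻¹ * x) *
        (PQ (s ^ 2) (((s ^ 2) ^ 2)⁻¹ * x) y * PQ (s ^ 2) x y) = 0
  three : ∀ x y z, x ≠ 0 → y ≠ 0 → z ≠ 0 →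
    C x y z * (PQ (s ^ 2) y x * PQ (s ^ 2) z x * PQ (s ^ 2) z y) -
    C y x z * (PQ (s ^ 2) x y * PQ (s ^ 2) z x * PQ (s ^ 2) z y) -
    C x z y * (PQ (s ^ 2) y x * PQ (s ^ 2) z x * PQ (s ^ 2) y z) +
    C y z x * (PQ (s ^ 2) x y * PQ (s ^ 2) x z * PQ (s ^ 2) z y) +
    C z x y * (PQ (s ^ 2) y x * PQ (s ^ 2) x z * PQ (s ^ 2) y z) -
    C z y x * (PQ (s ^ 2) x y * PQ (s ^ 2) x z * PQ (s ^ 2) y z) = 0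

lemma cubicA {s : ℂ} (hs : s ≠ 0) : CubicOK s (C3 s (-1)) where
  all x hx := by
    simp only [C3, zpow_neg_one]; field_simp; ring
  two x y hx hy := by
    simp only [C3, zpow_neg_one, PQ]; field_simp; ring
  three x y z hx hy hz := by
    simp only [C3, zpow_neg_one, PQ]; field_simp; ring

lemma cubicB {s : ℂ} (hs : s ≠ 0) : CubicOK s (C3 s⁻¹ 1) where
  all x hx := by
    simp only [C3, zpow_one]; field_simp; ring
  two x y hx hy := by
    simp only [C3, zpow_one, PQ]; field_simp; ring
  three x y z hx hy hz := by
    simp only [C3, zpow_one, PQ]; field_simp; ring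

variable {ι S : Type*} [Fintype ι] [DecidableEq ι]
variable {s : ℂ} {al w : ι → S → ℂ} {st : ι → S → S}

/-- The operators `Xop` satisfy the cubic relation: grouping the terms of the triple product by the
set of directions in which the shifts are taken reduces it to the identities of `CubicOK`. -/
lemma Xop_cubic (h : CurrentData s al w st) (σ : ℂ) (d : ℤ) (hC : CubicOK s (C3 σ d))
    (a b c : ℤ) : sym3 (SS σ d (Xop al w st)) a b c = 0 := by
  refine LinearMap.ext fun g => funext fun J => ?_
  let T (i j k : ι) : ℂ := al i J * al j (st i J) * al k (st j (st i J))
  let F (i j k : ι) : ℂ := T i j k * (C3 σ d (w i J) (w j (st i J)) (w k (st j (st i J))) *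
    M3 a b c (w i J) (w j (st i J)) (w k (st j (st i J)))) * g (st k (st j (st i J)))
  have key : sym3 (SS σ d (Xop al w st)) a b c g J = ∑ i, ∑ j, ∑ k, F i j k := by
    simp only [sym3, SS, LinearMap.add_apply, LinearMap.sub_apply, LinearMap.smul_apply,
      Pi.add_apply, Pi.sub_apply, Pi.smul_apply, Xop3_apply, smul_eq_mul, Finset.mul_sum,
      ← Finset.sum_add_distrib, ← Finset.sum_sub_distrib]
    refine Finset.sum_congr rfl fun i _ => Finset.sum_congr rfl fun j _ =>
      Finset.sum_congr rfl fun k _ => ?_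
    have h1 := h.w0 i J
    have h2 := h.w0 j (st i J)
    have h3 := h.w0 k (st j (st i J))
    simp only [F, T, C3, M3, zpow_add₀ h1, zpow_add₀ h2, zpow_add₀ h3]
    ring
  rw [key, LinearMap.zero_apply, Pi.zero_apply]
  -- exchange of the first two, respectively the last two, indices
  have ex12 (i j k : ι) (hij : i ≠ j) : T j i k =
      -(T i j k * PQ (s ^ 2) (w i J) (w j J)) / PQ (s ^ 2) (w j J) (w i J) := by
    rw [eq_div_iff (h.nz j i J hij.symm)]
    simp only [T]
    rw [h.comm i j]
    linear_combination al k (st j (st i J)) * h.exch i j J hij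
  have ex23 (i j k : ι) (hjk : j ≠ k) : T i k j =
      -(T i j k * PQ (s ^ 2) (w j (st i J)) (w k (st i J))) /
        PQ (s ^ 2) (w k (st i J)) (w j (st i J)) := by
    rw [eq_div_iff (h.nz k j _ hjk.symm)]
    simp only [T]
    linear_combination al i J * h.exch j k (st i J) hjk
  have gg12 (i j k : ι) : st k (st i (st j J)) = st k (st j (st i J)) := by rw [h.comm i j]
  have gg23 (i j k : ι) : st j (st k (st i J)) = st k (st j (st i J)) := by rw [h.comm j k]
  have two (i k : ι) (hik : i ≠ k) : F i i k + F i k i + F k i i = 0 := by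
    have t1 := ex23 i i k hik
    have t2 := ex12 i k i hik
    have p1 := h.nz k i J hik.symm
    have p2 := h.nz k i (st i J) hik.symm
    have hh := hC.two (w i J) (w k J) (h.w0 _ _) (h.w0 _ _)
    simp only [F]
    rw [gg12 i k i, gg23 i i k, t2, t1]
    simp only [h.same, h.diff i k _ hik, h.diff k i _ hik.symm] at p1 p2 ⊢
    rw [M3_swap12 a b c (w i J) (w k J), M3_swap23 a b c (w i J) (((s ^ 2) ^ 2)⁻¹ * w i J)]
    generalize PQ (s ^ 2) (w k J) (((s ^ 2) ^ 2)⁻¹ * w i J) = P1 at *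
    generalize PQ (s ^ 2) (((s ^ 2) ^ 2)⁻¹ * w i J) (w k J) = P2 at *
    generalize PQ (s ^ 2) (w k J) (w i J) = P3 at *
    generalize PQ (s ^ 2) (w i J) (w k J) = P4 at *
    generalize C3 σ d (w i J) (w k J) (((s ^ 2) ^ 2)⁻¹ * w i J) = C1 at *
    generalize C3 σ d (w k J) (w i J) (((s ^ 2) ^ 2)⁻¹ * w i J) = C2 at *
    generalize C3 σ d (w i J) (((s ^ 2) ^ 2)⁻¹ * w i J) (w k J) = C4 at *
    generalize M3 a b c (w i J) (((s ^ 2) ^ 2)⁻¹ * w i J) (w k J) = M at *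
    clear t1 t2 key
    generalize T i i k = TT
    generalize g (st k (st i (st i J))) = G
    field_simp
    linear_combination TT * M * G * hh
  refine sum3_zero F fun i j k => ?_
  rcases eq_or_ne i j with rfl | hij
  · rcases eq_or_ne i k with rfl | hik
    · have : F i i i = 0 := by
        simp only [F, h.same]
        rw [hC.all _ (h.w0 i J)]; ring
      rw [this]; ring
    · linear_combination 2 * two i k hik
  · rcases eq_or_ne i k with rfl | hik
    · linear_combination 2 * two i j hij
    · rcases eq_or_ne j k with rfl | hjk
      · linear_combination 2 * two j i hij.symm
      · have t1 := ex12 i j k hij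
        have t2 := ex23 i j k hjk
        have t3 := ex23 j i k hik
        have t4 := ex12 i k j hik
        have t5 := ex23 k i j hij
        have p1 := h.nz j i J hij.symm
        have p2 := h.nz k i J hik.symm
        have p3 := h.nz k j J hjk.symm
        have hh := hC.three (w i J) (w j J) (w k J) (h.w0 _ _) (h.w0 _ _) (h.w0 _ _)
        simp only [h.diff i j _ hij, h.diff j i _ hij.symm, h.diff i k _ hik,
          h.diff k i _ hik.symm, h.diff j k _ hjk, h.diff k j _ hjk.symm] at t1 t2 t3 t4 t5
        simp only [F, h.diff i j _ hij, h.diff j i _ hij.symm, h.diff i k _ hik,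
          h.diff k i _ hik.symm, h.diff j k _ hjk, h.diff k j _ hjk.symm]
        have g1 : st k (st i (st j J)) = st k (st j (st i J)) := by rw [h.comm i j]
        have g2 : st j (st k (st i J)) = st k (st j (st i J)) := by rw [h.comm j k]
        have g3 : st i (st k (st j J)) = st k (st j (st i J)) := by rw [h.comm i k, g1]
        have g4 : st j (st i (st k J)) = st k (st j (st i J)) := by rw [h.comm i k, g2]
        have g5 : st i (st j (st k J)) = st k (st j (st i J)) := by rw [h.comm i j, g4]
        rw [g1, g2, g3, g4, g5]
        rw [t5, t4, t3, t2, t1]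
        have m1 := M3_swap12 a b c (w i J) (w j J) (w k J)
        have m2 := M3_swap23 a b c (w i J) (w j J) (w k J)
        have m3 := (M3_swap23 a b c (w j J) (w i J) (w k J)).trans m1
        have m4 := (M3_swap12 a b c (w i J) (w k J) (w j J)).trans m2
        have m5 := (M3_swap23 a b c (w k J) (w i J) (w j J)).trans m4
        rw [m1, m2, m3, m4, m5]
        clear t1 t2 t3 t4 t5 m1 m2 m3 m4 m5 key
        generalize PQ (s ^ 2) (w i J) (w j J) = p12 at *
        generalize PQ (s ^ 2) (w j J) (w i J) = p21 at *
        generalize PQ (s ^ 2) (w i J) (w k J) = p13 at *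
        generalize PQ (s ^ 2) (w k J) (w i J) = p31 at *
        generalize PQ (s ^ 2) (w j J) (w k J) = p23 at *
        generalize PQ (s ^ 2) (w k J) (w j J) = p32 at *
        generalize C3 σ d (w i J) (w j J) (w k J) = c1 at *
        generalize C3 σ d (w j J) (w i J) (w k J) = c2 at *
        generalize C3 σ d (w i J) (w k J) (w j J) = c3 at *
        generalize C3 σ d (w j J) (w k J) (w i J) = c4 at *
        generalize C3 σ d (w k J) (w i J) (w j J) = c5 at *
        generalize C3 σ d (w k J) (w j J) (w i J) = c6 at *
        generalize M3 a b c (w i J) (w j J) (w k J) = M at *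
        generalize T i j k = TT
        generalize g (st k (st j (st i J))) = G
        field_simp
        linear_combination TT * M * G * hh

end cubic

end TQAEmb

namespace TQAEmb

open TQA PowerSeries

set_option linter.unusedSectionVars false

/-! ### Expansions of rational functions at zero and infinity -/

section pf

/-- Coefficients of a power series in `u`, indexed by `ℤ`. -/
def extP (f : ℂ⟦X⟧) (m : ℤ) : ℂ := if m < 0 then 0 else coeff m.toNat f

/-- Coefficients of `u⁻ᵈ f(u⁻¹)`, indexed by `ℤ`. -/
def extM (d : ℤ) (f : ℂ⟦X⟧) (m : ℤ) : ℂ := if -d < m then 0 else coeff (-d - m).toNat f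

/-- The factor `1 - cu`. -/
def lin (c : ℂ) : ℂ⟦X⟧ := 1 - C c * PowerSeries.X

/-- The geometric series `1/(1 - cu)`. -/
def geo (c : ℂ) : ℂ⟦X⟧ := mk fun n => c ^ n

lemma coeff_lin_mul_succ (c : ℂ) (f : ℂ⟦X⟧) (n : ℕ) :
    coeff (n + 1) (lin c * f) = coeff (n + 1) f - c * coeff n f := by
  rw [lin, sub_mul, one_mul, map_sub, mul_assoc, coeff_C_mul, mul_comm PowerSeries.X f, coeff_succ_mul_X]

lemma coeff_lin_mul_zero (c : ℂ) (f : ℂ⟦X⟧) : coeff 0 (lin c * f) = coeff 0 f := by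
  simp [lin, sub_mul]

lemma lin_geo (c : ℂ) : lin c * geo c = 1 := by
  ext n
  cases n with
  | zero => rw [coeff_lin_mul_zero]; simp [geo]
  | succ n =>
    rw [coeff_lin_mul_succ]
    simp [geo, coeff_one, pow_succ']

lemma extP_lin (c : ℂ) (f : ℂ⟦X⟧) (m : ℤ) :
    extP (lin c * f) m = extP f m - c * extP f (m - 1) := by
  unfold extP
  rcases lt_trichotomy m 0 with h | rfl | h
  · rw [if_pos h, if_pos h, if_pos (by omega)]; ring
  · simp [coeff_lin_mul_zero, -coeff_zero_eq_constantCoeff]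
  · obtain ⟨n, rfl⟩ : ∃ n : ℕ, m = n + 1 := ⟨(m - 1).toNat, by omega⟩
    rw [if_neg (by omega), if_neg (by omega), if_neg (by omega)]
    have h1 : ((n : ℤ) + 1).toNat = n + 1 := by omega
    have h2 : ((n : ℤ) + 1 - 1).toNat = n := by omega
    rw [h1, h2, coeff_lin_mul_succ]

lemma extM_lin {c : ℂ} (hc : c ≠ 0) (d : ℤ) (f : ℂ⟦X⟧) (m : ℤ) :
    extM (d - 1) (C (-c) * lin c⁻¹ * f) m = extM d f m - c * extM d f (m - 1) := by
  unfold extM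
  rw [mul_assoc]
  rcases lt_trichotomy m (-d + 1) with h | rfl | h
  · obtain ⟨n, hn⟩ : ∃ n : ℕ, m = -d - n := ⟨(-d - m).toNat, by omega⟩
    subst hn
    rw [if_neg (by omega), if_neg (by omega), if_neg (by omega)]
    have h1 : (-(d - 1) - (-d - n)).toNat = n + 1 := by omega
    have h2 : (-d - (-d - n)).toNat = n := by omega
    have h3 : (-d - (-d - n - 1)).toNat = n + 1 := by omega
    rw [h1, h2, h3, coeff_C_mul, coeff_lin_mul_succ]
    field_simp
    ring
  · rw [if_neg (by omega), if_pos (by omega), if_neg (by omega)]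
    have h1 : (-(d - 1) - (-d + 1)).toNat = 0 := by omega
    have h2 : (-d - (-d + 1 - 1)).toNat = 0 := by omega
    rw [h1, h2, coeff_C_mul, coeff_lin_mul_zero]
    ring
  · rw [if_pos (by omega), if_pos (by omega), if_pos (by omega)]; ring

variable {ι : Type*} [DecidableEq ι]

/-- Expansion at `0` of `∏ 1/(1 - pᵢu)`. -/
def FP (p : ι → ℂ) (s : Finset ι) : ℂ⟦X⟧ := ∏ i ∈ s, geo (p i)

/-- Expansion at `∞` of `∏ 1/(1 - pᵢu)`, without the power of `u`. -/
def FM (p : ι → ℂ) (s : Finset ι) : ℂ⟦X⟧ := ∏ i ∈ s, (C (-(p i)⁻¹) * geo (p i)⁻¹)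

/-- Expansion at `0` of `∏ (1 - cu)`. -/
def NP (cs : List ℂ) : ℂ⟦X⟧ := (cs.map lin).prod

/-- Expansion at `∞` of `∏ (1 - cu)`, without the power of `u`. -/
def NM (cs : List ℂ) : ℂ⟦X⟧ := (cs.map fun c => C (-c) * lin c⁻¹).prod

lemma lagrange_zero (p : ι → ℂ) (s : Finset ι) (hs : s.Nonempty) (hp : ∀ i, p i ≠ 0)
    (hi : Function.Injective p) : ∑ j ∈ s, ∏ k ∈ s.erase j, (1 - p k / p j)⁻¹ = 1 := by
  have h1 : Set.InjOn (fun i => (p i)⁻¹) (s : Set ι) := fun a _ b _ hab => hi (inv_injective hab)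
  have h := congrArg (Polynomial.eval 0) (Lagrange.sum_basis h1 hs)
  rw [Polynomial.eval_finset_sum, Polynomial.eval_one] at h
  refine Eq.trans ?_ h
  refine Finset.sum_congr rfl fun j _ => ?_
  rw [Lagrange.basis, Polynomial.eval_prod]
  refine Finset.prod_congr rfl fun k hk => ?_
  have hkj : p j - p k ≠ 0 := sub_ne_zero.2 (hi.ne (Finset.ne_of_mem_erase hk).symm)
  have hkj' : p k - p j ≠ 0 := sub_ne_zero.2 (hi.ne (Finset.ne_of_mem_erase hk))
  have hj := hp j
  have hk' := hp k
  simp only [Lagrange.basisDivisor, Polynomial.eval_mul, Polynomial.eval_C, Polynomial.eval_sub,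
    Polynomial.eval_X]
  have e1 : 1 - p k / p j = (p j - p k) / p j := by field_simp
  have e2 : (p j)⁻¹ - (p k)⁻¹ = (p k - p j) / (p j * p k) := by field_simp
  rw [e1, e2]
  field_simp
  ring

/-- Partial fractions without numerator. -/
lemma pf_base (p : ι → ℂ) (hp : ∀ i, p i ≠ 0) (hi : Function.Injective p) (s : Finset ι) (m : ℤ) :
    extP (FP p s) m - extM s.card (FM p s) m =
      ∑ j ∈ s, (∏ k ∈ s.erase j, (1 - p k / p j)⁻¹) * p j ^ m := by
  induction s using Finset.induction_on generalizing m with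
  | empty =>
    rw [show ((∅ : Finset ι).card : ℤ) = 0 by simp]
    simp only [FP, FM, Finset.prod_empty, Finset.sum_empty]
    unfold extP extM
    rcases lt_trichotomy m 0 with h | rfl | h
    · rw [if_pos h, if_neg (by omega), coeff_one, if_neg (by omega)]; ring
    · simp
    · rw [if_neg (by omega), if_pos (by omega), coeff_one, if_neg (by omega)]; ring
  | insert a s ha ih =>
    set E : ℤ → ℂ := fun m => extP (FP p (insert a s)) m -
      extM ((insert a s).card : ℕ) (FM p (insert a s)) m -
      ∑ j ∈ insert a s, (∏ k ∈ (insert a s).erase j, (1 - p k / p j)⁻¹) * p j ^ m with hE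
    have hpa := hp a
    have step (m : ℤ) : E m = p a * E (m - 1) := by
      have h1 := extP_lin (p a) (FP p (insert a s)) m
      have h2 := extM_lin hpa ((insert a s).card : ℕ) (FM p (insert a s)) m
      have e1 : lin (p a) * FP p (insert a s) = FP p s := by
        rw [FP, Finset.prod_insert ha, ← mul_assoc, lin_geo, one_mul, FP]
      have e2 : C (-p a) * lin (p a)⁻¹ * FM p (insert a s) = FM p s := by
        rw [FM, Finset.prod_insert ha]
        have : C (-p a) * C (-(p a)⁻¹) = (1 : ℂ⟦X⟧) := by
          rw [← map_mul]; simp [hpa]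
        rw [FM]
        generalize ∏ i ∈ s, C (-(p i)⁻¹) * geo (p i)⁻¹ = G
        linear_combination (lin (p a)⁻¹ * geo (p a)⁻¹ * G) * this + G * lin_geo (p a)⁻¹
      have e3 : (((insert a s).card : ℕ) : ℤ) - 1 = (s.card : ℕ) := by
        rw [Finset.card_insert_of_notMem ha]; push_cast; ring
      rw [e1] at h1
      rw [e2, e3] at h2
      have h3 : ∑ j ∈ insert a s, (∏ k ∈ (insert a s).erase j, (1 - p k / p j)⁻¹) * p j ^ m -
          p a * ∑ j ∈ insert a s, (∏ k ∈ (insert a s).erase j, (1 - p k / p j)⁻¹) * p j ^ (m - 1) =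
          ∑ j ∈ s, (∏ k ∈ s.erase j, (1 - p k / p j)⁻¹) * p j ^ m := by
        rw [Finset.mul_sum, ← Finset.sum_sub_distrib, Finset.sum_insert ha]
        rw [zpow_sub_one₀ hpa, show ∀ A x : ℂ, A * x - p a * (A * (x * (p a)⁻¹)) = 0 from
          fun A x => by field_simp; ring, zero_add]
        refine Finset.sum_congr rfl fun j hj => ?_
        have hja : a ≠ j := fun h => ha (h ▸ hj)
        rw [Finset.erase_insert_of_ne hja, Finset.prod_insert
          (fun h => ha (Finset.mem_of_mem_erase h)), zpow_sub_one₀ (hp j)]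
        have hj0 := hp j
        have h4 : p j - p a ≠ 0 := sub_ne_zero.2 (hi.ne hja.symm)
        have h5 : 1 - p a / p j = (p j - p a) / p j := by field_simp
        rw [h5]
        field_simp
      have h4 := ih m
      simp only [hE]
      linear_combination h4 - h1 + h2 - h3
    have h0 : E 0 = 0 := by
      simp only [hE]
      have : (0 : ℤ) < ((insert a s).card : ℕ) := by
        have := (Finset.insert_nonempty a s).card_pos; exact_mod_cast this
      simp only [zpow_zero, mul_one, lagrange_zero p _ (Finset.insert_nonempty a s) hp hi, extP,
        extM]
      rw [if_neg (by omega), if_pos (by omega)]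
      simp [FP, geo, map_prod]
    have hall (m : ℤ) : E m = 0 := by
      induction m using Int.induction_on with
      | zero => exact h0
      | succ n ihn => rw [step]; simp [ihn]
      | pred n ihn =>
        have := step (-n)
        rw [ihn] at this
        exact (mul_eq_zero.1 this.symm).resolve_left hpa
    exact sub_eq_zero.1 (hall m)

/-- Partial fractions: the difference of the expansions at `0` and `∞` of
`∏ (1 - cu) / ∏ (1 - pᵢu)` is a sum of exponentials. -/
lemma pf_main (p : ι → ℂ) (hp : ∀ i, p i ≠ 0) (hi : Function.Injective p) (s : Finset ι)
    (cs : List ℂ) (hc : ∀ c ∈ cs, c ≠ 0) (m : ℤ) :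
    extP (NP cs * FP p s) m - extM ((s.card : ℤ) - cs.length) (NM cs * FM p s) m =
      ∑ j ∈ s, (cs.map fun c => 1 - c / p j).prod * (∏ k ∈ s.erase j, (1 - p k / p j)⁻¹) *
        p j ^ m := by
  induction cs generalizing m with
  | nil => simpa [NP, NM] using pf_base p hp hi s m
  | cons c cs ih =>
    have hc0 : c ≠ 0 := hc c (by simp)
    have ih' := ih fun c hc' => hc c (by simp [hc'])
    have e1 : NP (c :: cs) * FP p s = lin c * (NP cs * FP p s) := by simp [NP, mul_assoc]
    have e2 : NM (c :: cs) * FM p s = C (-c) * lin c⁻¹ * (NM cs * FM p s) := by simp [NM, mul_assoc]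
    have e3 : (s.card : ℤ) - ((c :: cs).length : ℕ) = (s.card : ℤ) - cs.length - 1 := by
      simp; ring
    rw [e1, e2, e3, extP_lin, extM_lin hc0]
    have h1 := ih' m
    have h2 := ih' (m - 1)
    rw [show ∀ A B D E : ℂ, A - c * B - (D - c * E) = (A - D) - c * (B - E) from
      fun A B D E => by ring, h1, h2, Finset.mul_sum, ← Finset.sum_sub_distrib]
    refine Finset.sum_congr rfl fun j _ => ?_
    rw [zpow_sub_one₀ (hp j), List.map_cons, List.prod_cons]
    have := hp j
    field_simp

end pf

/-! ### Logarithmic derivatives -/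

section ld

/-- `f` has logarithmic derivative `h / X`. -/
def LD (f h : ℂ⟦X⟧) : Prop := PowerSeries.X * d⁄dX ℂ f = h * f

lemma LD.mul {f g h k : ℂ⟦X⟧} (h1 : LD f h) (h2 : LD g k) : LD (f * g) (h + k) := by
  unfold LD at *
  rw [Derivation.leibniz, smul_eq_mul, smul_eq_mul]
  linear_combination f * h2 + g * h1

lemma LD_C (c : ℂ) : LD (C c) 0 := by
  unfold LD
  rw [derivative_C]; simp

lemma LD_one : LD 1 0 := by
  unfold LD
  simp

lemma LD_prod {ι : Type*} (s : Finset ι) (f h : ι → ℂ⟦X⟧) (H : ∀ i, LD (f i) (h i)) :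
    LD (∏ i ∈ s, f i) (∑ i ∈ s, h i) := by
  classical
  induction s using Finset.induction_on with
  | empty => simpa using LD_one
  | insert a s ha ih => rw [Finset.prod_insert ha, Finset.sum_insert ha]; exact (H a).mul ih

lemma LD_list {ι : Type*} (l : List ι) (f h : ι → ℂ⟦X⟧) (H : ∀ i, LD (f i) (h i)) :
    LD (l.map f).prod (l.map h).sum := by
  induction l with
  | nil => simpa using LD_one
  | cons a l ih => simpa using (H a).mul ih

lemma geo_sub_one (c : ℂ) : geo c - 1 = C c * PowerSeries.X * geo c := by
  have := lin_geo c
  rw [lin] at this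
  linear_combination this

lemma d_lin (c : ℂ) : d⁄dX ℂ (lin c) = -C c := by
  rw [lin, map_sub, Derivation.leibniz, derivative_C]
  simp

lemma LD_lin (c : ℂ) : LD (lin c) (-(geo c - 1)) := by
  unfold LD
  rw [d_lin, geo_sub_one]
  linear_combination C c * PowerSeries.X * lin_geo c

lemma LD_geo (c : ℂ) : LD (geo c) (geo c - 1) := by
  unfold LD
  have h := congrArg (d⁄dX ℂ) (lin_geo c)
  rw [Derivation.leibniz, d_lin, smul_eq_mul, smul_eq_mul] at h
  have h1 : d⁄dX ℂ (1 : ℂ⟦X⟧) = 0 := by simp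
  rw [h1] at h
  have h2 : d⁄dX ℂ (geo c) = C c * geo c * geo c := by
    linear_combination geo c * h - (d⁄dX ℂ (geo c)) * lin_geo c
  rw [h2, geo_sub_one]
  ring

lemma LD_coeff {f h : ℂ⟦X⟧} (H : LD f h) (h0 : coeff 0 h = 0) (m : ℕ) :
    ((m : ℂ) + 1) * coeff (m + 1) f =
      ∑ k ∈ Finset.range (m + 1), coeff (k + 1) h * coeff (m - k) f := by
  have := congrArg (coeff (m + 1)) H
  rw [coeff_succ_X_mul, coeff_derivative, coeff_mul,
    Finset.Nat.sum_antidiagonal_eq_sum_range_succ_mk, Finset.sum_range_succ'] at this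
  simp only [h0, zero_mul, add_zero, Nat.add_sub_add_right] at this
  rw [mul_comm, this]

end ld

end TQAEmb

namespace TQAEmb

open TQA

set_option linter.unusedSectionVars false

/-! ### Representations of the shifted algebra -/

section lift
variable (q sq : ℂ) [hq : QGen q] [hs : Fact (sq ^ 2 = q)]
variable {R : Type*} [Ring R] [Algebra ℂ R]

/-- The images of the Drinfeld generators. -/
def gmap (Xo : Bool → ℤ → R) (pp pm h : ℤ → R) (ki li : R) : TQAGen (DD q sq) → R
  | .xp _ r => Xo true r
  | .xm _ r => Xo false r
  | .pp _ r => pp r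
  | .pm _ r => pm r
  | .ppInv _ => ki
  | .pmInv _ => li
  | .hh _ m => h m

/-- The defining relations of the shifted algebra, for elements of an arbitrary algebra. -/
structure IsRep (n : ℤ) (Xo : Bool → ℤ → R) (pp pm h : ℤ → R) (ki li : R) : Prop where
  h0 : h 0 = 0
  pp_neg : ∀ r, r < 0 → pp r = 0
  pm_pos : ∀ r, -n < r → pm r = 0
  comm : ∀ a b, IsCartanGen (DD q sq) a → IsCartanGen (DD q sq) b →
    gmap q sq Xo pp pm h ki li a * gmap q sq Xo pp pm h ki li b =
      gmap q sq Xo pp pm h ki li b * gmap q sq Xo pp pm h ki li a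
  ki_l : ki * pp 0 = 1
  ki_r : pp 0 * ki = 1
  li_l : li * pm (-n) = 1
  li_r : pm (-n) * li = 1
  pp_exp : ∀ m : ℕ, ((m : ℂ) + 1) • pp (m + 1) = dl sq • ∑ k ∈ Finset.range (m + 1),
    ((k : ℂ) + 1) • (h ((k : ℤ) + 1) * pp (m + 1 - ((k : ℤ) + 1)))
  pm_exp : ∀ m : ℕ, (-((m : ℂ) + 1)) • pm (-n - (m + 1)) = dl sq • ∑ k ∈ Finset.range (m + 1),
    ((k : ℂ) + 1) • (h (-((k : ℤ) + 1)) * pm (-n - (m + 1) + ((k : ℤ) + 1)))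
  kx : ∀ ε r, pp 0 * Xo ε r = q ^ sg ε • (Xo ε r * pp 0)
  lx : ∀ ε r, pm (-n) * Xo ε r = q ^ (-sg ε) • (Xo ε r * pm (-n))
  hx : ∀ ε m r, m ≠ 0 → h m * Xo ε r - Xo ε r * h m =
    (((sg ε : ℤ) : ℂ) * (DD q sq).hxCoef () () m) • Xo ε (m + r)
  xy : ∀ r s, Xo true r * Xo false s - Xo false s * Xo true r =
    (dl sq)⁻¹ • (pp (r + s) - pm (r + s))
  xx : ∀ ε r s, XX (q ^ sg ε) (Xo ε) r s = -XX (q ^ sg ε) (Xo ε) s r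
  serre2 : ∀ ε a b c, sym3 (SS sq (-sg ε) (Xo ε)) a b c = 0
  serre3 : ∀ ε a b c, sym3 (SS sq⁻¹ (sg ε) (Xo ε)) a b c = 0

variable {q sq} {n : ℤ} {Xo : Bool → ℤ → R} {pp pm h : ℤ → R} {ki li : R}

/-- The homomorphism from the free algebra. -/
def preLift (Xo : Bool → ℤ → R) (pp pm h : ℤ → R) (ki li : R) : FA (DD q sq) →ₐ[ℂ] R :=
  FreeAlgebra.lift ℂ (gmap q sq Xo pp pm h ki li)

lemma preLift_ι (a : TQAGen (DD q sq)) :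
    preLift (q := q) (sq := sq) Xo pp pm h ki li (FreeAlgebra.ι ℂ a) =
      gmap q sq Xo pp pm h ki li a := FreeAlgebra.lift_ι_apply _ _

lemma preLift_X (ε : Bool) (i : Unit) (r : ℤ) :
    preLift (q := q) (sq := sq) Xo pp pm h ki li (gX (DD q sq) ε i r) = Xo ε r := by
  cases ε <;> exact preLift_ι _

lemma preLift_pp (i : Unit) (r : ℤ) :
    preLift (q := q) (sq := sq) Xo pp pm h ki li (gPp (DD q sq) i r) = pp r := preLift_ι _

lemma preLift_pm (i : Unit) (r : ℤ) :
    preLift (q := q) (sq := sq) Xo pp pm h ki li (gPm (DD q sq) i r) = pm r := preLift_ι _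

lemma preLift_h (i : Unit) (r : ℤ) :
    preLift (q := q) (sq := sq) Xo pp pm h ki li (gH (DD q sq) i r) = h r := preLift_ι _

lemma preLift_rel (H : IsRep q sq n Xo pp pm h ki li) ⦃a b : FA (DD q sq)⦄
    (hab : Rel (DD q sq) 0 (fun _ => -n) a b) :
    preLift (q := q) (sq := sq) Xo pp pm h ki li a = preLift Xo pp pm h ki li b := by
  have hz : -((0 : Unit → ℤ) ()) = 0 := by simp
  induction hab with
  | x_supp ε i r hr =>
    exact absurd (show (((1 : ℕ) : ℤ)) ∣ r by simp) hr
  | h_supp i m hm =>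
    cases i
    rcases hm with hm | rfl
    · exact absurd (show (((1 : ℕ) : ℤ)) ∣ m by simp) hm
    · rw [preLift_h, map_zero, H.h0]
  | pp_supp i r hr =>
    cases i
    rw [preLift_pp, map_zero, H.pp_neg r]; exact hr
  | pm_supp i r hr =>
    cases i
    rw [preLift_pm, map_zero, H.pm_pos r hr]
  | cartan_comm a b ha hb =>
    rw [map_mul, map_mul, preLift_ι, preLift_ι]; exact H.comm a b ha hb
  | pp_inv_l i => rw [map_mul, map_one]; exact Eq.trans (congrArg₂ _ (preLift_ι _) (preLift_ι _)) H.ki_l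
  | pp_inv_r i => rw [map_mul, map_one]; exact Eq.trans (congrArg₂ _ (preLift_ι _) (preLift_ι _)) H.ki_r
  | pm_inv_l i => rw [map_mul, map_one]; exact Eq.trans (congrArg₂ _ (preLift_ι _) (preLift_ι _)) H.li_l
  | pm_inv_r i => rw [map_mul, map_one]; exact Eq.trans (congrArg₂ _ (preLift_ι _) (preLift_ι _)) H.li_r
  | pp_exp i m =>
    cases i
    simp only [map_smul, map_sum, map_mul, preLift_pp, preLift_h]
    rw [show (-(0 : (DD q sq).I0 → ℤ) ()) = 0 from hz]
    simp only [zero_add]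
    exact H.pp_exp m
  | pm_exp i m =>
    cases i
    simp only [map_smul, map_sum, map_mul, preLift_pm, preLift_h]
    exact H.pm_exp m
  | lead_conj_p ε i j r =>
    cases i; cases j
    rw [map_smul, map_mul, map_mul, preLift_pp, preLift_X]
    have h : (∑ s ∈ Finset.range (DD q sq).M, (DD q sq).Cs () () s) = 1 := rfl
    rw [h, mul_one]
    exact H.kx ε r
  | lead_conj_m ε i j r =>
    cases i; cases j
    rw [map_smul, map_mul, map_mul, preLift_pm, preLift_X]
    have h : (∑ s ∈ Finset.range (DD q sq).M, (DD q sq).Cs () () s) = 1 := rfl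
    rw [h, mul_one]
    exact H.lx ε r
  | h_x ε i j m r hm =>
    cases i; cases j
    rw [map_smul, map_sub, map_mul, map_mul, preLift_h, preLift_X, preLift_X]
    exact H.hx ε m r hm
  | xp_xm i j r r' =>
    cases i; cases j
    rw [if_pos ⟨rfl, by change ((1 : ℕ) : ℤ) ∣ r'; simp⟩, map_smul, map_sub, map_sub, map_mul,
      map_mul, preLift_pp, preLift_pm]
    have h1 := preLift_X (q := q) (sq := sq) (Xo := Xo) (pp := pp) (pm := pm) (h := h) (ki := ki)
      (li := li) true () r
    have h2 := preLift_X (q := q) (sq := sq) (Xo := Xo) (pp := pp) (pm := pm) (h := h) (ki := ki)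
      (li := li) false () r'
    simp only [gX] at h1 h2
    rw [h1, h2]
    exact H.xy r r'
  | xx ε i j r r' =>
    cases i; cases j
    have h1 := xx_lhs (q := q) (sq := sq) ε (Xo ε) r r'
    have h2 := xx_rhs (q := q) (sq := sq) ε (Xo ε) r r'
    rw [map_sum, map_sum]
    simp only [map_smul, map_mul, preLift_X]
    rw [h1, h2]
    exact H.xx ε r r'
  | serre1 ε i j hij hne => exact absurd (Subsingleton.elim (α := Unit) i j) hne
  | serre2 ε i hii m =>
    cases i
    rw [serre2_eq, map_zero]
    simp only [preLift_X]
    exact H.serre2 ε _ _ _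
  | serre3 ε i hii m =>
    cases i
    rw [serre3_eq, map_zero]
    simp only [preLift_X]
    exact H.serre3 ε _ _ _

/-- The representation of the shifted algebra given by elements satisfying its relations. -/
def Ulift (H : IsRep q sq n Xo pp pm h ki li) : UU q sq n →ₐ[ℂ] R :=
  RingQuot.liftAlgHom ℂ ⟨preLift (q := q) (sq := sq) Xo pp pm h ki li, preLift_rel H⟩

lemma Ulift_mk (H : IsRep q sq n Xo pp pm h ki li) (a : FA (DD q sq)) :
    Ulift H (Umk q sq n a) = preLift Xo pp pm h ki li a :=
  RingQuot.liftAlgHom_mkAlgHom_apply ℂ _ _ _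

lemma Ulift_X (H : IsRep q sq n Xo pp pm h ki li) (ε : Bool) (r : ℤ) :
    Ulift H (X q sq n ε r) = Xo ε r := (Ulift_mk H _).trans (preLift_X _ _ _)

lemma Ulift_K (H : IsRep q sq n Xo pp pm h ki li) : Ulift H (KK q sq n) = pp 0 :=
  (Ulift_mk H _).trans (preLift_ι _)

lemma Ulift_Ki (H : IsRep q sq n Xo pp pm h ki li) :
    Ulift H (((KK q sq n)⁻¹ : (UU q sq n)ˣ) : UU q sq n) = ki :=
  (Ulift_mk H _).trans (preLift_ι _)

lemma Ulift_L (H : IsRep q sq n Xo pp pm h ki li) : Ulift H (LL q sq n) = pm (-n) :=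
  (Ulift_mk H _).trans (preLift_ι _)

lemma Ulift_Li (H : IsRep q sq n Xo pp pm h ki li) :
    Ulift H (((LL q sq n)⁻¹ : (UU q sq n)ˣ) : UU q sq n) = li :=
  (Ulift_mk H _).trans (preLift_ι _)

end lift

end TQAEmb

namespace TQAEmb

open TQA

set_option linter.unusedSectionVars false

/-! ### Modules on functions on a lattice -/

section gklo
variable {q sq : ℂ} [hq : QGen q] [hs : Fact (sq ^ 2 = q)]
variable {a : ℕ}

/-- Genericity of the spectral parameters. -/
structure Gnr (q : ℂ) (b : Fin a → ℂ) : Prop where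
  ne0 : ∀ i, b i ≠ 0
  gen : ∀ i k, i ≠ k → ∀ s : ℤ, b i ^ 2 ≠ q ^ (2 * s) * b k ^ 2

/-- The spectral variable `w_i = b_i q^{2J_i}`. -/
def ww (q : ℂ) (b : Fin a → ℂ) (i : Fin a) (J : Fin a → ℤ) : ℂ := b i * q ^ (2 * J i)

/-- Lowering the coordinate `J_i`. -/
def stp (i : Fin a) (J : Fin a → ℤ) : Fin a → ℤ := J - Pi.single i 1

/-- Raising the coordinate `J_i`. -/
def stm (i : Fin a) (J : Fin a → ℤ) : Fin a → ℤ := J + Pi.single i 1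

/-- The elementary interaction factor. -/
def Hf (q w x : ℂ) : ℂ := (w + q * x) * w / ((w - x) * (w - q ^ 2 * x))

/-- The polynomial `∏ (1 - z u)`. -/
def Zf (zs : List ℂ) (u : ℂ) : ℂ := (zs.map fun z => 1 - z * u).prod

/-- Coefficients of the raising current. -/
def alp (q : ℂ) (b : Fin a → ℂ) (i : Fin a) (J : Fin a → ℤ) : ℂ :=
  ∏ k, if k < i then q ^ J k * Hf q (ww q b i J) (ww q b k J) else 1

/-- Coefficients of the lowering current. -/
def cof (q sq : ℂ) (b : Fin a → ℂ) (zs : List ℂ) (t : ℂ) (i : Fin a) (J : Fin a → ℤ) : ℂ :=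
  t * q ^ (J i + 1) / ((1 - q) * dl sq) *
    (∏ k, if i < k then q ^ J k * Hf q (q ^ 2 * ww q b i J) (ww q b k J) else 1) *
    Zf zs (q ^ 2 * ww q b i J)⁻¹

lemma prod_split (F G : Fin a → ℂ) (j : Fin a) (h : ∀ k, k ≠ j → F k = G k) :
    ∃ R, ∏ k, F k = F j * R ∧ ∏ k, G k = G j * R := by
  refine ⟨∏ k ∈ Finset.univ.erase j, F k, (Finset.mul_prod_erase _ _ (Finset.mem_univ j)).symm, ?_⟩
  rw [← Finset.mul_prod_erase _ G (Finset.mem_univ j)]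
  congr 1
  exact Finset.prod_congr rfl fun k hk => (h k (Finset.ne_of_mem_erase hk)).symm

@[simp] lemma stp_same (i : Fin a) (J : Fin a → ℤ) : stp i J i = J i - 1 := by simp [stp]
@[simp] lemma stm_same (i : Fin a) (J : Fin a → ℤ) : stm i J i = J i + 1 := by simp [stm]
lemma stp_ne {i k : Fin a} (h : k ≠ i) (J : Fin a → ℤ) : stp i J k = J k := by simp [stp, h]
lemma stm_ne {i k : Fin a} (h : k ≠ i) (J : Fin a → ℤ) : stm i J k = J k := by simp [stm, h]
lemma stp_stm (i : Fin a) (J : Fin a → ℤ) : stp i (stm i J) = J := by simp [stp, stm]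
lemma stm_stp (i : Fin a) (J : Fin a → ℤ) : stm i (stp i J) = J := by simp [stp, stm]
lemma stp_stm_comm (i k : Fin a) (J : Fin a → ℤ) : stp i (stm k J) = stm k (stp i J) := by
  simp only [stp, stm]; abel

lemma ww_stp_same (b : Fin a → ℂ) (i : Fin a) (J : Fin a → ℤ) :
    ww q b i (stp i J) = (q ^ 2)⁻¹ * ww q b i J := by
  have := hq.ne0
  simp only [ww, stp_same]
  rw [mul_sub, zpow_sub₀ this]
  norm_cast
  field_simp

lemma ww_stm_same (b : Fin a → ℂ) (i : Fin a) (J : Fin a → ℤ) :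
    ww q b i (stm i J) = q ^ 2 * ww q b i J := by
  have := hq.ne0
  simp only [ww, stm_same]
  rw [mul_add, zpow_add₀ this]
  norm_cast
  field_simp

lemma ww_stp_ne (b : Fin a → ℂ) {i k : Fin a} (h : k ≠ i) (J : Fin a → ℤ) :
    ww q b k (stp i J) = ww q b k J := by rw [ww, stp_ne h, ww]

lemma ww_stm_ne (b : Fin a → ℂ) {i k : Fin a} (h : k ≠ i) (J : Fin a → ℤ) :
    ww q b k (stm i J) = ww q b k J := by rw [ww, stm_ne h, ww]

lemma ww_ne0 {b : Fin a → ℂ} (hb : Gnr q b) (i : Fin a) (J : Fin a → ℤ) : ww q b i J ≠ 0 :=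
  mul_ne_zero (hb.ne0 i) (zpow_ne_zero _ hq.ne0)

lemma ww_sep {b : Fin a → ℂ} (hb : Gnr q b) {i k : Fin a} (h : i ≠ k) (J : Fin a → ℤ) (c : ℂ)
    (s : ℤ) (hc : c ^ 2 = q ^ (2 * s)) : ww q b i J - c * ww q b k J ≠ 0 := by
  intro h0
  have h1 : ww q b i J ^ 2 = c ^ 2 * ww q b k J ^ 2 := by
    rw [sub_eq_zero.mp h0]; ring
  have hq0 := hq.ne0
  apply hb.gen i k h (s + 2 * J k - 2 * J i)
  rw [hc] at h1
  simp only [ww, mul_pow] at h1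
  have e : ∀ m : ℤ, (q ^ (2 * m)) ^ 2 = q ^ (4 * m) := fun m => by
    rw [← zpow_natCast, ← zpow_mul]; congr 1; push_cast; ring
  rw [e, e] at h1
  have h2 : q ^ (4 * J i) ≠ 0 := zpow_ne_zero _ hq0
  apply mul_right_cancel₀ h2
  rw [h1, show 2 * (s + 2 * J k - 2 * J i) = 2 * s + 4 * J k - 4 * J i by ring,
    zpow_sub₀ hq0, zpow_add₀ hq0]
  field_simp

variable {b : Fin a → ℂ}

lemma sep1 (hb : Gnr q b) {i k : Fin a} (h : i ≠ k) (J : Fin a → ℤ) :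
    ww q b i J - ww q b k J ≠ 0 := by
  simpa using ww_sep hb h J 1 0 (by simp)

lemma sep2 (hb : Gnr q b) {i k : Fin a} (h : i ≠ k) (J : Fin a → ℤ) :
    ww q b i J - q ^ 2 * ww q b k J ≠ 0 := ww_sep hb h J (q ^ 2) 2 (by norm_cast; ring)

lemma sep3 (hb : Gnr q b) {i k : Fin a} (h : i ≠ k) (J : Fin a → ℤ) :
    ww q b i J + q * ww q b k J ≠ 0 := by
  have := ww_sep hb h J (-q) 1 (by norm_cast; ring)
  rwa [neg_mul, sub_neg_eq_add] at this

lemma sep2' (hb : Gnr q b) {i k : Fin a} (h : i ≠ k) (J : Fin a → ℤ) :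
    q ^ 2 * ww q b i J - ww q b k J ≠ 0 := by
  intro h0; exact sep2 hb h.symm J (by linear_combination -h0)

lemma sep3' (hb : Gnr q b) {i k : Fin a} (h : i ≠ k) (J : Fin a → ℤ) :
    q * ww q b i J + ww q b k J ≠ 0 := by
  intro h0; exact sep3 hb h.symm J (by linear_combination h0)

lemma PQ_nz (hb : Gnr q b) {i k : Fin a} (h : i ≠ k) (J : Fin a → ℤ) :
    PQ q (ww q b i J) (ww q b k J) ≠ 0 := by
  have hq0 := hq.ne0
  refine mul_ne_zero (sep2 hb h J) ?_
  intro h0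
  apply sep3' hb h J
  have : q * (ww q b i J + q⁻¹ * ww q b k J) = 0 := by rw [h0, mul_zero]
  rw [← this]; field_simp

lemma PQ_nz' (hb : Gnr q b) {i k : Fin a} (h : i ≠ k) (J : Fin a → ℤ) :
    PQ q⁻¹ (q ^ 2 * ww q b i J) (q ^ 2 * ww q b k J) ≠ 0 := by
  have hq0 := hq.ne0
  have : PQ q⁻¹ (q ^ 2 * ww q b i J) (q ^ 2 * ww q b k J) =
      q ^ 2 * ((q ^ 2 * ww q b i J - ww q b k J) * (ww q b i J + q * ww q b k J)) := by
    unfold PQ; field_simp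
  rw [this]
  exact mul_ne_zero (pow_ne_zero 2 hq0) (mul_ne_zero (sep2' hb h J) (sep3 hb h J))

lemma ww_congr (b : Fin a → ℂ) {J J' : Fin a → ℤ} {k : Fin a} (h : J' k = J k) :
    ww q b k J' = ww q b k J := by rw [ww, ww, h]

lemma alp_congr (b : Fin a → ℂ) {i : Fin a} {J J' : Fin a → ℤ} (h : ∀ k, k ≤ i → J' k = J k) :
    alp q b i J' = alp q b i J := by
  unfold alp
  refine Finset.prod_congr rfl fun k _ => ?_
  by_cases hk : k < i
  · rw [if_pos hk, if_pos hk, h k hk.le, ww_congr b (h k hk.le), ww_congr b (h i le_rfl)]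
  · rw [if_neg hk, if_neg hk]

lemma cof_congr (b : Fin a → ℂ) (zs : List ℂ) (t : ℂ) {i : Fin a} {J J' : Fin a → ℤ}
    (h : ∀ k, i ≤ k → J' k = J k) : cof q sq b zs t i J' = cof q sq b zs t i J := by
  unfold cof
  rw [h i le_rfl, ww_congr b (h i le_rfl)]
  congr 2
  refine Finset.prod_congr rfl fun k _ => ?_
  by_cases hk : i < k
  · rw [if_pos hk, if_pos hk, h k hk.le, ww_congr b (h k hk.le)]
  · rw [if_neg hk, if_neg hk]

lemma alp_split (b : Fin a → ℂ) {i j : Fin a} (hij : i < j) {J J' : Fin a → ℤ}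
    (h : ∀ k, k ≠ i → J' k = J k) : ∃ R,
    alp q b j J = q ^ J i * Hf q (ww q b j J) (ww q b i J) * R ∧
    alp q b j J' = q ^ J' i * Hf q (ww q b j J) (ww q b i J') * R := by
  obtain ⟨R, e1, e2⟩ := prod_split
    (fun k => if k < j then q ^ J k * Hf q (ww q b j J) (ww q b k J) else 1)
    (fun k => if k < j then q ^ J' k * Hf q (ww q b j J') (ww q b k J') else 1) i (by
      intro k hk
      simp only [h k hk, ww_congr b (h k hk), ww_congr b (h j hij.ne')])
  simp only [if_pos hij] at e1 e2
  exact ⟨R, e1, e2.trans (by rw [ww_congr b (h j hij.ne')])⟩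

lemma cof_split (b : Fin a → ℂ) (zs : List ℂ) (t : ℂ) {i j : Fin a} (hij : i < j)
    {J J' : Fin a → ℤ} (h : ∀ k, k ≠ j → J' k = J k) : ∃ R,
    cof q sq b zs t i J = q ^ J j * Hf q (q ^ 2 * ww q b i J) (ww q b j J) * R ∧
    cof q sq b zs t i J' = q ^ J' j * Hf q (q ^ 2 * ww q b i J) (ww q b j J') * R := by
  obtain ⟨R, e1, e2⟩ := prod_split
    (fun k => if i < k then q ^ J k * Hf q (q ^ 2 * ww q b i J) (ww q b k J) else 1)
    (fun k => if i < k then q ^ J' k * Hf q (q ^ 2 * ww q b i J') (ww q b k J') else 1) j (by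
      intro k hk
      simp only [h k hk, ww_congr b (h k hk), ww_congr b (h i hij.ne)])
  simp only [if_pos hij] at e1 e2
  unfold cof
  rw [e1, e2, ww_congr b (h i hij.ne), h i hij.ne]
  exact ⟨t * q ^ (J i + 1) / ((1 - q) * dl sq) * R * Zf zs (q ^ 2 * ww q b i J)⁻¹,
    by ring, by ring⟩

lemma H_exch {u v : ℂ} (hq0 : q ≠ 0) (h1 : v - u ≠ 0) (h2 : v - q ^ 2 * u ≠ 0)
    (h3 : q ^ 2 * v - u ≠ 0) :
    q⁻¹ * Hf q v ((q ^ 2)⁻¹ * u) * PQ q u v = -(Hf q v u * PQ q v u) := by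
  have h4 : v - (q ^ 2)⁻¹ * u ≠ 0 := by
    intro h; apply h3
    have : q ^ 2 * (v - (q ^ 2)⁻¹ * u) = 0 := by rw [h, mul_zero]
    rw [← this]; field_simp
  have h5 : q ^ 2 * ((q ^ 2)⁻¹ * u) = u := by field_simp
  unfold Hf PQ
  rw [h5]
  have h6 : v - (q ^ 2)⁻¹ * u = (q ^ 2)⁻¹ * (q ^ 2 * v - u) := by field_simp
  rw [h6]
  field_simp
  ring

lemma alp_exch (hb : Gnr q b) {i j : Fin a} (h : i < j) (J : Fin a → ℤ) :
    alp q b i J * alp q b j (stp i J) * PQ q (ww q b i J) (ww q b j J) =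
      -(alp q b j J * alp q b i (stp j J) * PQ q (ww q b j J) (ww q b i J)) := by
  have hq0 := hq.ne0
  rw [alp_congr b (J := J) (J' := stp j J) (i := i)
    fun k hk => stp_ne (lt_of_le_of_lt hk h).ne J]
  obtain ⟨R, e1, e2⟩ := alp_split (q := q) b h (J := J) (J' := stp i J) fun k hk => stp_ne hk J
  rw [e1, e2, stp_same, ww_stp_same, zpow_sub_one₀ hq0]
  have := H_exch hq0 (sep1 hb h.ne' J) (sep2 hb h.ne' J) (sep2' hb h.ne' J)
  linear_combination alp q b i J * q ^ J i * R * this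

lemma cof_exch (hb : Gnr q b) (zs : List ℂ) (t : ℂ) {i j : Fin a} (h : i < j) (J : Fin a → ℤ) :
    cof q sq b zs t i J * cof q sq b zs t j (stm i J) *
        PQ q⁻¹ (q ^ 2 * ww q b i J) (q ^ 2 * ww q b j J) =
      -(cof q sq b zs t j J * cof q sq b zs t i (stm j J) *
        PQ q⁻¹ (q ^ 2 * ww q b j J) (q ^ 2 * ww q b i J)) := by
  have hq0 := hq.ne0
  rw [cof_congr b zs t (J := J) (J' := stm i J) (i := j)
    fun k hk => stm_ne (lt_of_lt_of_le h hk).ne' J]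
  obtain ⟨R, e1, e2⟩ := cof_split (q := q) (sq := sq) b zs t h (J := J) (J' := stm j J)
    fun k hk => stm_ne hk J
  rw [e1, e2, stm_same, ww_stm_same, zpow_add_one₀ hq0]
  have h1 := sep1 hb h.ne J
  have h2 := sep2 hb h.ne J
  have h3 := sep2' hb h.ne J
  have h4 : q ^ 2 * ww q b i J - q ^ 2 * ww q b j J ≠ 0 := by
    rw [← mul_sub]; exact mul_ne_zero (pow_ne_zero 2 hq0) h1
  have h5 : q ^ 2 * ww q b i J - q ^ 2 * (q ^ 2 * ww q b j J) ≠ 0 := by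
    rw [← mul_sub]; exact mul_ne_zero (pow_ne_zero 2 hq0) h2
  have : Hf q (q ^ 2 * ww q b i J) (ww q b j J) *
      PQ q⁻¹ (q ^ 2 * ww q b i J) (q ^ 2 * ww q b j J) =
      -(q * Hf q (q ^ 2 * ww q b i J) (q ^ 2 * ww q b j J) *
      PQ q⁻¹ (q ^ 2 * ww q b j J) (q ^ 2 * ww q b i J)) := by
    unfold Hf PQ
    generalize ww q b i J = u at *
    generalize ww q b j J = v at *
    have h6 : q ^ 2 * u - q ^ 2 * v = q ^ 2 * (u - v) := by ring
    have h7 : q ^ 2 * u - q ^ 2 * (q ^ 2 * v) = q ^ 2 * (u - q ^ 2 * v) := by ring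
    rw [h6, h7]
    field_simp
    ring
  linear_combination cof q sq b zs t j J * q ^ J j * R * this

lemma cd_plus (hb : Gnr q b) : CurrentData sq (alp q b) (ww q b) stp where
  s0 := sq_ne q
  w0 := ww_ne0 hb
  comm i j J := by simp only [stp]; abel
  same i J := by rw [hs.out, ww_stp_same]
  diff i j J h := ww_stp_ne b h.symm J
  exch i j J h := by
    rw [hs.out]
    rcases lt_or_gt_of_ne h with h | h
    · exact alp_exch hb h J
    · rw [alp_exch hb h J, neg_neg]
  nz i j J h := by rw [hs.out]; exact PQ_nz hb h J

lemma cd_minus (hb : Gnr q b) (zs : List ℂ) (t : ℂ) :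
    CurrentData sq⁻¹ (cof q sq b zs t) (fun i J => q ^ 2 * ww q b i J) stm where
  s0 := inv_ne_zero (sq_ne q)
  w0 i J := mul_ne_zero (pow_ne_zero 2 hq.ne0) (ww_ne0 hb i J)
  comm i j J := by simp only [stm]; abel
  same i J := by rw [inv_pow, hs.out, ww_stm_same]; simp
  diff i j J h := by rw [ww_stm_ne b h.symm J]
  exch i j J h := by
    rw [inv_pow, hs.out]
    rcases lt_or_gt_of_ne h with h | h
    · exact cof_exch hb zs t h J
    · rw [cof_exch hb zs t h J, neg_neg]
  nz i j J h := by rw [inv_pow, hs.out]; exact PQ_nz' hb h J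

end gklo

end TQAEmb

namespace TQAEmb

open TQA

set_option linter.unusedSectionVars false

/-! ### Eigenvalues of the Cartan currents -/

section psum
variable {ι : Type*} [DecidableEq ι] [Fintype ι]

open PowerSeries in
/-- Power sums of the poles minus power sums of the zeros. -/
def psum (cs : List ℂ) (p : ι → ℂ) (m : ℤ) : ℂ := ∑ i, p i ^ m - (cs.map fun c => c ^ m).sum

open PowerSeries in
lemma LD_P (cs : List ℂ) (p : ι → ℂ) : LD (NP cs * FP p Finset.univ)
    ((cs.map fun c => -(geo c - 1)).sum + ∑ i, (geo (p i) - 1)) :=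
  (LD_list cs _ _ LD_lin).mul (LD_prod _ _ _ fun i => LD_geo (p i))

open PowerSeries in
lemma LD_M (cs : List ℂ) (p : ι → ℂ) : LD (NM cs * FM p Finset.univ)
    ((cs.map fun c => -(geo c⁻¹ - 1)).sum + ∑ i, (geo (p i)⁻¹ - 1)) := by
  refine (LD_list cs _ _ fun c => ?_).mul (LD_prod _ _ _ fun i => ?_)
  · simpa using (LD_C (-c)).mul (LD_lin c⁻¹)
  · simpa using (LD_C (-(p i)⁻¹)).mul (LD_geo (p i)⁻¹)

open PowerSeries in
lemma coeff_list_sum (k : ℕ) (l : List ℂ) (f : ℂ → ℂ⟦X⟧) :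
    coeff k (l.map f).sum = (l.map fun c => coeff k (f c)).sum := by
  induction l with
  | nil => simp
  | cons c l ih => simp only [List.map_cons, List.sum_cons, map_add, ih]

open PowerSeries in
lemma coeff_geo_sub (c : ℂ) (k : ℕ) : coeff (k + 1) (geo c - 1) = c ^ (k + 1) := by
  simp [geo, coeff_one]

open PowerSeries in
lemma coeff_geo_sub0 (c : ℂ) : coeff 0 (geo c - 1) = 0 := by simp [geo]

lemma list_sum_neg (l : List ℂ) (f : ℂ → ℂ) : (l.map fun c => -f c).sum = -(l.map f).sum := by
  induction l with
  | nil => simp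
  | cons c l ih => simp only [List.map_cons, List.sum_cons, ih]; ring

open PowerSeries in
lemma exp_P (cs : List ℂ) (p : ι → ℂ) (m : ℕ) :
    ((m : ℂ) + 1) * coeff (m + 1) (NP cs * FP p Finset.univ) = ∑ k ∈ Finset.range (m + 1),
      psum cs p ((k : ℤ) + 1) * coeff (m - k) (NP cs * FP p Finset.univ) := by
  rw [LD_coeff (LD_P cs p)]
  · refine Finset.sum_congr rfl fun k _ => ?_
    congr 1
    rw [map_add, coeff_list_sum, map_sum]
    simp only [map_neg, coeff_geo_sub]
    rw [list_sum_neg, psum]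
    have : ∀ c : ℂ, c ^ ((k : ℤ) + 1) = c ^ (k + 1) := fun c => by norm_cast
    simp only [this]; ring
  · rw [map_add, coeff_list_sum, map_sum]
    simp only [map_neg, coeff_geo_sub0]; simp

open PowerSeries in
lemma exp_M (cs : List ℂ) (p : ι → ℂ) (m : ℕ) :
    ((m : ℂ) + 1) * coeff (m + 1) (NM cs * FM p Finset.univ) = ∑ k ∈ Finset.range (m + 1),
      psum cs p (-((k : ℤ) + 1)) * coeff (m - k) (NM cs * FM p Finset.univ) := by
  rw [LD_coeff (LD_M cs p)]
  · refine Finset.sum_congr rfl fun k _ => ?_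
    congr 1
    rw [map_add, coeff_list_sum, map_sum]
    simp only [map_neg, coeff_geo_sub]
    rw [list_sum_neg, psum]
    have : ∀ c : ℂ, c ^ (-((k : ℤ) + 1)) = c⁻¹ ^ (k + 1) := fun c => by
      rw [zpow_neg, ← inv_zpow]; norm_cast
    simp only [this]; ring
  · rw [map_add, coeff_list_sum, map_sum]
    simp only [map_neg, coeff_geo_sub0]; simp

lemma exp_extP (cs : List ℂ) (p : ι → ℂ) (m : ℕ) :
    ((m : ℂ) + 1) * extP (NP cs * FP p Finset.univ) (m + 1) = ∑ k ∈ Finset.range (m + 1),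
      psum cs p ((k : ℤ) + 1) * extP (NP cs * FP p Finset.univ) (m + 1 - ((k : ℤ) + 1)) := by
  have h := exp_P cs p m
  unfold extP
  rw [if_neg (by omega), show ((m : ℤ) + 1).toNat = m + 1 by omega, h]
  refine Finset.sum_congr rfl fun k hk => ?_
  have := Finset.mem_range.mp hk
  rw [if_neg (by omega), show ((m : ℤ) + 1 - ((k : ℤ) + 1)).toNat = m - k by omega]

lemma exp_extM (n : ℤ) (cs : List ℂ) (p : ι → ℂ) (m : ℕ) :
    ((m : ℂ) + 1) * extM n (NM cs * FM p Finset.univ) (-n - (m + 1)) = ∑ k ∈ Finset.range (m + 1),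
      psum cs p (-((k : ℤ) + 1)) *
        extM n (NM cs * FM p Finset.univ) (-n - (m + 1) + ((k : ℤ) + 1)) := by
  have h := exp_M cs p m
  unfold extM
  rw [if_neg (by omega), show (-n - (-n - ((m : ℤ) + 1))).toNat = m + 1 by omega, h]
  refine Finset.sum_congr rfl fun k hk => ?_
  have := Finset.mem_range.mp hk
  rw [if_neg (by omega), show (-n - (-n - ((m : ℤ) + 1) + ((k : ℤ) + 1))).toNat = m - k by omega]

end psum

section cartan
variable {S : Type*}

/-- The diagonal operator of multiplication by `f`. -/
def dg (f : S → ℂ) : Module.End ℂ (S → ℂ) where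
  toFun g J := f J * g J
  map_add' g h := by funext J; simp [mul_add]
  map_smul' c g := by funext J; simp; ring

@[simp] lemma dg_apply (f g : S → ℂ) (J : S) : dg f g J = f J * g J := rfl

lemma dg_mul (f g : S → ℂ) : dg f * dg g = dg (f * g) := by
  refine LinearMap.ext fun u => funext fun J => ?_
  simp [mul_assoc]

lemma dg_comm (f g : S → ℂ) : dg f * dg g = dg g * dg f := by rw [dg_mul, dg_mul, mul_comm]

lemma dg_one : dg (1 : S → ℂ) = 1 := by
  refine LinearMap.ext fun u => funext fun J => ?_
  simp

lemma dg_smul (c : ℂ) (f : S → ℂ) : c • dg f = dg (c • f) := by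
  refine LinearMap.ext fun u => funext fun J => ?_
  simp [mul_assoc]

lemma dg_zero : dg (0 : S → ℂ) = 0 := by
  refine LinearMap.ext fun u => funext fun J => ?_
  simp

lemma dg_sub (f g : S → ℂ) : dg f - dg g = dg (f - g) := by
  refine LinearMap.ext fun u => funext fun J => ?_
  simp [sub_mul]

lemma dg_sum {κ : Type*} (s : Finset κ) (f : κ → S → ℂ) : ∑ k ∈ s, dg (f k) = dg (∑ k ∈ s, f k) := by
  refine LinearMap.ext fun u => funext fun J => ?_
  simp [Finset.sum_mul]

variable {ι : Type*} [Fintype ι] {al w : ι → S → ℂ} {st : ι → S → S}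

lemma dg_Xop_q {f : S → ℂ} {c : ℂ} (h : ∀ i J, f J = c * f (st i J)) (r : ℤ) :
    dg f * Xop al w st r = c • (Xop al w st r * dg f) := by
  refine LinearMap.ext fun u => funext fun J => ?_
  simp only [Module.End.mul_apply, dg_apply, Xop_apply, LinearMap.smul_apply, Pi.smul_apply,
    smul_eq_mul, Finset.mul_sum]
  refine Finset.sum_congr rfl fun i _ => ?_
  rw [h i J]; ring

lemma dg_Xop_h {f : S → ℂ} {c : ℂ} {m : ℤ} (hw : ∀ i J, w i J ≠ 0)
    (h : ∀ i J, f J - f (st i J) = c * w i J ^ m) (r : ℤ) :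
    dg f * Xop al w st r - Xop al w st r * dg f = c • Xop al w st (m + r) := by
  refine LinearMap.ext fun u => funext fun J => ?_
  simp only [Module.End.mul_apply, dg_apply, Xop_apply, LinearMap.smul_apply, Pi.smul_apply,
    LinearMap.sub_apply, Pi.sub_apply, smul_eq_mul, Finset.mul_sum, ← Finset.sum_sub_distrib]
  refine Finset.sum_congr rfl fun i _ => ?_
  rw [zpow_add₀ (hw i J)]
  linear_combination al i J * w i J ^ r * u (st i J) * h i J

end cartan

section gkloCartan
variable {q sq : ℂ} [hq : QGen q] [hs : Fact (sq ^ 2 = q)]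
variable {a : ℕ}

/-- The degree `J ↦ ∑ J_k`. -/
def tot (J : Fin a → ℤ) : ℤ := ∑ k, J k

/-- The zeros of the Cartan eigenvalue. -/
def csJ (q : ℂ) (b : Fin a → ℂ) (zs : List ℂ) (J : Fin a → ℤ) : List ℂ :=
  List.ofFn (fun i => -(q * ww q b i J)) ++ zs

/-- The poles of the Cartan eigenvalue. -/
def pJ (q : ℂ) (b : Fin a → ℂ) (J : Fin a → ℤ) (i : Fin a × Bool) : ℂ :=
  if i.2 then q ^ 2 * ww q b i.1 J else ww q b i.1 J

/-- Eigenvalues of `φ⁺_r`. -/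
def phP (q : ℂ) (b : Fin a → ℂ) (zs : List ℂ) (t : ℂ) (r : ℤ) (J : Fin a → ℤ) : ℂ :=
  t * q ^ tot J * extP (NP (csJ q b zs J) * FP (pJ q b J) Finset.univ) r

/-- Eigenvalues of `φ⁻_r`. -/
def phM (q : ℂ) (b : Fin a → ℂ) (zs : List ℂ) (t : ℂ) (n r : ℤ) (J : Fin a → ℤ) : ℂ :=
  t * q ^ tot J * extM n (NM (csJ q b zs J) * FM (pJ q b J) Finset.univ) r

/-- Eigenvalues of `h_m`. -/
def hhJ (q sq : ℂ) (b : Fin a → ℂ) (zs : List ℂ) (m : ℤ) (J : Fin a → ℤ) : ℂ :=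
  (m * dl sq)⁻¹ * psum (csJ q b zs J) (pJ q b J) m

/-- The constant `χ` in the eigenvalue of the leading term of `φ⁻`. -/
def chi (q : ℂ) (b : Fin a → ℂ) (zs : List ℂ) : ℂ :=
  (zs.map fun z => -z).prod * ∏ i, (q * b i)⁻¹

lemma tot_stp (i : Fin a) (J : Fin a → ℤ) : tot (stp i J) = tot J - 1 := by
  simp [tot, stp, Finset.sum_sub_distrib]

lemma tot_stm (i : Fin a) (J : Fin a → ℤ) : tot (stm i J) = tot J + 1 := by
  simp [tot, stm, Finset.sum_add_distrib]

open PowerSeries in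
lemma coeff0_list (l : List ℂ) (f : ℂ → ℂ⟦X⟧) :
    coeff 0 (l.map f).prod = (l.map fun c => coeff 0 (f c)).prod := by
  simp only [coeff_zero_eq_constantCoeff]
  rw [map_list_prod, List.map_map]; rfl

open PowerSeries in
lemma phP_zero (b : Fin a → ℂ) (zs : List ℂ) (t : ℂ) (J : Fin a → ℤ) :
    phP q b zs t 0 J = t * q ^ tot J := by
  have : coeff 0 (NP (csJ q b zs J) * FP (pJ q b J) Finset.univ) = 1 := by
    rw [coeff_zero_eq_constantCoeff_apply, map_mul, ← coeff_zero_eq_constantCoeff_apply,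
      ← coeff_zero_eq_constantCoeff_apply, NP, coeff0_list, FP]
    simp only [coeff_zero_eq_constantCoeff, map_prod]
    simp [lin, geo, ← coeff_zero_eq_constantCoeff_apply, -coeff_zero_eq_constantCoeff]
  rw [phP, extP, if_neg (by simp), Int.toNat_zero, this, mul_one]

open PowerSeries in
lemma phM_lead (b : Fin a → ℂ) (hb : Gnr q b) (zs : List ℂ) (t : ℂ) (n : ℤ) (J : Fin a → ℤ) :
    phM q b zs t n (-n) J = t * q ^ (-tot J) * chi q b zs := by
  have hq0 := hq.ne0
  have : coeff 0 (NM (csJ q b zs J) * FM (pJ q b J) Finset.univ) =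
      q ^ (-(2 * tot J)) * chi q b zs := by
    rw [coeff_zero_eq_constantCoeff_apply, map_mul, ← coeff_zero_eq_constantCoeff_apply,
      ← coeff_zero_eq_constantCoeff_apply, NM, coeff0_list, FM]
    simp only [coeff_zero_eq_constantCoeff, map_prod]
    have h1 : ∀ c : ℂ, constantCoeff (C (-c) * lin c⁻¹) = -c := fun c => by simp [lin]
    have h2 : ∀ c : ℂ, constantCoeff (C (-c⁻¹) * geo c⁻¹) = -c⁻¹ := fun c => by
      simp [geo, ← coeff_zero_eq_constantCoeff_apply, -coeff_zero_eq_constantCoeff]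
    simp only [h1, h2, csJ, List.map_append, List.prod_append, List.map_ofFn, List.prod_ofFn,
      Fintype.prod_prod_type, Fintype.prod_bool, pJ, Function.comp]
    have h3 : q ^ (-(2 * tot J)) = ∏ i, (q ^ (2 * J i))⁻¹ := by
      rw [tot, Finset.mul_sum, zpow_neg, Finset.prod_inv_distrib]
      congr 1
      induction (Finset.univ : Finset (Fin a)) using Finset.induction_on with
      | empty => simp
      | insert i s hi ih => rw [Finset.sum_insert hi, Finset.prod_insert hi, zpow_add₀ hq0, ih]
    rw [chi, h3]
    have h4 : (∏ i, -(-(q * ww q b i J))) * ∏ i, (-(q ^ 2 * ww q b i J)⁻¹ * -(ww q b i J)⁻¹) =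
        (∏ i, (q ^ (2 * J i))⁻¹) * ∏ i, (q * b i)⁻¹ := by
      rw [← Finset.prod_mul_distrib, ← Finset.prod_mul_distrib]
      refine Finset.prod_congr rfl fun i _ => ?_
      have h5 := hb.ne0 i
      have h6 : q ^ (2 * J i) ≠ 0 := zpow_ne_zero _ hq0
      rw [ww]
      generalize q ^ (2 * J i) = y at *
      field_simp
    simp only [reduceIte, Bool.false_eq_true] 
    linear_combination (zs.map fun z => -z).prod * h4
  rw [phM, extM, if_neg (by simp), show (-n - -n).toNat = 0 by simp, this,
    mul_assoc, mul_assoc, ← mul_assoc (q ^ tot J), ← zpow_add₀ hq0,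
    show tot J + -(2 * tot J) = -tot J by ring]

lemma psum_J (b : Fin a → ℂ) (zs : List ℂ) (J : Fin a → ℤ) (m : ℤ) :
    psum (csJ q b zs J) (pJ q b J) m =
      (∑ i, (1 + (q ^ 2) ^ m - (-q) ^ m) * ww q b i J ^ m) - (zs.map fun z => z ^ m).sum := by
  simp only [psum, csJ, List.map_append, List.sum_append, List.map_ofFn, List.sum_ofFn,
    Fintype.sum_prod_type, Fintype.sum_bool, pJ, Function.comp, reduceIte, Bool.false_eq_true]
  rw [← sub_sub, ← Finset.sum_sub_distrib]
  congr 1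
  refine Finset.sum_congr rfl fun i _ => ?_
  rw [← neg_mul, mul_zpow, mul_zpow]; ring

lemma hxid (m : ℤ) : (1 + (q ^ 2) ^ m - (-q) ^ m) * (1 - ((q ^ 2)⁻¹) ^ m) =
    (q ^ (2 * m) - q ^ (-(2 * m))) - (-1) ^ m * (q ^ m - q ^ (-m)) := by
  have hq0 := hq.ne0
  have h1 : (q ^ 2) ^ m = (q ^ m) ^ 2 := by
    rw [← zpow_natCast, ← zpow_natCast, ← zpow_mul, ← zpow_mul, mul_comm]
  have h2 : (-q) ^ m = (-1) ^ m * q ^ m := by rw [← mul_zpow]; congr 1; ring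
  have h3 : q ^ (2 * m) = (q ^ m) ^ 2 := by rw [zpow_mul]; exact h1
  rw [zpow_neg, zpow_neg, inv_zpow, h1, h2, h3]
  have : q ^ m ≠ 0 := zpow_ne_zero _ hq0
  generalize q ^ m = y at *
  field_simp
  ring

lemma hh_stp (b : Fin a → ℂ) (zs : List ℂ) (m : ℤ) (i : Fin a) (J : Fin a → ℤ) :
    hhJ q sq b zs m J - hhJ q sq b zs m (stp i J) =
      ((m * dl sq)⁻¹ * ((1 + (q ^ 2) ^ m - (-q) ^ m) * (1 - ((q ^ 2)⁻¹) ^ m))) * ww q b i J ^ m := by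
  rw [hhJ, hhJ, psum_J, psum_J, ← mul_sub, sub_sub_sub_cancel_right, ← Finset.sum_sub_distrib,
    Finset.sum_eq_single i]
  · rw [ww_stp_same, mul_zpow]; ring
  · intro k _ hk
    rw [ww_stp_ne b hk]; ring
  · simp

lemma hh_stm (b : Fin a → ℂ) (zs : List ℂ) (m : ℤ) (i : Fin a) (J : Fin a → ℤ) :
    hhJ q sq b zs m J - hhJ q sq b zs m (stm i J) =
      -((m * dl sq)⁻¹ * ((1 + (q ^ 2) ^ m - (-q) ^ m) * (1 - ((q ^ 2)⁻¹) ^ m))) *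
        (q ^ 2 * ww q b i J) ^ m := by
  have h := hh_stp (q := q) (sq := sq) b zs m i (stm i J)
  rw [stp_stm, ww_stm_same] at h
  linear_combination -h

end gkloCartan

end TQAEmb

namespace TQAEmb

open TQA

set_option linter.unusedSectionVars false

/-! ### Verification of the current relations -/

section gkloXY
variable {q sq : ℂ} [hq : QGen q] [hs : Fact (sq ^ 2 = q)]
variable {a : ℕ} {b : Fin a → ℂ}

/-- The product of interaction factors over `k ≠ i`. -/
def Hp (q : ℂ) (b : Fin a → ℂ) (i : Fin a) (v : ℂ) (J : Fin a → ℤ) : ℂ :=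
  ∏ k, if k = i then 1 else Hf q v (ww q b k J)

lemma q_tot (J : Fin a → ℤ) : q ^ tot J = ∏ i, q ^ J i := by
  have hq0 := hq.ne0
  rw [tot]
  induction (Finset.univ : Finset (Fin a)) using Finset.induction_on with
  | empty => simp
  | insert i s hi ih => rw [Finset.sum_insert hi, Finset.prod_insert hi, zpow_add₀ hq0, ih]

lemma Hp_comb (i : Fin a) (v : ℂ) (J : Fin a → ℤ) :
    q ^ J i * ((∏ k, if k < i then q ^ J k * Hf q v (ww q b k J) else 1) *
      ∏ k, if i < k then q ^ J k * Hf q v (ww q b k J) else 1) = q ^ tot J * Hp q b i v J := by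
  have : q ^ J i = ∏ k, if k = i then q ^ J k else 1 := by simp
  rw [this, q_tot, Hp, ← Finset.prod_mul_distrib, ← Finset.prod_mul_distrib,
    ← Finset.prod_mul_distrib]
  refine Finset.prod_congr rfl fun k _ => ?_
  rcases lt_trichotomy k i with h | h | h
  · simp [h, h.ne, h.not_gt]
  · simp [h]
  · simp [h, h.ne', h.not_gt]

lemma q_sub (m : ℤ) (hm : m ≠ 0) : 1 - q ^ m ≠ 0 := by
  intro h
  exact hm (QGen.zpow_eq_one (sub_eq_zero.mp h).symm)

lemma q_sub1 : 1 - q ≠ 0 := by simpa using q_sub (q := q) 1 one_ne_zero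
lemma q_add1 : 1 + q ≠ 0 := by
  intro h
  have := q_sub (q := q) 2 two_ne_zero
  apply this
  norm_cast
  linear_combination (1 - q) * h

lemma cof_diag (zs : List ℂ) (t : ℂ) (i : Fin a) (J : Fin a → ℤ) :
    alp q b i J * cof q sq b zs t i (stp i J) =
      (dl sq)⁻¹ * (t * q ^ tot J * ((1 - q)⁻¹ * Hp q b i (ww q b i J) J * Zf zs (ww q b i J)⁻¹)) := by
  have hq0 := hq.ne0
  have h1 : q ^ 2 * ww q b i (stp i J) = ww q b i J := by
    rw [ww_stp_same]; field_simp
  rw [cof, h1, stp_same, sub_add_cancel, alp]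
  have h2 : (∏ k, if i < k then q ^ (stp i J) k * Hf q (ww q b i J) (ww q b k (stp i J)) else 1) =
      ∏ k, if i < k then q ^ J k * Hf q (ww q b i J) (ww q b k J) else 1 := by
    refine Finset.prod_congr rfl fun k _ => ?_
    by_cases hk : i < k
    · rw [if_pos hk, if_pos hk, stp_ne hk.ne', ww_stp_ne _ hk.ne']
    · rw [if_neg hk, if_neg hk]
  rw [h2]
  have h3 := Hp_comb (q := q) (b := b) i (ww q b i J) J
  rw [div_eq_mul_inv, mul_inv]
  linear_combination t * ((1 - q)⁻¹ * (dl sq)⁻¹) * Zf zs (ww q b i J)⁻¹ * h3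

lemma cof_diag' (zs : List ℂ) (t : ℂ) (i : Fin a) (J : Fin a → ℤ) :
    cof q sq b zs t i J * alp q b i (stm i J) =
      (dl sq)⁻¹ * (t * q ^ tot J * (q * (1 - q)⁻¹ * Hp q b i (q ^ 2 * ww q b i J) J *
        Zf zs (q ^ 2 * ww q b i J)⁻¹)) := by
  have hq0 := hq.ne0
  rw [cof, alp, ww_stm_same, zpow_add_one₀ hq0]
  have h2 : (∏ k, if k < i then q ^ (stm i J) k * Hf q (q ^ 2 * ww q b i J) (ww q b k (stm i J))
      else 1) = ∏ k, if k < i then q ^ J k * Hf q (q ^ 2 * ww q b i J) (ww q b k J) else 1 := by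
    refine Finset.prod_congr rfl fun k _ => ?_
    by_cases hk : k < i
    · rw [if_pos hk, if_pos hk, stm_ne hk.ne, ww_stm_ne _ hk.ne]
    · rw [if_neg hk, if_neg hk]
  rw [h2]
  have h3 := Hp_comb (q := q) (b := b) i (q ^ 2 * ww q b i J) J
  rw [div_eq_mul_inv, mul_inv]
  linear_combination t * q * ((1 - q)⁻¹ * (dl sq)⁻¹) * Zf zs (q ^ 2 * ww q b i J)⁻¹ * h3

lemma cof_off (hb : Gnr q b) (zs : List ℂ) (t : ℂ) {i k : Fin a} (h : i ≠ k) (J : Fin a → ℤ) :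
    alp q b i J * cof q sq b zs t k (stp i J) = cof q sq b zs t k J * alp q b i (stm k J) := by
  have hq0 := hq.ne0
  rcases lt_or_gt_of_ne h with h | h
  · rw [alp_congr b (J := J) (J' := stm k J) (i := i)
      fun l hl => stm_ne (lt_of_le_of_lt hl h).ne J,
      cof_congr b zs t (J := J) (J' := stp i J) (i := k)
      fun l hl => stp_ne (lt_of_lt_of_le h hl).ne' J, mul_comm]
  · obtain ⟨R, e1, e2⟩ := alp_split (q := q) b h (J := J) (J' := stm k J) fun l hl => stm_ne hl J
    obtain ⟨R', e3, e4⟩ := cof_split (q := q) (sq := sq) b zs t h (J := J) (J' := stp i J)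
      fun l hl => stp_ne hl J
    rw [e1, e2, e3, e4, stp_same, stm_same, ww_stp_same, ww_stm_same, zpow_add_one₀ hq0,
      zpow_sub_one₀ hq0]
    have h1 := sep1 hb h.ne' J
    have h2 := sep2 hb h.ne' J
    have h3 := ww_sep hb h.ne' J (q ^ 4) 4 (by norm_cast; ring)
    have key : q⁻¹ * Hf q (ww q b i J) (ww q b k J) *
        Hf q (q ^ 2 * ww q b k J) ((q ^ 2)⁻¹ * ww q b i J) =
        q * Hf q (q ^ 2 * ww q b k J) (ww q b i J) * Hf q (ww q b i J) (q ^ 2 * ww q b k J) := by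
      unfold Hf
      generalize ww q b i J = w at *
      generalize ww q b k J = x at *
      have g1 : q ^ 2 * x - (q ^ 2)⁻¹ * w = -(q ^ 2)⁻¹ * (w - q ^ 4 * x) := by
        field_simp; ring
      have g2 : q ^ 2 * x - q ^ 2 * ((q ^ 2)⁻¹ * w) = -(w - q ^ 2 * x) := by
        field_simp; ring
      have g3 : q ^ 2 * x - w = -(w - q ^ 2 * x) := by ring
      have g4 : q ^ 2 * x - q ^ 2 * w = -q ^ 2 * (w - x) := by ring
      have g5 : w - q ^ 2 * (q ^ 2 * x) = w - q ^ 4 * x := by ring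
      rw [g1, g2, g3, g4, g5]
      field_simp
      ring
    linear_combination q ^ J k * R * q ^ J i * R' * key

lemma pJ_ne0 (hb : Gnr q b) (J : Fin a → ℤ) (i : Fin a × Bool) : pJ q b J i ≠ 0 := by
  unfold pJ
  split_ifs
  · exact mul_ne_zero (pow_ne_zero 2 hq.ne0) (ww_ne0 hb _ _)
  · exact ww_ne0 hb _ _

lemma pJ_inj (hb : Gnr q b) (J : Fin a → ℤ) : Function.Injective (pJ q b J) := by
  have hq0 := hq.ne0
  rintro ⟨i, ε⟩ ⟨k, ε'⟩ h
  have hik : i = k := by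
    by_contra hne
    have h1 := sep1 hb hne J
    have h2 := sep2 hb hne J
    have h3 := sep2' hb hne J
    cases ε <;> cases ε' <;> simp only [pJ, reduceIte, Bool.false_eq_true] at h
    · exact h1 (by rw [h, sub_self])
    · exact h2 (by rw [h, sub_self])
    · exact h3 (by rw [h, sub_self])
    · exact h1 (by rw [mul_left_cancel₀ (pow_ne_zero 2 hq0) h, sub_self])
  subst hik
  have h1 := q_sub (q := q) 2 two_ne_zero
  have h2 := ww_ne0 hb i J
  norm_cast at h1
  have h3 := mul_ne_zero h1 h2
  cases ε <;> cases ε' <;> simp only [pJ, reduceIte, Bool.false_eq_true] at h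
  · rfl
  · exact absurd (by linear_combination h) h3
  · exact absurd (by linear_combination -h) h3
  · rfl

lemma csJ_ne0 (hb : Gnr q b) {zs : List ℂ} (hz : ∀ z ∈ zs, z ≠ 0) (J : Fin a → ℤ) :
    ∀ c ∈ csJ q b zs J, c ≠ 0 := by
  intro c hc
  rw [csJ, List.mem_append, List.mem_ofFn] at hc
  rcases hc with ⟨i, rfl⟩ | hc
  · exact neg_ne_zero.mpr (mul_ne_zero hq.ne0 (ww_ne0 hb i J))
  · exact hz c hc

/-- Residue of the Cartan eigenvalue at a pole. -/
def Rs (q : ℂ) (b : Fin a → ℂ) (zs : List ℂ) (J : Fin a → ℤ) (j : Fin a × Bool) : ℂ :=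
  ((csJ q b zs J).map fun c => 1 - c / pJ q b J j).prod *
    ∏ k ∈ Finset.univ.erase j, (1 - pJ q b J k / pJ q b J j)⁻¹

lemma cs_prod (zs : List ℂ) (J : Fin a → ℤ) (p : ℂ) :
    ((csJ q b zs J).map fun c => 1 - c / p).prod = (∏ i, (1 + q * ww q b i J / p)) * Zf zs p⁻¹ := by
  simp only [csJ, List.map_append, List.prod_append, List.map_ofFn, List.prod_ofFn,
    Function.comp, Zf, div_eq_mul_inv, neg_mul, sub_neg_eq_add]

lemma prod_erase_ite {κ : Type*} [Fintype κ] [DecidableEq κ] (j : κ) (F : κ → ℂ) :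
    ∏ k ∈ Finset.univ.erase j, F k = ∏ k, if k = j then 1 else F k := by
  rw [← Finset.mul_prod_erase Finset.univ (fun k => if k = j then 1 else F k) (Finset.mem_univ j)]
  rw [if_pos rfl, one_mul]
  exact Finset.prod_congr rfl fun k hk => (if_neg (Finset.ne_of_mem_erase hk)).symm

lemma prod_pull (j : Fin a) (F G : Fin a → ℂ) (c : ℂ) (h1 : F j = c)
    (h2 : ∀ k, k ≠ j → F k = G k) : ∏ k, F k = c * ∏ k, if k = j then 1 else G k := by
  rw [← prod_erase_ite, ← Finset.mul_prod_erase _ _ (Finset.mem_univ j), h1]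
  congr 1
  exact Finset.prod_congr rfl fun k hk => h2 k (Finset.ne_of_mem_erase hk)

lemma Rs_false (hb : Gnr q b) (zs : List ℂ) (J : Fin a → ℤ) (j : Fin a) :
    Rs q b zs J (j, false) = (1 - q)⁻¹ * Hp q b j (ww q b j J) J * Zf zs (ww q b j J)⁻¹ := by
  rw [Rs, cs_prod, prod_erase_ite, Fintype.prod_prod_type]
  simp only [Fintype.prod_bool, Prod.mk.injEq, and_true, and_false, Bool.true_eq_false, pJ, reduceIte, Bool.false_eq_true]
  rw [mul_right_comm, ← Finset.prod_mul_distrib]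
  congr 1
  have hw := ww_ne0 hb j J
  refine prod_pull j _ _ _ ?_ fun k hk => ?_
  · have h1 := q_sub1 (q := q)
    have h2 := q_add1 (q := q)
    have e : 1 - q ^ 2 * ww q b j J / ww q b j J = (1 - q) * (1 + q) := by field_simp; ring
    rw [if_pos rfl, e]
    field_simp
  · have h1 := sep1 hb hk.symm J
    have h2 := sep2 hb hk.symm J
    rw [if_neg hk, Hf]
    generalize ww q b j J = w at *
    generalize ww q b k J = x at *
    have e1 : 1 - q ^ 2 * x / w = (w - q ^ 2 * x) / w := by field_simp
    have e2 : 1 - x / w = (w - x) / w := by field_simp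
    rw [e1, e2]
    field_simp

lemma Rs_true (hb : Gnr q b) (zs : List ℂ) (J : Fin a → ℤ) (j : Fin a) :
    Rs q b zs J (j, true) = -(q * (1 - q)⁻¹) * Hp q b j (q ^ 2 * ww q b j J) J *
      Zf zs (q ^ 2 * ww q b j J)⁻¹ := by
  have hq0 := hq.ne0
  rw [Rs, cs_prod, prod_erase_ite, Fintype.prod_prod_type]
  simp only [Fintype.prod_bool, Prod.mk.injEq, and_true, and_false, Bool.true_eq_false, pJ, reduceIte, Bool.false_eq_true]
  rw [mul_right_comm, ← Finset.prod_mul_distrib]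
  congr 1
  have hw := ww_ne0 hb j J
  refine prod_pull j _ _ _ ?_ fun k hk => ?_
  · have h1 := q_sub1 (q := q)
    have h2 := q_add1 (q := q)
    have e : 1 - ww q b j J / (q ^ 2 * ww q b j J) = -((1 - q) * (1 + q) / q ^ 2) := by
      field_simp; ring
    rw [if_pos rfl, e]
    field_simp
    ring
  · have h1 := sep1 hb hk.symm J
    have h2 := sep2' hb hk.symm J
    rw [if_neg hk, Hf]
    generalize ww q b j J = w at *
    generalize ww q b k J = x at *
    have e1 : 1 - q ^ 2 * x / (q ^ 2 * w) = (w - x) / w := by field_simp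
    have e2 : 1 - x / (q ^ 2 * w) = (q ^ 2 * w - x) / (q ^ 2 * w) := by field_simp
    have e3 : q ^ 2 * w - q ^ 2 * x = q ^ 2 * (w - x) := by ring
    rw [e1, e2, e3]
    field_simp

/-- The raising and lowering currents. -/
def XoJ (q sq : ℂ) (b : Fin a → ℂ) (zs : List ℂ) (t : ℂ) :
    Bool → ℤ → Module.End ℂ ((Fin a → ℤ) → ℂ)
  | true => Xop (alp q b) (ww q b) stp
  | false => Xop (cof q sq b zs t) (fun i J => q ^ 2 * ww q b i J) stm

/-- The commutator of raising and lowering operators is the difference of the two expansions of the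
Cartan current. -/
lemma gklo_xy (hb : Gnr q b) {zs : List ℂ} (hz : ∀ z ∈ zs, z ≠ 0) (t : ℂ) {n : ℤ}
    (hn : (a : ℤ) - zs.length = n) (r s : ℤ) :
    XoJ q sq b zs t true r * XoJ q sq b zs t false s -
      XoJ q sq b zs t false s * XoJ q sq b zs t true r =
    (dl sq)⁻¹ • (dg (phP q b zs t (r + s)) - dg (phM q b zs t n (r + s))) := by
  have hq0 := hq.ne0
  refine LinearMap.ext fun g => funext fun J => ?_
  have hpf := pf_main (pJ q b J) (pJ_ne0 hb J) (pJ_inj hb J) Finset.univ (csJ q b zs J)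
    (csJ_ne0 hb hz J) (r + s)
  have hcard : ((Finset.univ : Finset (Fin a × Bool)).card : ℤ) - (csJ q b zs J).length = n := by
    rw [Finset.card_univ, Fintype.card_prod, Fintype.card_fin, Fintype.card_bool, csJ,
      List.length_append, List.length_ofFn, ← hn]
    push_cast; ring
  rw [hcard] at hpf
  change _ = ∑ j, Rs q b zs J j * pJ q b J j ^ (r + s) at hpf
  rw [Fintype.sum_prod_type] at hpf
  simp only [Fintype.sum_bool, Rs_true hb, Rs_false hb, pJ, reduceIte, Bool.false_eq_true] at hpf
  simp only [XoJ, LinearMap.sub_apply, LinearMap.smul_apply, Pi.sub_apply, Pi.smul_apply,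
    smul_eq_mul, Module.End.mul_apply, dg_apply, Xop_apply, Finset.mul_sum]
  rw [← sub_mul, phP, phM, ← mul_sub]
  rw [hpf]
  rw [Finset.sum_comm (γ := Fin a), ← Finset.sum_sub_distrib]
  simp only [← Finset.sum_sub_distrib]
  rw [Finset.sum_comm]
  rw [Finset.mul_sum, Finset.sum_mul, Finset.mul_sum]
  refine Finset.sum_congr rfl fun i _ => ?_
  rw [Finset.sum_eq_single i]
  · rw [stm_stp, stp_stm, ww_stm_same, ww_stp_same]
    have e : q ^ 2 * ((q ^ 2)⁻¹ * ww q b i J) = ww q b i J := by field_simp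
    rw [e]
    have h1 := ww_ne0 hb i J
    have h2 := mul_ne_zero (pow_ne_zero 2 hq0) h1
    rw [zpow_add₀ h1, zpow_add₀ h2]
    linear_combination (ww q b i J) ^ r * (ww q b i J) ^ s * g J *
      cof_diag (q := q) (sq := sq) (b := b) zs t i J - (q ^ 2 * ww q b i J) ^ r * (q ^ 2 * ww q b i J) ^ s * g J *
      cof_diag' (q := q) (sq := sq) (b := b) zs t i J
  · intro k _ hk
    rw [ww_stp_ne b hk, ww_stm_ne b hk.symm, stp_stm_comm]
    linear_combination ww q b i J ^ r * (q ^ 2 * ww q b k J) ^ s * g (stm k (stp i J)) *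
      cof_off (q := q) (sq := sq) hb zs t hk.symm J
  · simp

/-- The difference operators define a representation of the shifted algebra. -/
lemma gklo_rep (hb : Gnr q b) {zs : List ℂ} (hz : ∀ z ∈ zs, z ≠ 0) {t : ℂ} (ht : t ≠ 0) {n : ℤ}
    (hn : (a : ℤ) - zs.length = n) :
    IsRep q sq n (XoJ q sq b zs t) (fun r => dg (phP q b zs t r)) (fun r => dg (phM q b zs t n r))
      (fun m => dg (hhJ q sq b zs m)) (dg fun J => (phP q b zs t 0 J)⁻¹)
      (dg fun J => (phM q b zs t n (-n) J)⁻¹) := by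
  have hq0 := hq.ne0
  have hP : ∀ J, phP q b zs t 0 J ≠ 0 := fun J => by
    rw [phP_zero]; exact mul_ne_zero ht (zpow_ne_zero _ hq0)
  have hM : ∀ J, phM q b zs t n (-n) J ≠ 0 := fun J => by
    rw [phM_lead b hb]
    refine mul_ne_zero (mul_ne_zero ht (zpow_ne_zero _ hq0)) (mul_ne_zero ?_ ?_)
    · refine List.prod_ne_zero fun h0 => ?_
      obtain ⟨z, hz1, hz2⟩ := List.mem_map.mp h0
      exact hz z hz1 (neg_eq_zero.mp hz2)
    · exact Finset.prod_ne_zero_iff.mpr fun i _ => inv_ne_zero (mul_ne_zero hq0 (hb.ne0 i))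
  have hd := dl_ne (sq := sq) q
  have hinv : ∀ f : (Fin a → ℤ) → ℂ, (∀ J, f J ≠ 0) → dg (fun J => (f J)⁻¹) * dg f = 1 := by
    intro f hf
    rw [dg_mul, ← dg_one]; congr 1; funext J; exact inv_mul_cancel₀ (hf J)
  constructor
  · rw [← dg_zero]; congr 1; funext J; simp [hhJ]
  · intro r hr
    rw [← dg_zero]; congr 1; funext J; simp [phP, extP, hr]
  · intro r hr
    rw [← dg_zero]; congr 1; funext J; simp [phM, extM, hr]
  · intro c d hc hd
    cases c <;> first | exact hc.elim | skip
    all_goals cases d <;> first | exact hd.elim | exact dg_comm _ _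
  · exact hinv _ hP
  · rw [dg_comm]; exact hinv _ hP
  · exact hinv _ hM
  · rw [dg_comm]; exact hinv _ hM
  · intro m
    simp only [dg_mul, dg_smul, dg_sum]
    congr 1
    funext J
    simp only [Pi.smul_apply, smul_eq_mul, Finset.sum_apply, Pi.mul_apply, phP]
    have := exp_extP (csJ q b zs J) (pJ q b J) m
    rw [mul_left_comm, this, Finset.mul_sum, Finset.mul_sum]
    refine Finset.sum_congr rfl fun k _ => ?_
    have hk : (((k : ℤ) + 1 : ℤ) : ℂ) ≠ 0 := by exact_mod_cast (by omega : ((k : ℤ) + 1) ≠ 0)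
    rw [hhJ]
    push_cast at hk ⊢
    field_simp
  · intro m
    simp only [dg_mul, dg_smul, dg_sum]
    congr 1
    funext J
    simp only [Pi.smul_apply, smul_eq_mul, Finset.sum_apply, Pi.mul_apply, phM]
    have := exp_extM n (csJ q b zs J) (pJ q b J) m
    rw [neg_mul, mul_left_comm, this, Finset.mul_sum, Finset.mul_sum, ← Finset.sum_neg_distrib]
    refine Finset.sum_congr rfl fun k _ => ?_
    have hk : (((k : ℤ) + 1 : ℤ) : ℂ) ≠ 0 := by exact_mod_cast (by omega : ((k : ℤ) + 1) ≠ 0)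
    rw [hhJ]
    push_cast at hk ⊢
    generalize psum (csJ q b zs J) (pJ q b J) _ = y
    generalize extM n _ _ = y'
    have : -((k : ℂ) + 1) ≠ 0 := neg_ne_zero.mpr hk
    have e : (-(k : ℂ) - 1 : ℂ) ≠ 0 := by intro h; apply this; linear_combination h
    field_simp
  · intro ε r
    cases ε
    · refine dg_Xop_q (fun i J => ?_) r
      simp only [sg, Bool.false_eq_true, reduceIte]
      rw [phP_zero, phP_zero, tot_stm, zpow_add_one₀ hq0, zpow_neg_one]; field_simp
    · refine dg_Xop_q (fun i J => ?_) r
      simp only [sg, reduceIte]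
      rw [phP_zero, phP_zero, tot_stp, zpow_sub_one₀ hq0, zpow_one]; field_simp
  · intro ε r
    cases ε
    · refine dg_Xop_q (fun i J => ?_) r
      simp only [sg, Bool.false_eq_true, reduceIte]
      rw [phM_lead b hb, phM_lead b hb, tot_stm, neg_add, neg_neg, zpow_add₀ hq0, zpow_neg_one,
        zpow_one]; field_simp
    · refine dg_Xop_q (fun i J => ?_) r
      simp only [sg, reduceIte]
      rw [phM_lead b hb, phM_lead b hb, tot_stp, neg_sub, sub_eq_add_neg, zpow_add₀ hq0,
        zpow_neg_one, zpow_one]; field_simp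
  · intro ε m r hm
    cases ε
    · refine dg_Xop_h (fun i J => mul_ne_zero (pow_ne_zero 2 hq0) (ww_ne0 hb i J)) (fun i J => ?_) r
      rw [hh_stm, hxid, DD_hx]; simp [sg, mul_comm, mul_left_comm, mul_assoc]
    · refine dg_Xop_h (fun i J => ww_ne0 hb i J) (fun i J => ?_) r
      rw [hh_stp, hxid, DD_hx]; simp [sg, mul_comm, mul_left_comm, mul_assoc]
  · exact gklo_xy hb hz t hn
  · intro ε r s
    cases ε
    · have := Xop_xx (cd_minus (sq := sq) hb zs t) r s
      rw [inv_pow, hs.out] at this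
      simpa [sg, XoJ] using this
    · have := Xop_xx (cd_plus (sq := sq) hb) r s
      rw [hs.out] at this
      simpa [sg, XoJ] using this
  · intro ε x y z
    cases ε
    · have := Xop_cubic (cd_minus (sq := sq) hb zs t) _ _ (cubicB (inv_ne_zero (sq_ne q))) x y z
      rw [inv_inv] at this
      simpa [sg, XoJ] using this
    · simpa [sg, XoJ] using Xop_cubic (cd_plus (sq := sq) hb) _ _ (cubicA (sq_ne q)) x y z
  · intro ε x y z
    cases ε
    · simpa [sg, XoJ] using Xop_cubic (cd_minus (sq := sq) hb zs t) _ _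
        (cubicA (inv_ne_zero (sq_ne q))) x y z
    · simpa [sg, XoJ] using Xop_cubic (cd_plus (sq := sq) hb) _ _ (cubicB (sq_ne q)) x y z

end gkloXY

end TQAEmb

namespace TQAEmb

open TQA Filter Topology

set_option linter.unusedSectionVars false

/-! ### Convergence of operators on functions -/

section cv
variable {κ S : Type*} {l : Filter κ}

/-- Continuous convergence of operators for pointwise convergence of functions. -/
def Cv (l : Filter κ) (O : κ → Module.End ℂ (S → ℂ)) (P : Module.End ℂ (S → ℂ)) : Prop :=
  ∀ (g : κ → S → ℂ) (g' : S → ℂ), (∀ J, Tendsto (fun ν => g ν J) l (𝓝 (g' J))) →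
    ∀ J, Tendsto (fun ν => O ν (g ν) J) l (𝓝 (P g' J))

variable {O O' : κ → Module.End ℂ (S → ℂ)} {P P' : Module.End ℂ (S → ℂ)}

lemma Cv.add (h : Cv l O P) (h' : Cv l O' P') : Cv l (fun ν => O ν + O' ν) (P + P') :=
  fun g g' hg J => (h g g' hg J).add (h' g g' hg J)

lemma Cv.mul (h : Cv l O P) (h' : Cv l O' P') : Cv l (fun ν => O ν * O' ν) (P * P') :=
  fun g g' hg J => h _ _ (h' g g' hg) J

lemma Cv.const (c : ℂ) :
    Cv l (fun _ => algebraMap ℂ (Module.End ℂ (S → ℂ)) c) (algebraMap ℂ _ c) := by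
  intro g g' hg J
  simp only [Module.algebraMap_end_apply, Pi.smul_apply, smul_eq_mul]
  exact (hg J).const_mul c

lemma Cv.lift {X : Type*} {F : κ → X → Module.End ℂ (S → ℂ)} {F' : X → Module.End ℂ (S → ℂ)}
    (h : ∀ x, Cv l (fun ν => F ν x) (F' x)) (u : FreeAlgebra ℂ X) :
    Cv l (fun ν => FreeAlgebra.lift ℂ (F ν) u) (FreeAlgebra.lift ℂ F' u) := by
  induction u using FreeAlgebra.induction with
  | grade0 r => simpa only [AlgHom.commutes] using Cv.const r
  | grade1 x => simpa only [FreeAlgebra.lift_ι_apply] using h x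
  | mul a b ha hb => simpa only [map_mul] using ha.mul hb
  | add a b ha hb => simpa only [map_add] using ha.add hb

lemma Cv.dg {f : κ → S → ℂ} {f' : S → ℂ} (h : ∀ J, Tendsto (fun ν => f ν J) l (𝓝 (f' J))) :
    Cv l (fun ν => dg (f ν)) (dg f') := by
  intro g g' hg J
  simp only [dg_apply]
  exact (h J).mul (hg J)

/-- A convergent family of operators vanishing along the filter has limit zero. -/
lemma Cv.eq_zero [NeBot l] (h : Cv l O P) (h0 : ∀ᶠ ν in l, O ν = 0) : P = 0 := by
  refine LinearMap.ext fun g => funext fun J => ?_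
  refine tendsto_nhds_unique (h (fun _ => g) g (fun J => tendsto_const_nhds) J) ?_
  refine (tendsto_const_nhds (x := (0 : ℂ))).congr' ?_
  filter_upwards [h0] with ν hν
  rw [hν]; rfl

lemma Cv.sum {I : Type*} (s : Finset I) {O : I → κ → Module.End ℂ (S → ℂ)}
    {P : I → Module.End ℂ (S → ℂ)} (h : ∀ i ∈ s, Cv l (O i) (P i)) :
    Cv l (fun ν => ∑ i ∈ s, O i ν) (∑ i ∈ s, P i) := by
  intro g g' hg J
  simp only [LinearMap.sum_apply, Finset.sum_apply]
  exact tendsto_finsetSum _ fun i hi => h i hi g g' hg J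

lemma Cv.unique [NeBot l] (h : Cv l O P) (h' : Cv l O' P') (e : ∀ᶠ ν in l, O ν = O' ν) :
    P = P' := by
  refine LinearMap.ext fun g => funext fun J => ?_
  refine tendsto_nhds_unique_of_eventuallyEq (h (fun _ => g) g (fun J => tendsto_const_nhds) J)
    (h' (fun _ => g) g (fun J => tendsto_const_nhds) J) ?_
  filter_upwards [e] with ν hν
  rw [hν]

end cv

section TT
variable {q sq : ℂ} [hq : QGen q] [hs : Fact (sq ^ 2 = q)]
variable {a : ℕ} {b : Fin a → ℂ} {zs : List ℂ}

/-- The operator of the generator `e₁`. -/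
def E1 (q : ℂ) (b : Fin a → ℂ) : Module.End ℂ ((Fin a → ℤ) → ℂ) := Xop (alp q b) (ww q b) stp 0

/-- Coefficients of the operator of the generator `e₀`. -/
def ec (q sq : ℂ) (b : Fin a → ℂ) (zs : List ℂ) (i k : Fin a) (J : Fin a → ℤ) : ℂ :=
  cof q sq b zs 1 i J * cof q sq b zs 1 k (stm i J) *
    (q ^ 2 * ww q b k (stm i J) - q * (q ^ 2 * ww q b i J)) * q ^ (-(2 * (tot J + 2)))

/-- The operator of the generator `e₀`. -/
def E0 (q sq : ℂ) (b : Fin a → ℂ) (zs : List ℂ) : Module.End ℂ ((Fin a → ℤ) → ℂ) where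
  toFun g J := ∑ i, ∑ k, ec q sq b zs i k J * g (stm k (stm i J))
  map_add' g h := by
    funext J; simp only [Pi.add_apply, mul_add, Finset.sum_add_distrib]
  map_smul' c g := by
    funext J
    simp only [Pi.smul_apply, smul_eq_mul, RingHom.id_apply, Finset.mul_sum]
    exact Finset.sum_congr rfl fun i _ => Finset.sum_congr rfl fun k _ => by ring

lemma E0_apply (g : (Fin a → ℤ) → ℂ) (J : Fin a → ℤ) :
    E0 q sq b zs g J = ∑ i, ∑ k, ec q sq b zs i k J * g (stm k (stm i J)) := rfl

lemma E1_apply (g : (Fin a → ℤ) → ℂ) (J : Fin a → ℤ) :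
    E1 q b g J = ∑ i, alp q b i J * g (stp i J) := by
  simp [E1, Xop_apply]

/-- The action of words in `e₀, e₁`. -/
def TF (q sq : ℂ) (b : Fin a → ℂ) (zs : List ℂ) :
    FreeAlgebra ℂ (Fin 2) →ₐ[ℂ] Module.End ℂ ((Fin a → ℤ) → ℂ) :=
  FreeAlgebra.lift ℂ ![E0 q sq b zs, E1 q b]

/-- The representation of the shifted algebra on functions on the lattice. -/
def rU (hb : Gnr q b) (hz : ∀ z ∈ zs, z ≠ 0) {t : ℂ} (ht : t ≠ 0) {n : ℤ}
    (hn : (a : ℤ) - zs.length = n) : UU q sq n →ₐ[ℂ] Module.End ℂ ((Fin a → ℤ) → ℂ) :=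
  Ulift (gklo_rep hb hz ht hn)

lemma cof_t (t : ℂ) (i : Fin a) (J : Fin a → ℤ) :
    cof q sq b zs t i J = t * cof q sq b zs 1 i J := by
  unfold cof; ring

lemma rU_EE (hb : Gnr q b) (hz : ∀ z ∈ zs, z ≠ 0) {t : ℂ} (ht : t ≠ 0) {n : ℤ}
    (hn : (a : ℤ) - zs.length = n) (i : Fin 2) :
    rU (sq := sq) hb hz ht hn (EE q sq n i) = (![E0 q sq b zs, E1 q b] : Fin 2 → _) i := by
  have hq0 := hq.ne0
  fin_cases i
  · change rU (sq := sq) hb hz ht hn (EE q sq n 0) = E0 q sq b zs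
    rw [EE_zero, ZZ]
    simp only [map_mul, map_sub, map_smul]
    simp only [rU, Ulift_X, Ulift_Ki]
    refine LinearMap.ext fun g => funext fun J => ?_
    simp only [Module.End.mul_apply, LinearMap.sub_apply, LinearMap.smul_apply, Pi.sub_apply,
      Pi.smul_apply, XoJ, Xop_apply, dg_apply, smul_eq_mul, E0_apply, zpow_zero, zpow_one, mul_one,
      Finset.mul_sum, phP_zero, tot_stm]
    rw [← Finset.sum_sub_distrib]
    refine Finset.sum_congr rfl fun i _ => ?_
    rw [← Finset.sum_sub_distrib]
    refine Finset.sum_congr rfl fun k _ => ?_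
    rw [ec, cof_t (t := t), cof_t (t := t)]
    have e : q ^ (-(2 * (tot J + 2))) = (q ^ (tot J + 1 + 1))⁻¹ * (q ^ (tot J + 1 + 1))⁻¹ := by
      rw [← zpow_neg, ← zpow_add₀ hq0]; congr 1; ring
    rw [e]
    generalize (q ^ (tot J + 1 + 1)) = y
    rw [mul_inv]
    field_simp
  · change rU (sq := sq) hb hz ht hn (EE q sq n 1) = E1 q b
    rw [EE_one, rU, Ulift_X]; rfl

lemma rU_fA (hb : Gnr q b) (hz : ∀ z ∈ zs, z ≠ 0) {t : ℂ} (ht : t ≠ 0) {n : ℤ}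
    (hn : (a : ℤ) - zs.length = n) (hn0 : 0 ≤ n) (u : FreeAlgebra ℂ (Fin 2)) :
    rU (sq := sq) hb hz ht hn (fA q sq hn0 (Amk q u)) = TF q sq b zs u := by
  have : ((rU (sq := sq) hb hz ht hn).comp (fA q sq hn0)).comp (Amk q) = TF q sq b zs := by
    apply FreeAlgebra.hom_ext
    funext i
    change rU (sq := sq) hb hz ht hn (fA q sq hn0 (e q i)) = TF q sq b zs (FreeAlgebra.ι ℂ i)
    rw [fA_e, rU_EE, TF, FreeAlgebra.lift_ι_apply]
  exact DFunLike.congr_fun this u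

lemma rU_K (hb : Gnr q b) (hz : ∀ z ∈ zs, z ≠ 0) {t : ℂ} (ht : t ≠ 0) {n : ℤ}
    (hn : (a : ℤ) - zs.length = n) :
    rU (sq := sq) hb hz ht hn (KK q sq n) = dg (fun J => t * q ^ tot J) := by
  rw [rU, Ulift_K]; congr 1; funext J; exact phP_zero _ _ _ _

lemma rU_L (hb : Gnr q b) (hz : ∀ z ∈ zs, z ≠ 0) {t : ℂ} (ht : t ≠ 0) {n : ℤ}
    (hn : (a : ℤ) - zs.length = n) :
    rU (sq := sq) hb hz ht hn (LL q sq n) = dg (fun J => t * q ^ (-tot J) * chi q b zs) := by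
  rw [rU, Ulift_L]; congr 1; funext J; exact phM_lead _ hb _ _ _ _

/-- An element of the positive part annihilates all modules of level `n`. -/
def Ann (q sq : ℂ) (n : ℤ) (u : A q) : Prop :=
  ∀ (a : ℕ) (b : Fin a → ℂ) (zs : List ℂ), Gnr q b → (∀ z ∈ zs, z ≠ 0) →
    (a : ℤ) - zs.length = n → ∀ v, Amk q v = u → TF q sq b zs v = 0

/-- Convergence of the action when a zero tends to the origin. -/
lemma cv_zeta (q sq : ℂ) [QGen q] [Fact (sq ^ 2 = q)] {a : ℕ} (b : Fin a → ℂ) (zs : List ℂ) (u : FreeAlgebra ℂ (Fin 2)) :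
    Cv (𝓝[≠] (0 : ℂ)) (fun ζ => TF q sq b (ζ :: zs) u) (TF q sq b zs u) := by
  refine Cv.lift (fun i => ?_) u
  have hc : ∀ i J, Tendsto (fun ζ => cof q sq b (ζ :: zs) 1 i J) (𝓝[≠] (0 : ℂ))
      (𝓝 (cof q sq b zs 1 i J)) := by
    intro i J
    have hcont : Continuous fun ζ => cof q sq b (ζ :: zs) 1 i J := by
      simp only [cof, Zf, List.map_cons, List.prod_cons]
      fun_prop
    have h := hcont.tendsto 0
    have e : cof q sq b (0 :: zs) 1 i J = cof q sq b zs 1 i J := by simp [cof, Zf]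
    rw [e] at h
    exact h.mono_left nhdsWithin_le_nhds
  fin_cases i
  · intro g g' hg J
    change Tendsto (fun ν => E0 q sq b (ν :: zs) (g ν) J) _ (𝓝 (E0 q sq b zs g' J))
    simp only [E0_apply, ec]
    refine tendsto_finsetSum _ fun i _ => tendsto_finsetSum _ fun k _ => ?_
    refine Tendsto.mul ?_ (hg _)
    exact (((hc i J).mul (hc k (stm i J))).mul_const _).mul_const _
  · intro g g' hg J
    change Tendsto (fun ν => E1 q b (g ν) J) _ (𝓝 (E1 q b g' J))
    simp only [E1_apply]
    exact tendsto_finsetSum _ fun i _ => (hg _).const_mul _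

end TT

end TQAEmb

namespace TQAEmb

open TQA Filter Topology

set_option linter.unusedSectionVars false

/-! ### Removing one spectral parameter -/

/-- A linear map intertwining the generators intertwines all words. -/
lemma lift_intertwine {X V W : Type*} [AddCommGroup V] [Module ℂ V] [AddCommGroup W] [Module ℂ W]
    {F : X → Module.End ℂ V} {F' : X → Module.End ℂ W} (R : V →ₗ[ℂ] W)
    (h : ∀ x v, R (F x v) = F' x (R v)) (u : FreeAlgebra ℂ X) :
    ∀ v, R (FreeAlgebra.lift ℂ F u v) = FreeAlgebra.lift ℂ F' u (R v) := by
  induction u using FreeAlgebra.induction with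
  | grade0 r => intro v; simp
  | grade1 x => simpa using h x
  | mul a b ha hb => intro v; simp [ha, hb]
  | add a b ha hb => intro v; simp [ha, hb]

section cons
variable {q sq : ℂ} [hq : QGen q] [hs : Fact (sq ^ 2 = q)]
variable {a : ℕ} {b : Fin a → ℂ} {zs : List ℂ}

local notation "cns" => Fin.cons (α := fun _ => ℂ)

lemma ww_cons_zero (β : ℂ) (J : Fin (a + 1) → ℤ) :
    ww q (cns β b) 0 J = β * q ^ (2 * J 0) := by simp [ww]

lemma ww_cons_succ (β : ℂ) (i : Fin a) (J : Fin (a + 1) → ℤ) :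
    ww q (cns β b) i.succ J = ww q b i (Fin.tail J) := by simp [ww, Fin.tail]

lemma tail_stp_zero (J : Fin (a + 1) → ℤ) : Fin.tail (stp 0 J) = Fin.tail J := by
  funext k; exact stp_ne (Fin.succ_ne_zero k) J

lemma tail_stm_zero (J : Fin (a + 1) → ℤ) : Fin.tail (stm 0 J) = Fin.tail J := by
  funext k; exact stm_ne (Fin.succ_ne_zero k) J

lemma tail_stp_succ (i : Fin a) (J : Fin (a + 1) → ℤ) :
    Fin.tail (stp i.succ J) = stp i (Fin.tail J) := by
  funext k
  by_cases h : k = i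
  · subst h; simp [Fin.tail]
  · rw [stp_ne h]; exact stp_ne (fun e => h (Fin.succ_injective _ e)) J

lemma tail_stm_succ (i : Fin a) (J : Fin (a + 1) → ℤ) :
    Fin.tail (stm i.succ J) = stm i (Fin.tail J) := by
  funext k
  by_cases h : k = i
  · subst h; simp [Fin.tail]
  · rw [stm_ne h]; exact stm_ne (fun e => h (Fin.succ_injective _ e)) J

lemma stp_succ_zero (i : Fin a) (J : Fin (a + 1) → ℤ) : stp i.succ J 0 = J 0 :=
  stp_ne (Fin.succ_ne_zero i).symm J

lemma stm_succ_zero (i : Fin a) (J : Fin (a + 1) → ℤ) : stm i.succ J 0 = J 0 :=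
  stm_ne (Fin.succ_ne_zero i).symm J

lemma stm_stm (i k : Fin a) (J : Fin a → ℤ) : stm i (stm k J) = stm k (stm i J) := by
  simp only [stm]; abel

lemma alp_cons_zero (β : ℂ) (J : Fin (a + 1) → ℤ) : alp q (cns β b) 0 J = 1 := by
  simp [alp]

lemma alp_cons_succ (β : ℂ) (i : Fin a) (J : Fin (a + 1) → ℤ) :
    alp q (cns β b) i.succ J =
      q ^ J 0 * Hf q (ww q b i (Fin.tail J)) (β * q ^ (2 * J 0)) * alp q b i (Fin.tail J) := by
  rw [alp, Fin.prod_univ_succ, if_pos (Fin.succ_pos i), ww_cons_zero, ww_cons_succ, alp]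
  simp only [ww_cons_succ, Fin.succ_lt_succ_iff]
  rfl

lemma cof_cons_succ (β : ℂ) (i : Fin a) (J : Fin (a + 1) → ℤ) :
    cof q sq (cns β b) zs 1 i.succ J = cof q sq b zs 1 i (Fin.tail J) := by
  rw [cof, Fin.prod_univ_succ, if_neg (by simp), cof, one_mul (∏ k, _)]
  simp only [ww_cons_succ, Fin.succ_lt_succ_iff]
  rfl

lemma tot_cons (J : Fin (a + 1) → ℤ) : tot J = J 0 + tot (Fin.tail J) := by
  simp [tot, Fin.sum_univ_succ, Fin.tail]

lemma Zf_inv {v : ℂ} (hv : v ≠ 0) (zs : List ℂ) :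
    Zf zs v⁻¹ = (v ^ zs.length)⁻¹ * (zs.map fun z => v - z).prod := by
  induction zs with
  | nil => simp [Zf]
  | cons z zs ih =>
    simp only [Zf, List.map_cons, List.prod_cons, List.length_cons] at ih ⊢
    rw [ih, pow_succ]
    field_simp

lemma list_cont (zs : List ℂ) : Continuous fun v : ℂ => (zs.map fun z => v - z).prod := by
  induction zs with
  | nil => simpa using continuous_const
  | cons z zs ih => simp only [List.map_cons, List.prod_cons]; fun_prop

/-- For level at least zero, the coefficient attached to the new parameter stays bounded
when that parameter tends to zero. -/
lemma cof_lim (hb : Gnr q b) (hle : zs.length ≤ a) (J : Fin (a + 1) → ℤ) :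
    ∃ L, Tendsto (fun β => cof q sq (cns β b) zs 1 0 J) (𝓝[≠] 0) (𝓝 L) := by
  have hq0 := hq.ne0
  obtain ⟨n, hn⟩ := Nat.exists_eq_add_of_le hle
  let v : ℂ → ℂ := fun β => q ^ 2 * (β * q ^ (2 * J 0))
  let w : Fin a → ℂ := fun k => ww q b k (Fin.tail J)
  let f : ℂ → ℂ := fun x => 1 * q ^ (J 0 + 1) / ((1 - q) * dl sq) *
    ((x ^ n * ∏ k, (q ^ J k.succ * ((x + q * w k) / ((x - w k) * (x - q ^ 2 * w k))))) *
      (zs.map fun z => x - z).prod)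
  have hw : ∀ k, w k ≠ 0 := fun k => ww_ne0 hb k _
  have hf : ContinuousAt f 0 := by
    have h2 : ContinuousAt (fun x : ℂ => (zs.map fun z => x - z).prod) 0 :=
      (list_cont zs).continuousAt
    have h3 : ContinuousAt (fun x : ℂ => ∏ k, (q ^ J k.succ *
        ((x + q * w k) / ((x - w k) * (x - q ^ 2 * w k))))) 0 := by
      refine tendsto_finset_prod _ fun k _ => ?_
      have : ContinuousAt (fun x : ℂ => q ^ J k.succ *
        ((x + q * w k) / ((x - w k) * (x - q ^ 2 * w k)))) 0 := by
        refine continuousAt_const.mul (ContinuousAt.div (by fun_prop) (by fun_prop) ?_)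
        have := hw k
        simp [hq0, this]
      exact this
    exact continuousAt_const.mul (((continuousAt_id.pow n).mul h3).mul h2)
  have hv : ContinuousAt v 0 := by
    apply Continuous.continuousAt; fun_prop
  have hv0 : v 0 = 0 := by simp [v]
  refine ⟨f 0, ?_⟩
  have h : Tendsto (fun β => f (v β)) (𝓝[≠] 0) (𝓝 (f 0)) := by
    have h1 : Tendsto v (𝓝 0) (𝓝 0) := by simpa [hv0] using hv.tendsto
    exact (hf.tendsto.comp h1).mono_left nhdsWithin_le_nhds
  refine h.congr' ?_
  filter_upwards [self_mem_nhdsWithin] with β hβ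
  have hvn : v β ≠ 0 := by
    have : β ≠ 0 := hβ
    simp [v, this, hq0, zpow_ne_zero]
  rw [cof, Fin.prod_univ_succ, if_neg (lt_irrefl _), one_mul (∏ k, _)]
  simp only [ww_cons_zero, ww_cons_succ, Fin.succ_pos, if_true]
  change f (v β) = 1 * q ^ (J 0 + 1) / ((1 - q) * dl sq) *
    (∏ k, (q ^ J k.succ * Hf q (v β) (w k))) * Zf zs (v β)⁻¹
  have e : ∏ k, (q ^ J k.succ * Hf q (v β) (w k)) = v β ^ a *
      ∏ k, (q ^ J k.succ * ((v β + q * w k) / ((v β - w k) * (v β - q ^ 2 * w k)))) := by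
    have : v β ^ a = ∏ _k : Fin a, v β := by simp
    rw [this, ← Finset.prod_mul_distrib]
    refine Finset.prod_congr rfl fun k _ => ?_
    rw [Hf]; ring
  have e2 : v β ^ a = v β ^ zs.length * v β ^ n := by rw [hn, pow_add]
  rw [e, Zf_inv hvn, e2]
  simp only [f]
  have : v β ^ zs.length ≠ 0 := pow_ne_zero _ hvn
  generalize ∏ k, (q ^ J k.succ * ((v β + q * w k) / ((v β - w k) * (v β - q ^ 2 * w k)))) = P
  generalize (zs.map fun z => v β - z).prod = P'
  generalize v β ^ zs.length = y at *
  rw [show ∀ c : ℂ, c * (y * v β ^ n * P) * (y⁻¹ * P') = c * ((v β ^ n * P) * P') * (y * y⁻¹) from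
    fun c => by ring, mul_inv_cancel₀ this, mul_one]

/-- Admissible values of the new parameter. -/
def Gset (q : ℂ) (b : Fin a → ℂ) : Set ℂ := {β | Gnr q (cns β b)}

lemma Gset_compl (hb : Gnr q b) :
    (Gset q b)ᶜ ⊆ {0} ∪ ⋃ (k : Fin a) (s : ℤ), {q ^ s * b k, -(q ^ s * b k)} := by
  have hq0 := hq.ne0
  intro β hβ
  by_contra hn
  apply hβ
  simp only [Set.mem_union, Set.mem_singleton_iff, Set.mem_iUnion, Set.mem_insert_iff,
    not_or, not_exists] at hn
  obtain ⟨h0, h1⟩ := hn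
  have key : ∀ (k : Fin a) (s : ℤ), β ^ 2 ≠ q ^ (2 * s) * b k ^ 2 := by
    intro k s h
    have : β ^ 2 = (q ^ s * b k) ^ 2 := by
      rw [h, mul_pow, ← zpow_natCast (q ^ s), ← zpow_mul, mul_comm s]; rfl
    rcases sq_eq_sq_iff_eq_or_eq_neg.mp this with h' | h'
    · exact (h1 k s).1 h'
    · exact (h1 k s).2 h'
  refine ⟨fun i => ?_, fun i k hik s => ?_⟩
  · refine Fin.cases ?_ (fun i => ?_) i
    · exact h0
    · exact hb.ne0 i
  · induction i using Fin.cases with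
    | zero =>
      induction k using Fin.cases with
      | zero => exact absurd rfl hik
      | succ k => exact key k s
    | succ i =>
      induction k using Fin.cases with
      | zero =>
        simp only [Fin.cons_succ, Fin.cons_zero]
        intro h
        apply key i (-s)
        rw [h, mul_neg, zpow_neg, inv_mul_cancel_left₀ (zpow_ne_zero _ hq0)]
      | succ k => exact hb.gen i k (fun e => hik (by rw [e])) s

lemma Gset_neBot (hb : Gnr q b) : NeBot (𝓝[Gset q b] (0 : ℂ)) := by
  rw [← mem_closure_iff_nhdsWithin_neBot]
  have hc : (Gset q b)ᶜ.Countable := by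
    refine Set.Countable.mono (Gset_compl hb) ?_
    refine (Set.countable_singleton _).union ?_
    refine Set.countable_iUnion fun k => Set.countable_iUnion fun s => ?_
    exact (Set.countable_singleton _).insert _
  have := hc.dense_compl ℝ
  rw [compl_compl] at this
  exact this 0

lemma Gset_le : 𝓝[Gset q b] (0 : ℂ) ≤ 𝓝[≠] 0 :=
  nhdsWithin_mono _ fun β (h : Gnr q (cns β b)) => by simpa using h.ne0 0

/-- The degeneration of the operator of `e₁`, with an auxiliary scaling. -/
def G1 (q : ℂ) (b : Fin a → ℂ) (κ : ℂ) : Module.End ℂ ((Fin (a + 1) → ℤ) → ℂ) where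
  toFun g J := κ * g (stp 0 J) + ∑ i, q ^ J 0 * alp q b i (Fin.tail J) * g (stp i.succ J)
  map_add' g h := by
    funext J; simp only [Pi.add_apply, mul_add, Finset.sum_add_distrib]; ring
  map_smul' c g := by
    funext J
    simp only [Pi.smul_apply, smul_eq_mul, RingHom.id_apply, mul_add, Finset.mul_sum]
    congr 1
    · ring
    · exact Finset.sum_congr rfl fun i _ => by ring

/-- The degeneration of the operator of `e₀`. -/
def G0 (q sq : ℂ) (b : Fin a → ℂ) (zs : List ℂ) : Module.End ℂ ((Fin (a + 1) → ℤ) → ℂ) where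
  toFun g J := ∑ i, ∑ k, q ^ (-(2 * J 0)) * ec q sq b zs i k (Fin.tail J) *
    g (stm k.succ (stm i.succ J))
  map_add' g h := by
    funext J; simp only [Pi.add_apply, mul_add, Finset.sum_add_distrib]
  map_smul' c g := by
    funext J
    simp only [Pi.smul_apply, smul_eq_mul, RingHom.id_apply, Finset.mul_sum]
    exact Finset.sum_congr rfl fun i _ => Finset.sum_congr rfl fun k _ => by ring

lemma G1_apply (κ : ℂ) (g : (Fin (a + 1) → ℤ) → ℂ) (J : Fin (a + 1) → ℤ) : G1 q b κ g J =
    κ * g (stp 0 J) + ∑ i, q ^ J 0 * alp q b i (Fin.tail J) * g (stp i.succ J) := rfl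

lemma G0_apply (g : (Fin (a + 1) → ℤ) → ℂ) (J : Fin (a + 1) → ℤ) : G0 q sq b zs g J =
    ∑ i, ∑ k, q ^ (-(2 * J 0)) * ec q sq b zs i k (Fin.tail J) *
      g (stm k.succ (stm i.succ J)) := rfl

lemma cv_E1 (hb : Gnr q b) :
    Cv (𝓝[Gset q b] (0 : ℂ)) (fun β => E1 q (cns β b)) (G1 q b 1) := by
  have hq0 := hq.ne0
  intro g g' hg J
  simp only [E1_apply, G1_apply, Fin.sum_univ_succ, alp_cons_zero, alp_cons_succ]
  refine ((hg _).const_mul 1).add (tendsto_finsetSum _ fun i _ => ?_)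
  refine Tendsto.mul (Tendsto.mul_const _ ?_) (hg _)
  have hw := ww_ne0 hb i (Fin.tail J)
  have hc : ContinuousAt (fun β : ℂ =>
      q ^ J 0 * Hf q (ww q b i (Fin.tail J)) (β * q ^ (2 * J 0))) 0 := by
    unfold Hf
    refine continuousAt_const.mul (ContinuousAt.div (by fun_prop) (by fun_prop) ?_)
    simp [hw]
  have h := hc.tendsto
  have e : q ^ J 0 * Hf q (ww q b i (Fin.tail J)) (0 * q ^ (2 * J 0)) = q ^ J 0 := by
    unfold Hf; field_simp; simp [hw]
  rw [e] at h
  exact h.mono_left nhdsWithin_le_nhds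

lemma ec_cons_succ (β : ℂ) (i k : Fin a) (J : Fin (a + 1) → ℤ) :
    ec q sq (cns β b) zs i.succ k.succ J = q ^ (-(2 * J 0)) * ec q sq b zs i k (Fin.tail J) := by
  have hq0 := hq.ne0
  rw [ec, ec, cof_cons_succ, cof_cons_succ, ww_cons_succ, ww_cons_succ, tail_stm_succ, tot_cons,
    show -(2 * (J 0 + tot (Fin.tail J) + 2)) = -(2 * J 0) + -(2 * (tot (Fin.tail J) + 2)) by ring,
    zpow_add₀ hq0]
  ring

lemma cv_E0 (hb : Gnr q b) (hle : zs.length ≤ a) :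
    Cv (𝓝[Gset q b] (0 : ℂ)) (fun β => E0 q sq (cns β b) zs) (G0 q sq b zs) := by
  have hq0 := hq.ne0
  haveI := Gset_neBot hb
  intro g g' hg J
  choose L hL using fun J => cof_lim (sq := sq) hb hle J
  replace hL := fun J => (hL J).mono_left (Gset_le (q := q) (b := b))
  have hW : ∀ J : Fin (a + 1) → ℤ, Tendsto (fun β => ww q (cns β b) 0 J) (𝓝[Gset q b] (0 : ℂ))
      (𝓝 0) := by
    intro J
    simp only [ww_cons_zero]
    have : Continuous fun β : ℂ => β * q ^ (2 * J 0) := by fun_prop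
    simpa using (this.tendsto 0).mono_left (nhdsWithin_le_nhds (s := Gset q b))
  simp only [E0_apply, G0_apply, Fin.sum_univ_succ, ec_cons_succ]
  -- regroup: the mixed terms are paired
  have e : ∀ β, ec q sq (cns β b) zs 0 0 J * g β (stm 0 (stm 0 J)) +
        ∑ k : Fin a, ec q sq (cns β b) zs 0 k.succ J * g β (stm k.succ (stm 0 J)) +
      ∑ i : Fin a, (ec q sq (cns β b) zs i.succ 0 J * g β (stm 0 (stm i.succ J)) +
        ∑ k : Fin a, q ^ (-(2 * J 0)) * ec q sq b zs i k (Fin.tail J) *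
          g β (stm k.succ (stm i.succ J))) =
      ec q sq (cns β b) zs 0 0 J * g β (stm 0 (stm 0 J)) +
        ∑ k : Fin a, (ec q sq (cns β b) zs 0 k.succ J + ec q sq (cns β b) zs k.succ 0 J) *
          g β (stm k.succ (stm 0 J)) +
      ∑ i : Fin a, ∑ k : Fin a, q ^ (-(2 * J 0)) * ec q sq b zs i k (Fin.tail J) *
          g β (stm k.succ (stm i.succ J)) := by
    intro β
    have c : ∀ i : Fin a, stm 0 (stm i.succ J) = stm i.succ (stm 0 J) :=
      fun i => stm_stm 0 i.succ J
    simp only [c, Finset.sum_add_distrib, add_mul]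
    ring
  simp only [e]
  have z : ∀ x : ℂ, x = 0 + 0 + x := fun x => by ring
  rw [z (∑ i, _)]
  refine (Tendsto.add ?_ ?_).add (tendsto_finsetSum _ fun i _ => tendsto_finsetSum _ fun k _ =>
    (hg _).const_mul _)
  · have : Tendsto (fun β => ec q sq (cns β b) zs 0 0 J) (𝓝[Gset q b] (0 : ℂ)) (𝓝 0) := by
      have := (((hL J).mul (hL (stm 0 J))).mul (((hW (stm 0 J)).const_mul (q ^ 2)).sub
        (((hW J).const_mul (q ^ 2)).const_mul q))).mul_const (q ^ (-(2 * (tot J + 2))))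
      simpa [ec] using this
    simpa using this.mul (hg (stm 0 (stm 0 J)))
  · have z0 : ∑ k : Fin a, (0 : ℂ) * g' (stm k.succ (stm 0 J)) = 0 := by simp
    have z1 : 𝓝 (0 : ℂ) = 𝓝 (∑ k : Fin a, (0 : ℂ) * g' (stm k.succ (stm 0 J))) := by rw [z0]
    refine Tendsto.mono_right ?_ z1.ge
    refine tendsto_finsetSum _ fun k _ => Tendsto.mul ?_ (hg _)
    set y := ww q b k (Fin.tail J) with hy
    have hy0 : y ≠ 0 := ww_ne0 hb k _
    set c := cof q sq b zs 1 k (Fin.tail J) with hc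
    have ex : ∀ᶠ β in 𝓝[Gset q b] (0 : ℂ), cof q sq (cns β b) zs 1 0 J * c *
        PQ q⁻¹ (q ^ 2 * ww q (cns β b) 0 J) (q ^ 2 * y) =
        -(c * cof q sq (cns β b) zs 1 0 (stm k.succ J) *
          PQ q⁻¹ (q ^ 2 * y) (q ^ 2 * ww q (cns β b) 0 J)) := by
      filter_upwards [self_mem_nhdsWithin] with β hβ
      have := cof_exch (sq := sq) (q := q) (b := cns β b) hβ zs 1 (Fin.succ_pos k) J
      rw [cof_cons_succ, cof_cons_succ, tail_stm_zero, ww_cons_succ] at this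
      exact this
    have hl : L J * c * PQ q⁻¹ (q ^ 2 * 0) (q ^ 2 * y) =
        -(c * L (stm k.succ J) * PQ q⁻¹ (q ^ 2 * y) (q ^ 2 * 0)) := by
      have hP1 : Continuous fun x => PQ q⁻¹ (q ^ 2 * x) (q ^ 2 * y) := by
        unfold PQ; fun_prop
      have hP2 : Continuous fun x => PQ q⁻¹ (q ^ 2 * y) (q ^ 2 * x) := by
        unfold PQ; fun_prop
      refine tendsto_nhds_unique_of_eventuallyEq
        (((hL J).mul_const c).mul ((hP1.tendsto 0).comp (hW J)))
        ((((hL (stm k.succ J)).const_mul c).mul ((hP2.tendsto 0).comp (hW J))).neg) ex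
    have hA : L J * c = q * (c * L (stm k.succ J)) := by
      have e1 : PQ q⁻¹ (q ^ 2 * 0) (q ^ 2 * y) = -(q ^ 3 * y ^ 2) := by
        unfold PQ; field_simp; ring
      have e2 : PQ q⁻¹ (q ^ 2 * y) (q ^ 2 * 0) = q ^ 4 * y ^ 2 := by
        unfold PQ; field_simp; ring
      rw [e1, e2] at hl
      have h3 : q ^ 3 * y ^ 2 ≠ 0 := mul_ne_zero (pow_ne_zero _ hq0) (pow_ne_zero _ hy0)
      apply mul_right_cancel₀ h3
      linear_combination -hl
    have hlim : Tendsto (fun β => ec q sq (cns β b) zs 0 k.succ J + ec q sq (cns β b) zs k.succ 0 J)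
      (𝓝[Gset q b] (0 : ℂ)) (𝓝 ((L J * c * (q ^ 2 * y - q * (q ^ 2 * 0)) +
        c * L (stm k.succ J) * (q ^ 2 * 0 - q * (q ^ 2 * y))) * q ^ (-(2 * (tot J + 2))))) := by
      simp only [ec, cof_cons_succ, ww_cons_succ, tail_stm_zero, ← add_mul]
      refine Tendsto.mul_const _ (Tendsto.add (Tendsto.mul ((hL J).mul_const c) ?_)
        (Tendsto.mul ((hL _).const_mul c) ?_))
      · exact (((hW J).const_mul (q ^ 2)).const_mul q).const_sub _
      · exact ((hW (stm k.succ J)).const_mul (q ^ 2)).sub_const _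
    convert hlim using 2
    rw [hA]; ring

/-- The degenerate operators. -/
def GF (q sq : ℂ) (b : Fin a → ℂ) (zs : List ℂ) (κ : ℂ) :
    Fin 2 → Module.End ℂ ((Fin (a + 1) → ℤ) → ℂ) := ![G0 q sq b zs, G1 q b κ]

lemma cv_cons (hb : Gnr q b) (hle : zs.length ≤ a) (u : FreeAlgebra ℂ (Fin 2)) :
    Cv (𝓝[Gset q b] (0 : ℂ)) (fun β => TF q sq (cns β b) zs u)
      (FreeAlgebra.lift ℂ (GF q sq b zs 1) u) := by
  refine Cv.lift (fun i => ?_) u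
  fin_cases i
  · exact cv_E0 hb hle
  · exact cv_E1 hb

lemma cv_kappa (u : FreeAlgebra ℂ (Fin 2)) :
    Cv (𝓝[≠] (0 : ℂ)) (fun κ => FreeAlgebra.lift ℂ (GF q sq b zs κ) u)
      (FreeAlgebra.lift ℂ (GF q sq b zs 0) u) := by
  refine Cv.lift (fun i => ?_) u
  fin_cases i
  · intro g g' hg J
    change Tendsto (fun ν => G0 q sq b zs (g ν) J) _ (𝓝 (G0 q sq b zs g' J))
    simp only [G0_apply]
    exact tendsto_finsetSum _ fun i _ => tendsto_finsetSum _ fun k _ => (hg _).const_mul _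
  · intro g g' hg J
    change Tendsto (fun ν => G1 q b ν (g ν) J) _ (𝓝 (G1 q b 0 g' J))
    simp only [G1_apply]
    exact ((tendsto_id.mono_left nhdsWithin_le_nhds).mul (hg _)).add
      (tendsto_finsetSum _ fun i _ => (hg _).const_mul _)

/-- Rescaling the basis moves the parameter `κ`. -/
lemma GF_kappa (u : FreeAlgebra ℂ (Fin 2)) (h : FreeAlgebra.lift ℂ (GF q sq b zs 1) u = 0)
    {κ : ℂ} (hκ : κ ≠ 0) : FreeAlgebra.lift ℂ (GF q sq b zs κ) u = 0 := by
  have key := lift_intertwine (F := GF q sq b zs 1) (F' := GF q sq b zs κ)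
    (dg fun J : Fin (a + 1) → ℤ => κ ^ J 0) (by
      intro i g
      funext J
      fin_cases i
      · change dg _ (G0 q sq b zs g) J = G0 q sq b zs (dg _ g) J
        simp only [dg_apply, G0_apply, stm_succ_zero, Finset.mul_sum]
        exact Finset.sum_congr rfl fun i _ => Finset.sum_congr rfl fun k _ => by ring
      · change dg _ (G1 q b 1 g) J = G1 q b κ (dg _ g) J
        simp only [dg_apply, G1_apply, stp_succ_zero, stp_same, mul_add, Finset.mul_sum]
        congr 1
        · rw [zpow_sub_one₀ hκ]; field_simp
        · exact Finset.sum_congr rfl fun i _ => by ring) u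
  refine LinearMap.ext fun g => ?_
  have e : dg (fun J : Fin (a + 1) → ℤ => κ ^ J 0) (fun J => κ ^ (-J 0) * g J) = g := by
    funext J
    rw [dg_apply, ← mul_assoc, ← zpow_add₀ hκ]; simp
  rw [← e, ← key, h]
  simp

/-- Restriction of functions to the hyperplane `J 0 = 0`. -/
def Rst (a : ℕ) : ((Fin (a + 1) → ℤ) → ℂ) →ₗ[ℂ] ((Fin a → ℤ) → ℂ) :=
  LinearMap.funLeft ℂ ℂ (fun J : Fin a → ℤ => (Fin.cons 0 J : Fin (a + 1) → ℤ))

lemma stm_cons (k : Fin a) (J : Fin a → ℤ) :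
    stm k.succ (Fin.cons 0 J : Fin (a + 1) → ℤ) = Fin.cons 0 (stm k J) := by
  have h := tail_stm_succ k (Fin.cons 0 J : Fin (a + 1) → ℤ)
  rw [Fin.tail_cons] at h
  rw [← h]
  conv_lhs => rw [← Fin.cons_self_tail (stm k.succ (Fin.cons 0 J : Fin (a + 1) → ℤ))]
  rw [stm_succ_zero, Fin.cons_zero]

lemma stp_cons (k : Fin a) (J : Fin a → ℤ) :
    stp k.succ (Fin.cons 0 J : Fin (a + 1) → ℤ) = Fin.cons 0 (stp k J) := by
  have h := tail_stp_succ k (Fin.cons 0 J : Fin (a + 1) → ℤ)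
  rw [Fin.tail_cons] at h
  rw [← h]
  conv_lhs => rw [← Fin.cons_self_tail (stp k.succ (Fin.cons 0 J : Fin (a + 1) → ℤ))]
  rw [stp_succ_zero, Fin.cons_zero]

lemma GF_zero (u : FreeAlgebra ℂ (Fin 2)) (h : FreeAlgebra.lift ℂ (GF q sq b zs 0) u = 0) :
    TF q sq b zs u = 0 := by
  have key := lift_intertwine (F := GF q sq b zs 0) (F' := ![E0 q sq b zs, E1 q b])
    (Rst a) (by
      intro i g
      funext J
      fin_cases i
      · change G0 q sq b zs g (Fin.cons 0 J) = E0 q sq b zs (Rst a g) J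
        simp only [G0_apply, E0_apply, stm_cons, Fin.tail_cons, Fin.cons_zero]
        simp [Rst, LinearMap.funLeft_apply]
      · change G1 q b 0 g (Fin.cons 0 J) = E1 q b (Rst a g) J
        simp only [G1_apply, E1_apply, stp_cons, Fin.tail_cons, Fin.cons_zero]
        simp [Rst, LinearMap.funLeft_apply]) u
  refine LinearMap.ext fun g => ?_
  have e : Rst a (fun J => g (Fin.tail J)) = g := by
    funext J; simp [Rst, LinearMap.funLeft_apply]
  rw [TF, ← e, ← key, h]
  simp

/-- An element annihilating all modules of level `n + 1` annihilates those of level `n`. -/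
lemma Ann_step {n : ℤ} (hn : 0 ≤ n) {u : A q} (h : Ann q sq (n + 1) u) : Ann q sq n u := by
  intro a b zs hb hz hl v hv
  haveI := Gset_neBot hb
  have hle : zs.length ≤ a := by omega
  have h1 := (cv_cons (sq := sq) hb hle v).eq_zero (by
    filter_upwards [self_mem_nhdsWithin] with β hβ
    exact h _ _ zs hβ hz (by push_cast; omega) v hv)
  refine GF_zero v ((cv_kappa v).eq_zero ?_)
  filter_upwards [self_mem_nhdsWithin] with κ hκ
  exact GF_kappa v h1 hκ

end cons
end TQAEmb

namespace TQAEmb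

open TQA Filter Topology

set_option linter.unusedSectionVars false

/-! ### Faithfulness on the positive part -/

section faithful
variable {q sq : ℂ} [hq : QGen q] [hs : Fact (sq ^ 2 = q)]

lemma dg_cancel {S : Type*} {T : Module.End ℂ (S → ℂ)} {f : S → ℂ} (hf : ∀ J, f J ≠ 0)
    (h : T * dg f = 0) : T = 0 := by
  have e : dg f * dg f⁻¹ = 1 := by
    rw [dg_mul, ← dg_one]; congr 1; funext J; simp [hf J]
  calc T = T * (dg f * dg f⁻¹) := by rw [e, mul_one]
    _ = 0 := by rw [← mul_assoc, h, zero_mul]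

lemma chi_cons (q : ℂ) {a : ℕ} (b : Fin a → ℂ) (ζ : ℂ) (zs : List ℂ) :
    chi q b (ζ :: zs) = -ζ * chi q b zs := by simp [chi, mul_assoc]

lemma chi_ne {a : ℕ} {b : Fin a → ℂ} {zs : List ℂ} (hb : Gnr q b) (hz : ∀ z ∈ zs, z ≠ 0) :
    chi q b zs ≠ 0 := by
  have hq0 := hq.ne0
  refine mul_ne_zero ?_ (Finset.prod_ne_zero_iff.mpr fun i _ =>
    inv_ne_zero (mul_ne_zero hq0 (hb.ne0 i)))
  refine List.prod_ne_zero fun h => ?_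
  obtain ⟨z, hz', e⟩ := List.mem_map.mp h
  exact hz z hz' (neg_eq_zero.mp e)

lemma ann_act {u : A q} (hu : Ann q sq 0 u) {a : ℕ} {b : Fin a → ℂ} {zs : List ℂ}
    (hb : Gnr q b) (hz : ∀ z ∈ zs, z ≠ 0) (hl : (a : ℤ) - zs.length = 0) :
    rU (sq := sq) hb hz one_ne_zero hl (fA q sq le_rfl u) = 0 := by
  obtain ⟨v, hv⟩ := Amk_surjective q u
  rw [← hv, rU_fA]
  exact hu a b zs hb hz hl v hv

lemma rel1 {u : A q} (hu : Ann q sq 0 u) {a : ℕ} {b : Fin a → ℂ} {zs : List ℂ}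
    (hb : Gnr q b) (hz : ∀ z ∈ zs, z ≠ 0) (hl : (a : ℤ) - zs.length = 0)
    (v1 v2 : FreeAlgebra ℂ (Fin 2))
    (h1 : Amk q v1 = der true 1 u) (h2 : Amk q v2 = der false 1 u) :
    TF q sq b zs v1 * dg (fun J => q ^ tot J) =
      TF q sq b zs v2 * dg (fun J => q ^ (-tot J) * chi q b zs) := by
  have h := congrArg (rU (sq := sq) hb hz one_ne_zero hl) (comm_Y1 (sq := sq) u)
  rw [map_sub, map_mul, map_mul, ann_act hu hb hz hl, zero_mul, mul_zero, sub_zero, map_smul,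
    map_sub, map_mul, map_mul, ← h1, ← h2, rU_fA, rU_fA, rU_K, rU_L] at h
  have h' := (smul_eq_zero.mp h.symm).resolve_left (inv_ne_zero (dl_ne (sq := sq) q))
  simpa [sub_eq_zero] using h'

lemma rel0 {u : A q} (hu : Ann q sq 0 u) {a : ℕ} {b : Fin a → ℂ} {zs : List ℂ}
    (hb : Gnr q b) (hz : ∀ z ∈ zs, z ≠ 0) (hl : (a : ℤ) - zs.length = 0)
    (v1 v2 : FreeAlgebra ℂ (Fin 2))
    (h1 : Amk q v1 = der false 0 u) (h2 : Amk q v2 = der true 0 u) :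
    TF q sq b zs v1 * dg (fun J => q ^ tot J * q ^ tot J) =
      TF q sq b zs v2 * dg (fun J => (q ^ (-tot J) * chi q b zs) * (q ^ (-tot J) * chi q b zs)) := by
  have h := congrArg (rU (sq := sq) hb hz one_ne_zero hl) (comm_Y0 (sq := sq) u)
  rw [map_sub, map_mul, map_mul, ann_act hu hb hz hl, zero_mul, mul_zero, sub_zero, map_smul,
    map_sub, map_mul, map_mul, map_mul, map_mul, ← h1, ← h2, rU_fA, rU_fA, rU_K, rU_L, dg_mul,
    dg_mul] at h
  have h' := (smul_eq_zero.mp h.symm).resolve_left c0_ne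
  rw [sub_eq_zero] at h'
  simpa [Pi.mul_def] using h'

/-- If `T(v₁) f = T(v₂) g_ζ` on all modules of level zero, with `g_ζ → 0`, then
`v₁` annihilates the modules of level one. -/
lemma lim_rel {a : ℕ} {b : Fin a → ℂ} {zs : List ℂ} {v1 v2 : FreeAlgebra ℂ (Fin 2)}
    {f : (Fin a → ℤ) → ℂ} {g : ℂ → (Fin a → ℤ) → ℂ} (hf : ∀ J, f J ≠ 0)
    (hg : ∀ J, Tendsto (fun ζ => g ζ J) (𝓝[≠] 0) (𝓝 0))
    (h : ∀ ζ : ℂ, ζ ≠ 0 → TF q sq b (ζ :: zs) v1 * dg f = TF q sq b (ζ :: zs) v2 * dg (g ζ)) :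
    TF q sq b zs v1 = 0 := by
  have h0 := Cv.unique
    ((cv_zeta q sq b zs v1).mul (Cv.dg (f := fun _ => f) fun J => tendsto_const_nhds))
    ((cv_zeta q sq b zs v2).mul (Cv.dg (f' := 0) hg)) (by
      filter_upwards [self_mem_nhdsWithin] with ζ hζ
      exact h ζ hζ)
  rw [dg_zero, mul_zero] at h0
  exact dg_cancel hf h0

lemma tendsto_chi {a : ℕ} (b : Fin a → ℂ) (zs : List ℂ) :
    Tendsto (fun ζ => chi q b (ζ :: zs)) (𝓝[≠] 0) (𝓝 0) := by
  simp only [chi_cons]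
  have : Continuous fun ζ : ℂ => -ζ * chi q b zs := by fun_prop
  simpa using (this.tendsto 0).mono_left (nhdsWithin_le_nhds (s := {0}ᶜ))

/-- The ideal of elements annihilating all level-zero modules is stable under skew derivations. -/
lemma Ann_der {u : A q} (hu : Ann q sq 0 u) (i : Fin 2) : Ann q sq 0 (der true i u) := by
  have hq0 := hq.ne0
  have hlen : ∀ {a : ℕ} {zs : List ℂ} (ζ : ℂ), (a : ℤ) - zs.length = 1 →
      (a : ℤ) - (ζ :: zs).length = 0 := by
    intro a zs ζ h
    simp only [List.length_cons]; push_cast; omega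
  have hcz : ∀ {zs : List ℂ} {ζ : ℂ}, (∀ z ∈ zs, z ≠ 0) → ζ ≠ 0 → ∀ z ∈ ζ :: zs, z ≠ 0 := by
    intro zs ζ hz hζ z hm
    rcases List.mem_cons.mp hm with h | h
    · rw [h]; exact hζ
    · exact hz z h
  fin_cases i
  · have h1 : Ann q sq 0 (der false 0 u) := by
      apply Ann_step le_rfl
      intro a b zs hb hz hl v hv
      obtain ⟨v2, hv2⟩ := Amk_surjective q (der true 0 u)
      refine lim_rel (v2 := v2) (f := fun J => q ^ tot J * q ^ tot J)
        (g := fun ζ J => (q ^ (-tot J) * chi q b (ζ :: zs)) * (q ^ (-tot J) * chi q b (ζ :: zs)))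
        (fun J => mul_ne_zero (zpow_ne_zero _ hq0) (zpow_ne_zero _ hq0)) (fun J => ?_)
        (fun ζ hζ => rel0 hu hb (hcz hz hζ) (hlen ζ (by simpa using hl)) v v2 hv hv2)
      have := (tendsto_chi (q := q) b zs).const_mul (q ^ (-tot J))
      simpa using this.mul this
    intro a b zs hb hz hl v hv
    obtain ⟨v1, hv1⟩ := Amk_surjective q (der false 0 u)
    have := rel0 hu hb hz hl v1 v hv1 hv
    rw [h1 a b zs hb hz hl v1 hv1, zero_mul] at this
    have hx : ∀ J : Fin a → ℤ, q ^ (-tot J) * chi q b zs ≠ 0 := fun J =>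
      mul_ne_zero (zpow_ne_zero _ hq0) (chi_ne hb hz)
    exact dg_cancel (fun J => mul_ne_zero (hx J) (hx J)) this.symm
  · apply Ann_step le_rfl
    intro a b zs hb hz hl v hv
    obtain ⟨v2, hv2⟩ := Amk_surjective q (der false 1 u)
    refine lim_rel (v2 := v2) (f := fun J => q ^ tot J)
      (g := fun ζ J => q ^ (-tot J) * chi q b (ζ :: zs))
      (fun J => zpow_ne_zero _ hq0) (fun J => ?_)
      (fun ζ hζ => rel1 hu hb (hcz hz hζ) (hlen ζ (by simpa using hl)) v v2 hv hv2)
    simpa using (tendsto_chi (q := q) b zs).const_mul (q ^ (-tot J))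

/-- Induction on the height: the skew derivations of an element annihilating all level-zero modules
vanish by induction, so the element is a scalar, and a scalar acting by zero is zero. -/
lemma Ann_bd (N : ℕ) : ∀ u : A q, (∀ β : Fin 2 → ℤ, (N : ℤ) ≤ β 0 + β 1 → cmpt β u = 0) →
    Ann q sq 0 u → u = 0 := by
  induction N with
  | zero =>
    intro u hN _
    refine eq_zero_of_cmpt fun β => ?_
    by_cases h0 : β 0 < 0
    · exact cmpt_nonneg h0 u
    by_cases h1 : β 1 < 0
    · exact cmpt_nonneg h1 u
    exact hN β (by push_cast; omega)
  | succ N ih =>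
    intro u hN hu
    have hd : ∀ i, der true i u = 0 := fun i => by
      refine ih _ (fun β hβ => ?_) (Ann_der hu i)
      rw [cmpt_der, hN, map_zero]
      fin_cases i <;> simp [rt] <;> omega
    obtain ⟨c, rfl⟩ := GK hs u hd
    -- the trivial module detects scalars
    have := hu 0 Fin.elim0 [] ⟨fun i => i.elim0, fun i => i.elim0⟩ (by simp) (by simp)
      (algebraMap ℂ _ c) (by rw [AlgHom.commutes, Algebra.algebraMap_eq_smul_one])
    rw [AlgHom.commutes] at this
    have h2 := congrFun (LinearMap.congr_fun this fun _ => 1) 0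
    have hc : c = 0 := by simpa using h2
    rw [hc, zero_smul]

lemma exists_bd (u : A q) : ∃ N : ℕ, ∀ β : Fin 2 → ℤ, (N : ℤ) ≤ β 0 + β 1 → cmpt β u = 0 := by
  refine ⟨∑ β ∈ (gr u).coeff.support, (β 0 + β 1).natAbs + 1, fun β hβ => ?_⟩
  by_contra h
  have hm : β ∈ (gr u).coeff.support := Finsupp.mem_support_iff.mpr h
  have := Finset.single_le_sum (f := fun β : Fin 2 → ℤ => (β 0 + β 1).natAbs)
    (fun _ _ => Nat.zero_le _) hm
  push_cast at hβ
  zify at this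
  have h3 := le_abs_self (β 0 + β 1)
  omega

/-- No non-zero element of the positive part annihilates all modules of a given level. -/
lemma Ann_zero (n : ℕ) {u : A q} (hu : Ann q sq n u) : u = 0 := by
  induction n with
  | zero =>
    obtain ⟨N, hN⟩ := exists_bd u
    exact Ann_bd N u hN (by simpa using hu)
  | succ n ih => exact ih (Ann_step (by positivity) (by simpa using hu))

end faithful
end TQAEmb

namespace TQAEmb

open TQA Filter Topology

set_option linter.unusedSectionVars false

/-! ### Injectivity on the Borel algebra -/

section final
variable {q sq : ℂ} [hq : QGen q] [hs : Fact (sq ^ 2 = q)]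

/-- Integer powers of an invertible element acting diagonally act diagonally. -/
lemma act_zpow {S R : Type*} [Ring R] [Algebra ℂ R] (ρ : R →ₐ[ℂ] Module.End ℂ (S → ℂ)) (x : Rˣ)
    {f : S → ℂ} (hf : ∀ J, f J ≠ 0) (h : ρ x = dg f) (m : ℤ) :
    ρ ((x ^ m : Rˣ) : R) = dg fun J => f J ^ m := by
  let F : (S → ℂ)ˣ := ⟨f, f⁻¹, by funext J; simp [hf J], by funext J; simp [hf J]⟩
  let D : (S → ℂ) →* Module.End ℂ (S → ℂ) := ⟨⟨dg, dg_one⟩, fun f g => (dg_mul f g).symm⟩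
  have e : Units.map (ρ : R →* Module.End ℂ (S → ℂ)) x = Units.map D F := Units.ext h
  have e2 := congrArg (fun y => ((y ^ m : (Module.End ℂ (S → ℂ))ˣ) : Module.End ℂ (S → ℂ))) e
  simp only [← map_zpow] at e2
  refine Eq.trans e2 ?_
  change dg ((F ^ m : (S → ℂ)ˣ) : S → ℂ) = _
  rw [Units.val_zpow_eq_zpow_val]
  rfl

section act
variable {a : ℕ} {b : Fin a → ℂ} {zs : List ℂ} (hb : Gnr q b) (hz : ∀ z ∈ zs, z ≠ 0)
  {t : ℂ} (ht : t ≠ 0) {n : ℤ} (hn : (a : ℤ) - zs.length = n) (hn0 : 0 ≤ n)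

/-- The torus acts diagonally. -/
lemma rU_kT (β : Fin 2 → ℤ) : rU (sq := sq) hb hz ht hn (fB q sq hn0 (kT q sq β)) =
    dg fun J => (chi q b zs * q ^ (-(2 * tot J))) ^ β 0 * (t * q ^ tot J) ^ β 1 := by
  have hq0 := hq.ne0
  have hχ := chi_ne hb hz
  let ρ := (rU (sq := sq) hb hz ht hn).comp (fB q sq hn0)
  have hK : rU (sq := sq) hb hz ht hn (((KK q sq n)⁻¹ : (UU q sq n)ˣ) : UU q sq n) =
      dg fun J => (t * q ^ tot J)⁻¹ := by
    have := act_zpow (rU (sq := sq) hb hz ht hn) (KK q sq n)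
      (fun J => mul_ne_zero ht (zpow_ne_zero _ hq0)) (rU_K hb hz ht hn) (-1)
    simpa using this
  have h1 : ρ (kU q sq 1) = dg fun J => t * q ^ tot J := by
    change rU (sq := sq) hb hz ht hn (fB q sq hn0 (kU q sq 1)) = _
    rw [fB, Blift_kU]
    exact rU_K hb hz ht hn
  have h0 : ρ (kU q sq 0) = dg fun J => chi q b zs * q ^ (-(2 * tot J)) := by
    change rU (sq := sq) hb hz ht hn (fB q sq hn0 (kU q sq 0)) = _
    rw [fB, Blift_kU]
    change rU (sq := sq) hb hz ht hn (((KK q sq n)⁻¹ * LL q sq n : (UU q sq n)ˣ) : UU q sq n) = _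
    rw [Units.val_mul, map_mul, hK, rU_L, dg_mul]
    congr 1
    funext J
    have : q ^ (-(2 * tot J)) = (q ^ tot J)⁻¹ * q ^ (-tot J) := by
      rw [← zpow_neg, ← zpow_add₀ hq0]; congr 1; ring
    rw [Pi.mul_apply, this]
    field_simp
  change ρ (kT q sq β) = _
  rw [kT, Units.val_mul, map_mul, act_zpow ρ _ (fun J => mul_ne_zero hχ (zpow_ne_zero _ hq0)) h0,
    act_zpow ρ _ (fun J => mul_ne_zero ht (zpow_ne_zero _ hq0)) h1, dg_mul]
  rfl

end act

/-- The exponents of the torus elements in a finite set can be separated by a linear functional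
attaining its minimum exactly once. -/
lemma exists_sep (S : Finset (Fin 2 → ℤ)) (hS : S.Nonempty) :
    ∃ β' ∈ S, ∃ c : ℤ, ∀ β ∈ S, β ≠ β' → β' 0 + c * β' 1 < β 0 + c * β 1 := by
  obtain ⟨β', hm, hmin⟩ := S.exists_min_image (fun β => toLex (β 1, β 0)) hS
  refine ⟨β', hm, 1 + ∑ β ∈ S, |β 0 - β' 0|, fun β hβ hne => ?_⟩
  have hle := Finset.single_le_sum (f := fun β : Fin 2 → ℤ => |β 0 - β' 0|)
    (fun _ _ => abs_nonneg _) hβ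
  have h1 := hmin β hβ
  rw [Prod.Lex.toLex_le_toLex] at h1
  simp only at h1 hle
  have habs := neg_abs_le (β 0 - β' 0)
  generalize ∑ β ∈ S, |β 0 - β' 0| = C at *
  have hC : 0 ≤ C := le_trans (abs_nonneg _) hle
  rcases h1 with h | ⟨h, h'⟩
  · nlinarith
  · rw [← h]
    have : β' 0 ≠ β 0 := by
      intro e; apply hne; funext i; fin_cases i
      · exact e.symm
      · exact h.symm
    have := lt_of_le_of_ne h' this
    linarith

/-- Among the torus weights occurring in an element of the kernel, one with extremal exponent of the
limiting parameter dominates; its coefficient annihilates all modules and hence vanishes. -/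
theorem fB_injective {n : ℤ} (hn0 : 0 ≤ n) : Function.Injective (fB q sq hn0) := by
  have hq0 := hq.ne0
  rw [injective_iff_map_eq_zero]
  intro x hx
  obtain ⟨s, rfl⟩ := B_span x
  by_cases hS : s.support.Nonempty
  swap
  · rw [Finset.not_nonempty_iff_eq_empty, Finsupp.support_eq_empty] at hS
    rw [hS, Finsupp.sum_zero_index]
  exfalso
  obtain ⟨β', hm, c, hc⟩ := exists_sep _ hS
  choose V hV using fun β => Amk_surjective q (s β)
  have hA : Ann q sq ((n.toNat + 1 : ℕ) : ℤ) (s β') := by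
    intro a b zs hb hz hl v hv
    have hvV : TF q sq b zs v = TF q sq b zs (V β') := by
      rw [← rU_fA (sq := sq) hb hz one_ne_zero hl (by positivity), hv, ← hV β', rU_fA]
    rw [hvV]
    have hlz : ∀ ζ : ℂ, (a : ℤ) - (ζ :: zs).length = n := by
      intro ζ
      simp only [List.length_cons]; push_cast at hl ⊢; omega
    have hcz : ∀ {ζ : ℂ}, ζ ≠ 0 → ∀ z ∈ ζ :: zs, z ≠ 0 := by
      intro ζ hζ z hm
      rcases List.mem_cons.mp hm with h | h
      · rw [h]; exact hζ
      · exact hz z h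
    let d : (Fin 2 → ℤ) → ℕ := fun β => ((β 0 + c * β 1) - (β' 0 + c * β' 1)).toNat
    have hd : ∀ β ∈ s.support, (d β : ℤ) = (β 0 + c * β 1) - (β' 0 + c * β' 1) := by
      intro β hβ
      apply Int.toNat_of_nonneg
      by_cases h : β = β'
      · rw [h]; simp
      · have := hc β hβ h; omega
    -- the action of the relation, normalised by the leading power of `chi`
    have hrel : ∀ ζ : ℂ, ζ ≠ 0 → ∑ β ∈ s.support, TF q sq b (ζ :: zs) (V β) *
        dg (fun J => chi q b (ζ :: zs) ^ d β * q ^ ((β 1 - 2 * β 0) * tot J)) = 0 := by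
      intro ζ hζ
      have hχ := chi_ne hb (hcz hζ)
      have ht : chi q b (ζ :: zs) ^ c ≠ 0 := zpow_ne_zero _ hχ
      have h := congrArg (rU (sq := sq) hb (hcz hζ) ht (hlz ζ)) hx
      rw [Finsupp.sum, map_sum, map_sum, map_zero] at h
      have h2 := congrArg (fun T => (chi q b (ζ :: zs) ^ (-(β' 0 + c * β' 1))) • T) h
      simp only [smul_zero, Finset.smul_sum] at h2
      rw [← h2]
      refine Finset.sum_congr rfl fun β hβ => ?_
      rw [map_mul, fB_inc, map_mul, rU_kT, ← hV β, rU_fA, ← mul_smul_comm, dg_smul]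
      congr 2
      funext J
      simp only [Pi.smul_apply, smul_eq_mul]
      rw [← zpow_natCast, hd β hβ, mul_zpow, mul_zpow, ← zpow_mul, ← zpow_mul, ← zpow_mul]
      rw [show (β 0 + c * β 1) - (β' 0 + c * β' 1) = -(β' 0 + c * β' 1) + (β 0 + c * β 1) by ring,
        zpow_add₀ hχ, zpow_add₀ hχ,
        show (β 1 - 2 * β 0) * tot J = -(2 * tot J) * β 0 + tot J * β 1 by ring, zpow_add₀ hq0]
      ring
    have hcv := Cv.sum (l := 𝓝[≠] (0 : ℂ)) s.support
      (O := fun β ζ => TF q sq b (ζ :: zs) (V β) *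
        dg (fun J => chi q b (ζ :: zs) ^ d β * q ^ ((β 1 - 2 * β 0) * tot J)))
      (P := fun β => TF q sq b zs (V β) *
        dg (fun J => (0 : ℂ) ^ d β * q ^ ((β 1 - 2 * β 0) * tot J)))
      (fun β _ => (cv_zeta q sq b zs (V β)).mul
        (Cv.dg fun J => ((tendsto_chi b zs).pow (d β)).mul_const _))
    have h0 := hcv.eq_zero (by
      filter_upwards [self_mem_nhdsWithin] with ζ hζ
      exact hrel ζ hζ)
    rw [Finset.sum_eq_single_of_mem β' hm] at h0
    · have : d β' = 0 := by simp [d]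
      refine dg_cancel (fun J => ?_) h0
      rw [this, pow_zero, one_mul]
      exact zpow_ne_zero _ hq0
    · intro β hβ hne
      have : d β ≠ 0 := by
        have h1 := hd β hβ
        have h2 := hc β hβ hne
        omega
      have e : (fun J : Fin a → ℤ => (0 : ℂ) ^ d β * q ^ ((β 1 - 2 * β 0) * tot J)) = 0 := by
        funext J; rw [zero_pow this, zero_mul]; rfl
      rw [e, dg_zero, mul_zero]
  exact Finsupp.mem_support_iff.mp hm (Ann_zero _ hA)

end final
end TQAEmb

namespace TQA

/-- **The Borel algebra embeds in anti-dominantly shifted `𝒰_q^μ(A₂⁽²⁾)`.**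
Let `μ ∈ -Λ⁺`, i.e. `α₁(μ) ≤ 0`.  Then there exists an injective algebra homomorphism
`I_μ^σ : 𝒰_q(𝔟^σ) ↪ 𝒰_q^μ(A₂⁽²⁾)`; equivalently, the shifted twisted quantum affine
algebra `𝒰_q^μ(A₂⁽²⁾)` contains a subalgebra isomorphic to the twisted quantum affine
Borel algebra `𝒰_q(𝔟^σ)`. -/
theorem borel_embeds_in_antidominant_shift (q sq : ℂ) (hq0 : q ≠ 0)
    (hqr : ∀ n : ℕ, 0 < n → q ^ n ≠ 1) (hsq : sq ^ 2 = q)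
    (μ : Unit → ℤ) (hμ : μ () ≤ 0) :
    ∃ f : UBorelA22 q sq →ₐ[ℂ] U (A22 q sq hq0 hqr hsq) 0 μ,
      Function.Injective f := by
  have : TQAEmb.QGen q := ⟨hq0, hqr⟩
  have : Fact (sq ^ 2 = q) := ⟨hsq⟩
  obtain ⟨n, rfl⟩ : ∃ n : ℤ, μ = fun _ => -n := ⟨-μ (), by funext i; simp⟩
  have hn : 0 ≤ n := by simpa using hμ
  exact ⟨TQAEmb.fB q sq hn, TQAEmb.fB_injective hn⟩

end TQA
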